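/- Let q be an odd prime power and F a finite field with q elements, and let G = PSp₄(F) be the quotient of the symplectic group Sp(4,F) by its center. Then G has a maximal subgroup H of odd index admitting a normal subgroup N ⊴ H with Nat.card N = 16, g·g = 1 for all g ∈ N, and H/N isomorphic to the alternating group A₅, if and only if q is prime and q ≡ ±3 (mod 8) (equivalently, q mod 8 ∈ {3, 5}). (Such an H is a group of shape 2⁴.A₅.) -/

import Mathlib

/-!
The quaternions over `F` split, so `Sp₄(F)` is the unitary group of `M₂(ℍ[F])` for the conjugate
transpose. It acts by conjugation on the five-dimensional space of self-adjoint matrices of trace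
zero, on which squaring is the standard quadratic form (`Spin₅ → SO₅`); the stabilizer of the
orthonormal frame `{±γ₁, …, ±γ₅}` has shape `2.2⁴.A₅` when `2` is not a square in `F`.

Let `H` be a maximal subgroup of odd index of shape `2⁴.A₅`. The elements of the preimage of its
normal subgroup of order `16` square to `±1`, so the order they generate has integral traces. The
unitary elements normalizing this order contain the preimage of `H`, so by maximality they form
that preimage or the whole group. The first case is impossible if `F` is not a prime field: it
would put a group of order `p²` of unipotent elements into a group of order `1920`. In the second
case conjugation by unipotent elements makes every element of `F` an integer. Hence `F` is a prime
field, and the `2`-part of `q⁴ (q² + 1) (q² - 1)² / 1920` gives `q ≡ ±3 (mod 8)`.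

Conversely, over a prime field, let `K` be a proper subgroup containing the frame group. The
unit vectors `v` whose Clifford matrix lies in `K` are studied through their coordinates. If two
of them vanish, Klein's count of poles applied to the rotations of a three-dimensional subspace
in `K` shows that `v` is an axis. The products with half turns form dihedral groups whose orders
force some coordinate of `v` to vanish, and if only one vanishes then the others are `±1/2`, the
characteristic is `3` and `K` is everything. So all these vectors are axes, and `K` permutes them.
-/

open scoped Quaternion

namespace PSp4

section Clifford

variable {R : Type*} [CommRing R]

/-- The `2 × 2` matrices over the quaternions, with conjugate transposition as involution: the
even Clifford algebra of the sum of five squares. -/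
abbrev QMat (R : Type*) [CommRing R] : Type _ := Matrix (Fin 2) (Fin 2) ℍ[R]

/-- The quaternion with the given coordinates. The anonymous constructor produces an element of
`QuaternionAlgebra`, on which the instances of `Quaternion` are not found by unification. -/
def quat (a b c d : R) : ℍ[R] := ⟨a, b, c, d⟩

@[simp] theorem quat_re (a b c d : R) : (quat a b c d).re = a := rfl
@[simp] theorem quat_imI (a b c d : R) : (quat a b c d).imI = b := rfl
@[simp] theorem quat_imJ (a b c d : R) : (quat a b c d).imJ = c := rfl
@[simp] theorem quat_imK (a b c d : R) : (quat a b c d).imK = d := rfl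

theorem quat_add (a b c d a' b' c' d' : R) :
    quat a b c d + quat a' b' c' d' = quat (a + a') (b + b') (c + c') (d + d') := by
  ext <;> simp

theorem quat_mul (a b c d a' b' c' d' : R) : quat a b c d * quat a' b' c' d' =
    quat (a * a' - b * b' - c * c' - d * d') (a * b' + b * a' + c * d' - d * c')
      (a * c' - b * d' + c * a' + d * b') (a * d' + b * c' - c * b' + d * a') := by
  ext <;> simp

theorem smul_quat (t a b c d : R) :
    t • quat a b c d = quat (t * a) (t * b) (t * c) (t * d) := by
  ext <;> simp

theorem neg_quat (a b c d : R) : -quat a b c d = quat (-a) (-b) (-c) (-d) := by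
  ext <;> simp

theorem star_quat (a b c d : R) : star (quat a b c d) = quat a (-b) (-c) (-d) := by
  ext <;> simp

theorem quat_one_zero : (quat 1 0 0 0 : ℍ[R]) = 1 := by ext <;> simp

theorem quat_zero_zero : (quat 0 0 0 0 : ℍ[R]) = 0 := by ext <;> simp

/-- The Clifford embedding of `R⁵`, with the sum of five squares as quadratic form, as the
self-adjoint matrices of reduced trace zero. -/
def clifford : (Fin 5 → R) →ₗ[R] QMat R where
  toFun v := !![quat (v 0) 0 0 0, quat (v 1) (v 2) (v 3) (v 4);
    quat (v 1) (-v 2) (-v 3) (-v 4), quat (-v 0) 0 0 0]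
  map_add' v w := by
    ext i j <;> fin_cases i <;> fin_cases j <;> simp <;> ring
  map_smul' c v := by
    ext i j <;> fin_cases i <;> fin_cases j <;> simp

/-- The left inverse of `clifford` that reads off the coordinates from the first row. -/
def cliffordCoord : QMat R →ₗ[R] (Fin 5 → R) where
  toFun X := ![(X 0 0).re, (X 0 1).re, (X 0 1).imI, (X 0 1).imJ, (X 0 1).imK]
  map_add' v w := by
    ext i; fin_cases i <;> simp
  map_smul' c v := by
    ext i; fin_cases i <;> simp

theorem cliffordCoord_clifford (v : Fin 5 → R) : cliffordCoord (clifford v) = v := by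
  ext i; fin_cases i <;> simp [cliffordCoord, clifford]

theorem clifford_injective : Function.Injective (clifford : (Fin 5 → R) →ₗ[R] QMat R) :=
  Function.LeftInverse.injective cliffordCoord_clifford

theorem star_clifford (v : Fin 5 → R) : star (clifford v) = clifford v := by
  ext i j <;> fin_cases i <;> fin_cases j <;> simp [clifford, Matrix.star_apply]

theorem clifford_mul_add_swap (v w : Fin 5 → R) :
    clifford v * clifford w + clifford w * clifford v = (2 * (v ⬝ᵥ w)) • (1 : QMat R) := by
  simp only [clifford, LinearMap.coe_mk, AddHom.coe_mk, Matrix.mul_fin_two, Matrix.one_fin_two,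
    dotProduct, Fin.sum_univ_five, quat_mul, quat_add, Matrix.smul_of, Matrix.of_add_of,
    ← quat_one_zero, ← quat_zero_zero, Matrix.cons_add_cons, Matrix.smul_cons, smul_quat,
    Matrix.empty_add_empty, Matrix.smul_empty]
  congr 5 <;> ring_nf

theorem clifford_mul_self (v : Fin 5 → R) :
    clifford v * clifford v = (v ⬝ᵥ v) • (1 : QMat R) := by
  simp only [clifford, LinearMap.coe_mk, AddHom.coe_mk, Matrix.mul_fin_two, Matrix.one_fin_two,
    dotProduct, Fin.sum_univ_five, quat_mul, quat_add, Matrix.smul_of, ← quat_one_zero,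
    ← quat_zero_zero, Matrix.smul_cons, smul_quat, Matrix.smul_empty]
  congr 5 <;> ring_nf

/-- The real part of the trace. -/
def reTrace : QMat R →ₗ[R] R where
  toFun X := (X 0 0).re + (X 1 1).re
  map_add' X Y := by simp; ring
  map_smul' c X := by simp; ring

theorem reTrace_mul_comm (X Y : QMat R) : reTrace (X * Y) = reTrace (Y * X) := by
  simp [reTrace, Matrix.mul_apply]; ring

@[simp] theorem reTrace_one : reTrace (1 : QMat R) = 2 := by simp [reTrace]; norm_num

theorem reTrace_star (X : QMat R) : reTrace (star X) = reTrace X := by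
  simp [reTrace, Matrix.star_apply]

@[simp] theorem reTrace_clifford (v : Fin 5 → R) : reTrace (clifford v) = 0 := by
  simp [reTrace, clifford]

theorem star_smul_qMat (c : R) (X : QMat R) : star (c • X) = c • star X := by
  ext i j <;> simp [Matrix.star_apply]

theorem reTrace_conj {g : QMat R} (hg : g ∈ unitary (QMat R)) (X : QMat R) :
    reTrace (g * X * star g) = reTrace X := by
  rw [mul_assoc, reTrace_mul_comm, mul_assoc, Unitary.star_mul_self_of_mem hg, mul_one]

theorem conj_mul_conj {A : Type*} [Monoid A] [StarMul A] {g : A} (hg : g ∈ unitary A) (X Y : A) :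
    g * X * star g * (g * Y * star g) = g * (X * Y) * star g := by
  simp only [mul_assoc]
  rw [← mul_assoc (star g) g, Unitary.star_mul_self_of_mem hg, one_mul]

theorem mul_left_cancel_unitary {X : QMat R} (hX : X ∈ unitary (QMat R)) {Y Z : QMat R}
    (h : X * Y = X * Z) : Y = Z := by
  simpa [← mul_assoc, Unitary.star_mul_self_of_mem hX] using congrArg (star X * ·) h

theorem ne_zero_of_mem_unitary [Nontrivial R] {X : QMat R} (hX : X ∈ unitary (QMat R)) :
    X ≠ 0 := fun h => by
  simpa [h] using Unitary.star_mul_self_of_mem hX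

/-- The images under `clifford` of the standard basis vectors: five anticommuting involutions. -/
def gamma (i : Fin 5) : QMat R := clifford (Pi.single i 1)

theorem gamma_mul_self (i : Fin 5) : (gamma i * gamma i : QMat R) = 1 := by
  simp [gamma, clifford_mul_self]

theorem gamma_mul_swap {i j : Fin 5} (h : i ≠ j) :
    (gamma i * gamma j : QMat R) = -(gamma j * gamma i) :=
  eq_neg_of_add_eq_zero_left <| by
    simpa [h, gamma] using clifford_mul_add_swap (R := R) (Pi.single i 1) (Pi.single j 1)

theorem star_gamma (i : Fin 5) : star (gamma i : QMat R) = gamma i := star_clifford _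

theorem gamma_zero : (gamma 0 : QMat R) = !![1, 0; 0, -1] := by
  ext i j <;> fin_cases i <;> fin_cases j <;> simp [gamma, clifford]

theorem gamma_one : (gamma 1 : QMat R) = !![0, 1; 1, 0] := by
  ext i j <;> fin_cases i <;> fin_cases j <;> simp [gamma, clifford]

theorem gamma_two : (gamma 2 : QMat R) = !![0, quat 0 1 0 0; quat 0 (-1) 0 0, 0] := by
  ext i j <;> fin_cases i <;> fin_cases j <;> simp [gamma, clifford]

theorem gamma_three : (gamma 3 : QMat R) = !![0, quat 0 0 1 0; quat 0 0 (-1) 0, 0] := by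
  ext i j <;> fin_cases i <;> fin_cases j <;> simp [gamma, clifford]

theorem clifford_mem_unitary {v : Fin 5 → R} (hv : v ⬝ᵥ v = 1) :
    clifford v ∈ unitary (QMat R) := by
  rw [Unitary.mem_iff]; simp [star_clifford, clifford_mul_self, hv]

theorem gamma_mem_unitary (i : Fin 5) : (gamma i : QMat R) ∈ unitary (QMat R) :=
  clifford_mem_unitary (by simp)

end Clifford

section VectorRepresentation

variable {F : Type*} [Field F] [NeZero (2 : F)]

theorem eq_zero_of_neg_eq_self {V : Type*} [AddCommGroup V] [Module F V] {x : V} (h : -x = x) :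
    x = 0 := by
  have hx : (2 : F) • x = 0 := by rw [two_smul]; nth_rewrite 1 [← h]; exact neg_add_cancel x
  exact (smul_eq_zero.1 hx).resolve_left (NeZero.ne 2)

theorem clifford_cliffordCoord {X : QMat F} (hX : star X = X) (ht : reTrace X = 0) :
    clifford (cliffordCoord X) = X := by
  have hzero : ∀ {a : F}, -a = a → a = 0 := eq_zero_of_neg_eq_self (F := F)
  have h00 := congr_fun (congr_fun hX 0) 0
  have h01 := congr_fun (congr_fun hX 1) 0
  have h11 := congr_fun (congr_fun hX 1) 1
  simp only [Matrix.star_apply, Quaternion.ext_iff, Quaternion.re_star, Quaternion.imI_star,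
    Quaternion.imJ_star, Quaternion.imK_star, true_and] at h00 h01 h11
  simp only [reTrace, LinearMap.coe_mk, AddHom.coe_mk] at ht
  ext i j <;> fin_cases i <;> fin_cases j <;> simp [clifford, cliffordCoord] <;> grind

theorem exists_eq_smul_one_of_commute_gamma {X : QMat F} (h0 : X * gamma 0 = gamma 0 * X)
    (h1 : X * gamma 1 = gamma 1 * X) (h2 : X * gamma 2 = gamma 2 * X)
    (h3 : X * gamma 3 = gamma 3 * X) : ∃ c : F, X = c • 1 := by
  have hzero : ∀ {a : F}, -a = a → a = 0 := eq_zero_of_neg_eq_self (F := F)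
  refine ⟨(X 0 0).re, ?_⟩
  rw [gamma_zero] at h0
  rw [gamma_one] at h1
  rw [gamma_two] at h2
  rw [gamma_three] at h3
  simp only [← Matrix.ext_iff, Fin.forall_fin_two] at h0 h1 h2 h3
  simp [Quaternion.ext_iff, Matrix.mul_apply] at h0 h1 h2 h3
  ext i j <;> fin_cases i <;> fin_cases j <;> simp <;> grind

theorem clifford_cliffordCoord_conj {g : QMat F} (hg : g ∈ unitary (QMat F)) (v : Fin 5 → F) :
    clifford (cliffordCoord (g * clifford v * star g)) = g * clifford v * star g :=
  clifford_cliffordCoord (by simp [star_clifford, mul_assoc]) (by simp [reTrace_conj hg])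

/-- The vector representation of the unitary group: its action by conjugation on the image of
`clifford`, as in the double cover `Spin₅ → SO₅`. -/
def vectorRep : unitary (QMat F) →* Module.End F (Fin 5 → F) where
  toFun g := cliffordCoord ∘ₗ LinearMap.mulLeft F g.1 ∘ₗ
    LinearMap.mulRight F (star g.1) ∘ₗ clifford
  map_one' := LinearMap.ext fun v => by simp [cliffordCoord_clifford]
  map_mul' g h := LinearMap.ext fun v => by
    have hv := clifford_cliffordCoord_conj h.2 v
    rw [mul_assoc] at hv
    simp [hv, mul_assoc]

theorem clifford_vectorRep (g : unitary (QMat F)) (v : Fin 5 → F) :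
    clifford (vectorRep g v) = g.1 * clifford v * star g.1 := by
  rw [← clifford_cliffordCoord_conj g.2 v]
  simp [vectorRep, mul_assoc]

theorem vectorRep_inv_apply (g : unitary (QMat F)) (v : Fin 5 → F) :
    vectorRep g⁻¹ (vectorRep g v) = v := by
  rw [← Module.End.mul_apply, ← map_mul, inv_mul_cancel, map_one, Module.End.one_apply]

theorem dotProduct_vectorRep (g : unitary (QMat F)) (v w : Fin 5 → F) :
    vectorRep g v ⬝ᵥ vectorRep g w = v ⬝ᵥ w := by
  have h := clifford_mul_add_swap (vectorRep g v) (vectorRep g w)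
  rw [clifford_vectorRep, clifford_vectorRep, conj_mul_conj g.2, conj_mul_conj g.2, ← add_mul,
    ← mul_add, clifford_mul_add_swap] at h
  have htrace := congrArg reTrace h
  simp only [reTrace_conj g.2, map_smul, reTrace_one, smul_eq_mul] at htrace
  have h2 := NeZero.ne (2 : F)
  exact (mul_left_cancel₀ h2 (mul_right_cancel₀ h2 htrace)).symm

end VectorRepresentation

section SignedPermutations

open Equiv.Perm (sign)

variable {R : Type*} [CommRing R]

/-- Conjugation by `X` sends `gamma i` to `s i • gamma (σ i)`; in this form, without the inverse of
`X`, the condition is stable under rescaling `X`. -/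
def SignPerm (X : QMat R) (σ : Equiv.Perm (Fin 5)) (s : Fin 5 → ℤˣ) : Prop :=
  ∀ i, X * gamma i = s i • (gamma (σ i) * X)

theorem star_units_smul (u : ℤˣ) (X : QMat R) : star (u • X) = u • star X := by
  rcases Int.units_eq_one_or u with rfl | rfl <;> simp [Units.neg_smul]

theorem units_smul_mem_unitary {Z : QMat R} (hZ : Z ∈ unitary (QMat R)) (u : ℤˣ) :
    u • Z ∈ unitary (QMat R) := by
  rw [Unitary.mem_iff, star_units_smul, smul_mul_smul_comm, smul_mul_smul_comm,
    Int.units_mul_self, one_smul, one_smul]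
  exact Unitary.mem_iff.1 hZ

namespace SignPerm

variable {X Y : QMat R} {σ τ : Equiv.Perm (Fin 5)} {s t : Fin 5 → ℤˣ}

theorem one : SignPerm (1 : QMat R) 1 1 := fun i => by simp

theorem mul (hX : SignPerm X σ s) (hY : SignPerm Y τ t) :
    SignPerm (X * Y) (σ * τ) (fun i => t i * s (τ i)) := fun i => by
  rw [mul_assoc, hY, mul_smul_comm, ← mul_assoc, hX, smul_mul_assoc, smul_smul, mul_assoc]
  rfl

theorem smul (hX : SignPerm X σ s) (c : R) : SignPerm (c • X) σ s := fun i => by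
  rw [smul_mul_assoc, hX, mul_smul_comm, smul_comm]

theorem units_smul (hX : SignPerm X σ s) (u : ℤˣ) : SignPerm (u • X) σ s := fun i => by
  rw [smul_mul_assoc, hX, mul_smul_comm, smul_comm]

theorem star (hX : SignPerm X σ s) :
    SignPerm (star X) σ⁻¹ (fun i => s (σ⁻¹ i)) := fun i => by
  have h := congrArg Star.star (hX (σ⁻¹ i))
  simp only [star_units_smul, star_mul, star_gamma] at h
  rw [h, smul_smul, Int.units_mul_self, one_smul]
  simp

theorem perm_eq [Nontrivial R] (hX : X ∈ unitary (QMat R)) (h : SignPerm X σ s)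
    (h' : SignPerm X τ t) : σ = τ := by
  ext1 i
  by_contra hne
  have heq := (h i).symm.trans (h' i)
  rw [← smul_mul_assoc, ← smul_mul_assoc] at heq
  have hcancel := congrArg (· * Star.star X) heq
  simp only [mul_assoc, Unitary.mul_star_self_of_mem hX, mul_one] at hcancel
  have hclifford : ∀ (u : ℤˣ) (j : Fin 5),
      u • (gamma j : QMat R) = clifford (u • Pi.single j 1) := fun u j => by
    rcases Int.units_eq_one_or u with rfl | rfl <;> simp [gamma, Units.neg_smul]
  rw [hclifford, hclifford] at hcancel
  have hcoord := congr_fun (clifford_injective hcancel) (σ i)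
  rcases Int.units_eq_one_or (s i) with hs | hs <;> simp [hs, Units.neg_smul, hne] at hcoord

end SignPerm

theorem signPerm_gamma (j : Fin 5) :
    SignPerm (gamma j : QMat R) 1 (fun i => if i = j then 1 else -1) := fun i => by
  beta_reduce
  split_ifs with h
  · simp [h]
  · simp [gamma_mul_swap (R := R) (Ne.symm h), Units.neg_smul]

theorem signPerm_one_add_gamma_mul_gamma {i j : Fin 5} (h : i ≠ j) :
    SignPerm (1 + gamma i * gamma j : QMat R) (Equiv.swap i j)
      (fun m => if m = i then -1 else 1) := fun m => by
  by_cases hi : m = i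
  · subst hi
    simp only [if_true, Units.neg_smul, one_smul, Equiv.swap_apply_left, add_mul, mul_add,
      one_mul, mul_one]
    rw [mul_assoc, gamma_mul_swap h.symm, ← mul_assoc (gamma j), gamma_mul_swap h.symm, mul_neg,
      neg_mul, mul_assoc (gamma m) (gamma j), ← mul_assoc (gamma m) (gamma m), gamma_mul_self,
      gamma_mul_self]
    simp
  by_cases hj : m = j
  · subst hj
    simp only [hi, if_false, one_smul, Equiv.swap_apply_right, add_mul, mul_add, one_mul, mul_one]
    rw [mul_assoc, ← mul_assoc (gamma i) (gamma i), gamma_mul_self, gamma_mul_self]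
    simp [add_comm]
  · simp only [hi, if_false, one_smul, Equiv.swap_apply_of_ne_of_ne hi hj, add_mul, mul_add,
      one_mul, mul_one]
    rw [mul_assoc, gamma_mul_swap (Ne.symm hj), mul_neg, ← mul_assoc, gamma_mul_swap (Ne.symm hi)]
    simp [mul_assoc]

theorem one_add_gamma_mul_gamma_mul_star {i j : Fin 5} (h : i ≠ j) :
    (1 + gamma i * gamma j : QMat R) * star (1 + gamma i * gamma j : QMat R) = (2 : R) • 1 := by
  have hinv : (gamma i * gamma j * (gamma j * gamma i) : QMat R) = 1 := by
    rw [mul_assoc, ← mul_assoc (gamma j), gamma_mul_self, one_mul, gamma_mul_self]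
  simp only [star_add, star_one, star_mul, star_gamma]
  rw [add_mul, mul_add, mul_add, hinv, gamma_mul_swap h.symm, two_smul]
  noncomm_ring

theorem star_one_add_gamma_mul_gamma_mul_self {i j : Fin 5} (h : i ≠ j) :
    star (1 + gamma i * gamma j : QMat R) * (1 + gamma i * gamma j : QMat R) = (2 : R) • 1 := by
  rw [← one_add_gamma_mul_gamma_mul_star h]
  simp only [star_add, star_one, star_mul, star_gamma]
  rw [gamma_mul_swap h.symm]
  noncomm_ring

theorem exists_signPerm_pair (j : Fin 4) (u : ℤˣ) : ∃ Z ∈ unitary (QMat R),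
    SignPerm Z 1 (fun i => if i = j.castSucc ∨ i = 4 then u else 1) := by
  rcases Int.units_eq_one_or u with rfl | rfl
  · exact ⟨1, one_mem _, by simpa using! SignPerm.one⟩
  · refine ⟨gamma j.castSucc * gamma 4, mul_mem (gamma_mem_unitary _) (gamma_mem_unitary _), ?_⟩
    have hs : (fun i : Fin 5 => if i = j.castSucc ∨ i = 4 then (-1 : ℤˣ) else 1) =
        fun i => (if i = 4 then (1 : ℤˣ) else -1) *
          if (1 : Equiv.Perm (Fin 5)) i = j.castSucc then 1 else -1 := by
      ext i
      revert i j
      decide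
    rw [hs]
    exact (signPerm_gamma j.castSucc).mul (signPerm_gamma 4)

theorem exists_signPerm_one (s : Fin 4 → ℤˣ) : ∃ Z ∈ unitary (QMat R), ∃ t : Fin 5 → ℤˣ,
    SignPerm Z 1 t ∧ (∀ i : Fin 4, t i.castSucc = s i) ∧ ∏ i, t i = 1 := by
  choose Z hZ hS using exists_signPerm_pair (R := R)
  refine ⟨Z 0 (s 0) * Z 1 (s 1) * Z 2 (s 2) * Z 3 (s 3), mul_mem (mul_mem (mul_mem (hZ _ _)
    (hZ _ _)) (hZ _ _)) (hZ _ _), ![s 0, s 1, s 2, s 3, s 0 * s 1 * s 2 * s 3], ?_, ?_, ?_⟩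
  · intro i
    rw [(((hS _ _).mul (hS _ _)).mul (hS _ _)).mul (hS _ _) i]
    refine congrArg₂ (· • ·) ?_ rfl
    generalize s 0 = a, s 1 = b, s 2 = c, s 3 = d
    fin_cases i <;> simp [Fin.ext_iff]
    simp [mul_comm, mul_left_comm]
  · intro i
    fin_cases i <;> rfl
  · simp only [Fin.prod_univ_five, Matrix.cons_val]
    exact Int.units_mul_self _

/-- The product over a factorization of `σ` into `n` transpositions of elements `1 + γᵢγⱼ`, each of
norm `2`. -/
theorem exists_signPerm (σ : Equiv.Perm (Fin 5)) :
    ∃ X : QMat R, ∃ s : Fin 5 → ℤˣ, ∃ n : ℕ, SignPerm X σ s ∧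
      X * star X = (2 : R) ^ n • 1 ∧ star X * X = (2 : R) ^ n • 1 ∧
      sign σ = (-1) ^ n ∧ ∏ i, s i = (-1) ^ n := by
  induction σ using Equiv.Perm.swap_induction_on with
  | one => exact ⟨1, 1, 0, SignPerm.one, by simp⟩
  | swap_mul σ i j hij ih =>
    obtain ⟨X, s, n, hX, hXstar, hstarX, hsign, hprod⟩ := ih
    refine ⟨(1 + gamma i * gamma j) * X, _, n + 1,
      (signPerm_one_add_gamma_mul_gamma hij).mul hX, ?_, ?_, ?_, ?_⟩
    · rw [star_mul, mul_assoc, ← mul_assoc X, hXstar, smul_mul_assoc, one_mul, mul_smul_comm,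
        one_add_gamma_mul_gamma_mul_star hij, smul_smul, pow_succ]
    · rw [star_mul, mul_assoc, ← mul_assoc (star _) (1 + _),
        star_one_add_gamma_mul_gamma_mul_self hij, smul_mul_assoc, one_mul, mul_smul_comm, hstarX,
        smul_smul, pow_succ']
    · rw [map_mul, Equiv.Perm.sign_swap hij, hsign, pow_succ']
    · rw [Finset.prod_mul_distrib, hprod,
        Equiv.prod_comp σ (fun m => if m = i then (-1 : ℤˣ) else 1), pow_succ]
      simp

variable {F : Type*} [Field F] [NeZero (2 : F)] {X Z : QMat F} {σ : Equiv.Perm (Fin 5)}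
  {s t : Fin 5 → ℤˣ}

theorem units_eq_of_smul_eq {u u' : ℤˣ} (hX : X ≠ 0) (h : u • X = u' • X) : u = u' := by
  have hne : -X ≠ X := fun h => hX (eq_zero_of_neg_eq_self (F := F) h)
  rcases Int.units_eq_one_or u with rfl | rfl <;> rcases Int.units_eq_one_or u' with rfl | rfl
  · rfl
  · simp only [Units.neg_smul, one_smul] at h
    exact absurd h.symm hne
  · simp only [Units.neg_smul, one_smul] at h
    exact absurd h hne
  · rfl

theorem one_ne_neg_one : (1 : QMat F) ≠ -1 := fun h =>
  one_ne_zero (eq_zero_of_neg_eq_self (F := F) h.symm)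

theorem eq_one_or_eq_neg_one_of_smul_mem_unitary {c : F} (hZ : Z ∈ unitary (QMat F))
    (h : c • Z ∈ unitary (QMat F)) : c = 1 ∨ c = -1 := by
  have hc := Unitary.mul_star_self_of_mem h
  rw [star_smul_qMat, smul_mul_smul_comm, Unitary.mul_star_self_of_mem hZ] at hc
  have htrace := congrArg reTrace hc
  rw [map_smul, reTrace_one, smul_eq_mul] at htrace
  exact mul_self_eq_one_iff.mp (mul_eq_right₀ (NeZero.ne (2 : F)) |>.1 htrace)

theorem eq_one_or_eq_neg_one_of_commute_gamma (hX : X ∈ unitary (QMat F))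
    (h : ∀ i, X * gamma i = gamma i * X) : X = 1 ∨ X = -1 := by
  obtain ⟨c, rfl⟩ := exists_eq_smul_one_of_commute_gamma (h 0) (h 1) (h 2) (h 3)
  rcases eq_one_or_eq_neg_one_of_smul_mem_unitary (one_mem _) hX with rfl | rfl <;> simp

namespace SignPerm

theorem sign_eq (hX : X ∈ unitary (QMat F)) (h : SignPerm X σ s) (h' : SignPerm X σ t) :
    s = t := by
  ext1 i
  refine units_eq_of_smul_eq (fun h0 => ?_) ((h i).symm.trans (h' i))
  exact ne_zero_of_mem_unitary (mul_mem (gamma_mem_unitary _) hX) h0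

theorem exists_eq_smul (hX : SignPerm X 1 s) (hZ : Z ∈ unitary (QMat F)) (hZt : SignPerm Z 1 t)
    (hst : ∀ i : Fin 4, t i.castSucc = s i.castSucc) : ∃ c : F, X = c • Z := by
  have hcomm : ∀ i : Fin 4,
      (Star.star Z * X) * gamma i.castSucc = gamma i.castSucc * (Star.star Z * X) := fun i => by
    simpa [hst] using (hZt.star.mul hX) i.castSucc
  obtain ⟨c, hc⟩ := exists_eq_smul_one_of_commute_gamma (hcomm 0) (hcomm 1) (hcomm 2) (hcomm 3)
  refine ⟨c, ?_⟩
  rw [← mul_one Z, ← mul_smul_comm, ← hc, ← mul_assoc, Unitary.mul_star_self_of_mem hZ, one_mul]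

theorem exists_eq_smul_mem_unitary (hX : SignPerm X 1 s) (hX0 : X ≠ 0) :
    (∃ c : F, ∃ Z ∈ unitary (QMat F), X = c • Z) ∧ ∏ i, s i = 1 := by
  obtain ⟨Z, hZ, t, hS, hst, hprod⟩ := exists_signPerm_one (R := F) (fun i => s i.castSucc)
  obtain ⟨c, rfl⟩ := hX.exists_eq_smul hZ hS hst
  refine ⟨⟨c, Z, hZ, rfl⟩, ?_⟩
  have hlast : t 4 = s 4 := by
    refine units_eq_of_smul_eq (fun h => hX0 ?_) (((hS.smul c) 4).symm.trans (hX 4))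
    exact mul_left_cancel_unitary (gamma_mem_unitary 4) (by simpa using h)
  rw [← hprod, Fin.prod_univ_castSucc s, Fin.prod_univ_castSucc t]
  exact congrArg₂ _ (Finset.prod_congr rfl fun i _ => (hst i).symm) hlast.symm

end SignPerm

theorem exists_mem_unitary_signPerm (hσ : sign σ = 1) :
    ∃ X ∈ unitary (QMat F), ∃ s : Fin 5 → ℤˣ, SignPerm X σ s := by
  obtain ⟨X, s, n, hX, hXstar, hstarX, hsign, -⟩ := exists_signPerm (R := F) σ
  obtain ⟨m, rfl⟩ : Even n := by
    rw [hσ, eq_comm, neg_one_pow_eq_one_iff_even (by decide)] at hsign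
    exact hsign
  have h2 := NeZero.ne (2 : F)
  have hscale : ((2 : F) ^ m)⁻¹ * (2 ^ m)⁻¹ * 2 ^ (m + m) = 1 := by
    rw [pow_add]; field_simp
  refine ⟨((2 : F) ^ m)⁻¹ • X, ?_, s, hX.smul _⟩
  rw [Unitary.mem_iff, star_smul_qMat, smul_mul_smul_comm, smul_mul_smul_comm, hXstar, hstarX,
    smul_smul, hscale, one_smul]
  exact ⟨rfl, rfl⟩

theorem even_of_sq_eq_two_pow {c : F} {n : ℕ} (h2 : ¬IsSquare (2 : F)) (hc : c * c = 2 ^ n) :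
    Even n := by
  by_contra hn
  obtain ⟨m, rfl⟩ := Nat.not_even_iff_odd.1 hn
  have hpow : (2 : F) ^ m ≠ 0 := pow_ne_zero _ (NeZero.ne 2)
  refine h2 ⟨c / 2 ^ m, ?_⟩
  field_simp
  linear_combination -hc

/-- Comparing `g` with a product of `n` factors `1 + γᵢγⱼ` inducing the same permutation shows that
`2 ^ n` is a square. -/
theorem SignPerm.sign_perm (h : SignPerm X σ s) (hX : X ∈ unitary (QMat F))
    (h2 : ¬IsSquare (2 : F)) : sign σ = 1 ∧ ∏ i, s i = 1 := by
  obtain ⟨Y, t, n, hY, -, hstarY, hsign, hprod⟩ := exists_signPerm (R := F) σ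
  have hquot := hY.star.mul h
  rw [inv_mul_cancel] at hquot
  have hnorm : (Star.star Y * X) * Star.star (Star.star Y * X) = (2 : F) ^ n • 1 := by
    rw [star_mul, star_star, mul_assoc, ← mul_assoc X, Unitary.mul_star_self_of_mem hX, one_mul,
      hstarY]
  have hne : Star.star Y * X ≠ 0 := fun h0 => by
    rw [h0, zero_mul] at hnorm
    simpa [NeZero.ne (2 : F)] using congrArg reTrace hnorm
  obtain ⟨⟨c, Z, hZ, hc⟩, hp⟩ := hquot.exists_eq_smul_mem_unitary hne
  rw [hc, star_smul_qMat, smul_mul_smul_comm, Unitary.mul_star_self_of_mem hZ] at hnorm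
  have hn : Even n := even_of_sq_eq_two_pow (c := c) h2 <| by
    simpa [NeZero.ne (2 : F)] using congrArg reTrace hnorm
  rw [hn.neg_one_pow] at hsign hprod
  refine ⟨hsign, ?_⟩
  simpa [Finset.prod_mul_distrib, hprod] using hp

end SignedPermutations

section FrameGroup

open Equiv.Perm (sign)

theorem card_eq_card_ker_mul_card {A B : Type*} [Group A] [Group B] (f : A →* B)
    (hf : Function.Surjective f) : Nat.card A = Nat.card f.ker * Nat.card B := by
  rw [← Subgroup.card_mul_index f.ker, Subgroup.index_ker, MonoidHom.range_eq_top.mpr hf,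
    Subgroup.card_top]

theorem card_alternatingGroup_five : Nat.card (alternatingGroup (Fin 5)) = 60 := by
  rw [nat_card_alternatingGroup, Nat.card_fin]
  rfl

/-- The stabilizer in the unitary group of the orthonormal frame `{± gamma i}`. -/
def frameGroup (R : Type*) [CommRing R] : Subgroup (unitary (QMat R)) where
  carrier := {g | ∃ σ s, SignPerm g.1 σ s}
  mul_mem' := by
    rintro a b ⟨σ, s, ha⟩ ⟨τ, t, hb⟩
    exact ⟨_, _, ha.mul hb⟩
  one_mem' := ⟨_, _, SignPerm.one⟩
  inv_mem' := by
    rintro a ⟨σ, s, ha⟩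
    exact ⟨_, _, ha.star⟩

theorem ker_le_frameGroup {R G : Type*} [CommRing R] [Group G] {π : unitary (QMat R) →* G}
    (hker : ∀ g, π g = 1 ↔ g.1 = 1 ∨ g.1 = -1) :
    π.ker ≤ frameGroup R := by
  intro g hg
  rcases (hker g).1 hg with h | h <;> exact ⟨1, 1, fun i => by rw [h]; simp⟩

section

variable {R : Type*} [CommRing R] [Nontrivial R]

/-- The permutation of the coordinate axes induced by an element of the frame group. -/
noncomputable def permHom : frameGroup R →* Equiv.Perm (Fin 5) where
  toFun g := g.2.choose
  map_one' := (1 : frameGroup R).2.choose_spec.choose_spec.perm_eq (one_mem _) SignPerm.one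
  map_mul' g h := (g * h).2.choose_spec.choose_spec.perm_eq (g * h).1.2
    (g.2.choose_spec.choose_spec.mul h.2.choose_spec.choose_spec)

theorem signPerm_permHom (g : frameGroup R) : ∃ s, SignPerm g.1.1 (permHom g) s :=
  g.2.choose_spec

theorem permHom_eq {g : frameGroup R} {σ : Equiv.Perm (Fin 5)} {s : Fin 5 → ℤˣ}
    (h : SignPerm g.1.1 σ s) : permHom g = σ :=
  (signPerm_permHom g).choose_spec.perm_eq g.1.2 h

end

variable {F : Type*} [Field F] [NeZero (2 : F)]

theorem exists_mem_frameGroup_signPerm {σ : Equiv.Perm (Fin 5)} (hσ : sign σ = 1) :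
    ∃ g ∈ frameGroup F, ∃ s, SignPerm g.1 σ s := by
  obtain ⟨X, hX, s, hs⟩ := exists_mem_unitary_signPerm (F := F) hσ
  exact ⟨⟨X, hX⟩, ⟨σ, s, hs⟩, s, hs⟩

/-- The kernel consists of the elements `± Z s`, where `Z s` has the prescribed signs on the first
four axes. -/
theorem card_ker_permHom : Nat.card (permHom (R := F)).ker = 32 := by
  choose Z hZ t hS hst _ using exists_signPerm_one (R := F)
  let f : ℤˣ × (Fin 4 → ℤˣ) → (permHom (R := F)).ker := fun x =>
    ⟨⟨⟨x.1 • Z x.2, units_smul_mem_unitary (hZ _) _⟩, 1, _, (hS x.2).units_smul x.1⟩,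
      permHom_eq ((hS x.2).units_smul x.1)⟩
  have hinj : Function.Injective f := by
    rintro ⟨u, s⟩ ⟨u', s'⟩ h
    have hmat : u • Z s = u' • Z s' := congrArg (fun x => x.1.1.1) h
    have hsign : t s = t s' :=
      ((hmat ▸ (hS s).units_smul u : SignPerm (u' • Z s') 1 (t s))).sign_eq
        (units_smul_mem_unitary (hZ _) _) ((hS s').units_smul u')
    obtain rfl : s = s' := funext fun i => by rw [← hst s i, ← hst s' i, hsign]
    rw [units_eq_of_smul_eq (ne_zero_of_mem_unitary (hZ s)) hmat]
  have hsurj : Function.Surjective f := by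
    rintro ⟨g, hg⟩
    obtain ⟨s, hs⟩ := signPerm_permHom g
    rw [hg] at hs
    obtain ⟨c, hc⟩ := hs.exists_eq_smul (hZ fun i => s i.castSucc) (hS _) (hst _)
    obtain ⟨u, hu⟩ : ∃ u : ℤˣ, g.1.1 = u • Z fun i => s i.castSucc := by
      rcases eq_one_or_eq_neg_one_of_smul_mem_unitary (hZ _) (hc ▸ g.1.2) with rfl | rfl
      · exact ⟨1, by simpa using hc⟩
      · exact ⟨-1, by simpa [Units.neg_smul] using hc⟩
    exact ⟨(u, fun i => s i.castSucc), Subtype.ext (Subtype.ext (Subtype.ext hu.symm))⟩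
  rw [← Nat.card_congr (Equiv.ofBijective f ⟨hinj, hsurj⟩)]
  simp

/-- When `2` is not a square the frame group induces only even permutations. -/
noncomputable def altHom (h2 : ¬IsSquare (2 : F)) : frameGroup F →* alternatingGroup (Fin 5) :=
  permHom.codRestrict _ fun g =>
    ((signPerm_permHom g).choose_spec.sign_perm g.1.2 h2).1

theorem altHom_surjective (h2 : ¬IsSquare (2 : F)) : Function.Surjective (altHom h2) := by
  rintro ⟨σ, hσ⟩
  obtain ⟨g, hg, s, hs⟩ := exists_mem_frameGroup_signPerm (F := F) hσ
  exact ⟨⟨g, hg⟩, Subtype.ext (permHom_eq hs)⟩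

theorem ker_altHom (h2 : ¬IsSquare (2 : F)) : (altHom h2).ker = permHom.ker := by
  ext g
  exact Subtype.ext_iff

theorem card_frameGroup (h2 : ¬IsSquare (2 : F)) : Nat.card (frameGroup F) = 1920 := by
  rw [card_eq_card_ker_mul_card _ (altHom_surjective h2), ker_altHom, card_ker_permHom,
    card_alternatingGroup_five]

theorem mul_self_eq_one_or_eq_neg_one_of_permHom_eq_one {g : frameGroup F}
    (hg : permHom g = 1) : g.1.1 * g.1.1 = 1 ∨ g.1.1 * g.1.1 = -1 := by
  obtain ⟨s, hs⟩ := signPerm_permHom g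
  rw [hg] at hs
  exact eq_one_or_eq_neg_one_of_commute_gamma (mul_mem g.1.2 g.1.2) fun i => by
    simpa using (hs.mul hs) i

section CentralQuotient

variable {G : Type*} [Group G] {π : unitary (QMat F) →* G}

theorem card_ker_eq_two (hker : ∀ g, π g = 1 ↔ g.1 = 1 ∨ g.1 = -1) : Nat.card π.ker = 2 := by
  rw [← SetLike.coe_sort_coe, Nat.card_coe_set_eq,
    show (π.ker : Set (unitary (QMat F))) = {1, -1} by
      ext g
      simp only [SetLike.mem_coe, MonoidHom.mem_ker, hker, Set.mem_insert_iff,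
        Set.mem_singleton_iff, Subtype.ext_iff]
      rfl]
  exact Set.ncard_pair fun h => one_ne_neg_one (congrArg Subtype.val h)

theorem card_subgroup_eq_two_mul_card_map (hker : ∀ g, π g = 1 ↔ g.1 = 1 ∨ g.1 = -1)
    {K : Subgroup (unitary (QMat F))} (hK : π.ker ≤ K) :
    Nat.card K = 2 * Nat.card (K.map π) := by
  have hkerK : (π.subgroupMap K).ker = π.ker.subgroupOf K := by
    ext g
    exact Subtype.ext_iff
  rw [card_eq_card_ker_mul_card _ (π.subgroupMap_surjective K), hkerK,
    Nat.card_congr (Subgroup.subgroupOfEquivOfLe hK).toEquiv, card_ker_eq_two hker]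

theorem exists_normal_card_sixteen_map_frameGroup
    (hker : ∀ g, π g = 1 ↔ g.1 = 1 ∨ g.1 = -1) (h2 : ¬IsSquare (2 : F)) :
    ∃ N : Subgroup ((frameGroup F).map π), ∃ _ : N.Normal, Nat.card N = 16 ∧
      (∀ g ∈ N, g * g = 1) ∧
      Nonempty (((frameGroup F).map π ⧸ N) ≃* alternatingGroup (Fin 5)) := by
  let p : frameGroup F →* (frameGroup F).map π := π.subgroupMap (frameGroup F)
  have hp : Function.Surjective p := π.subgroupMap_surjective _
  have hpker : ∀ g : frameGroup F, p g = 1 ↔ g.1.1 = 1 ∨ g.1.1 = -1 := fun g => by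
    rw [← hker, Subtype.ext_iff]; rfl
  have hle : p.ker ≤ (altHom h2).ker := fun g hg => by
    rw [ker_altHom]
    refine permHom_eq (s := 1) fun i => ?_
    rcases (hpker g).mp hg with h | h <;> simp [h]
  let f : (frameGroup F).map π →* alternatingGroup (Fin 5) :=
    p.liftOfSurjective hp ⟨altHom h2, hle⟩
  have hf : ∀ g, f (p g) = altHom h2 g :=
    MonoidHom.liftOfRightInverse_comp_apply p _ _ ⟨altHom h2, hle⟩
  have hfsurj : Function.Surjective f := fun a => by
    obtain ⟨g, rfl⟩ := altHom_surjective h2 a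
    exact ⟨p g, hf g⟩
  refine ⟨f.ker, inferInstance, ?_, ?_, ⟨QuotientGroup.quotientKerEquivOfSurjective f hfsurj⟩⟩
  · have hcard := card_subgroup_eq_two_mul_card_map hker (ker_le_frameGroup hker)
    rw [card_frameGroup h2, card_eq_card_ker_mul_card f hfsurj,
      card_alternatingGroup_five] at hcard
    omega
  · intro g hg
    obtain ⟨h, rfl⟩ := hp g
    have hh : h ∈ (altHom h2).ker := by rwa [MonoidHom.mem_ker, ← hf]
    rw [ker_altHom] at hh
    rw [← map_mul, hpker]
    exact mul_self_eq_one_or_eq_neg_one_of_permHom_eq_one hh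

end CentralQuotient

end FrameGroup

section Coordinates

variable {R : Type*} [CommRing R]

theorem mul_star_eq_normSq_smul_one (x : ℍ[R]) :
    x * star x = (Quaternion.normSq x : R) • 1 := by
  rw [Quaternion.self_mul_star, ← Quaternion.coe_mul_eq_smul, mul_one]

theorem star_mul_eq_normSq_smul_one (x : ℍ[R]) :
    star x * x = (Quaternion.normSq x : R) • 1 := by
  rw [Quaternion.star_mul_self, ← Quaternion.coe_mul_eq_smul, mul_one]

/-- The vector of `R⁵ = R ⊕ ℍ[R]` with first coordinate `r` and remaining coordinates `z`. -/
def consQuat (r : R) (z : ℍ[R]) : Fin 5 → R := ![r, z.re, z.imI, z.imJ, z.imK]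

/-- The component in `ℍ[R]` of a vector of `R⁵ = R ⊕ ℍ[R]`. -/
def quatPart (v : Fin 5 → R) : ℍ[R] := quat (v 1) (v 2) (v 3) (v 4)

theorem consQuat_quatPart (v : Fin 5 → R) : consQuat (v 0) (quatPart v) = v := by
  ext i; fin_cases i <;> simp [consQuat, quatPart]

theorem clifford_consQuat (r : R) (z : ℍ[R]) :
    clifford (consQuat r z) = !![r • 1, z; star z, -(r • 1)] := by
  ext i j <;> fin_cases i <;> fin_cases j <;> simp [consQuat, clifford]

theorem dotProduct_consQuat_self (r : R) (z : ℍ[R]) :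
    consQuat r z ⬝ᵥ consQuat r z = r ^ 2 + Quaternion.normSq z := by
  rw [Quaternion.normSq_def']
  simp [consQuat, dotProduct, Fin.sum_univ_five]; ring

/-- The diagonal matrix with the given quaternions on the diagonal. In contrast to
`Matrix.diagonal`, it unfolds to a matrix literal. -/
def diag (x y : ℍ[R]) : QMat R := !![x, 0; 0, y]

theorem diag_mul_diag (x y x' y' : ℍ[R]) :
    diag x y * diag x' y' = diag (x * x') (y * y') := by
  simp [diag]

theorem star_diag (x y : ℍ[R]) : star (diag x y) = diag (star x) (star y) := by
  ext i j <;> fin_cases i <;> fin_cases j <;> simp [diag, Matrix.star_apply]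

theorem diag_one_one : diag (1 : ℍ[R]) 1 = 1 := by simp [diag, Matrix.one_fin_two]

theorem smul_diag (c : R) (x y : ℍ[R]) : c • diag x y = diag (c • x) (c • y) := by
  ext i j <;> fin_cases i <;> fin_cases j <;> simp [diag]

theorem diag_inj {x y x' y' : ℍ[R]} : diag x y = diag x' y' ↔ x = x' ∧ y = y' :=
  ⟨fun h => ⟨congr_fun (congr_fun h 0) 0, congr_fun (congr_fun h 1) 1⟩,
    fun ⟨hx, hy⟩ => by rw [hx, hy]⟩

theorem diag_mem_unitary_iff {x y : ℍ[R]} :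
    diag x y ∈ unitary (QMat R) ↔ Quaternion.normSq x = 1 ∧ Quaternion.normSq y = 1 := by
  have hsmul : ∀ {c : R}, c • (1 : ℍ[R]) = 1 ↔ c = 1 := fun {c} =>
    ⟨fun h => by simpa using congrArg (fun z : ℍ[R] => z.re) h, fun h => by rw [h, one_smul]⟩
  rw [Unitary.mem_iff, star_diag, diag_mul_diag, diag_mul_diag, star_mul_eq_normSq_smul_one,
    star_mul_eq_normSq_smul_one, mul_star_eq_normSq_smul_one, mul_star_eq_normSq_smul_one, and_self,
    ← diag_one_one, diag_inj, hsmul, hsmul]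

theorem diag_conj_clifford {x y : ℍ[R]} (hx : Quaternion.normSq x = 1)
    (hy : Quaternion.normSq y = 1) (r : R) (z : ℍ[R]) :
    diag x y * clifford (consQuat r z) * star (diag x y) =
      clifford (consQuat r (x * z * star y)) := by
  rw [clifford_consQuat, clifford_consQuat, star_diag]
  simp [diag, mul_star_eq_normSq_smul_one, hx, hy, mul_assoc]

variable {F : Type*} [Field F] [NeZero (2 : F)] {g : unitary (QMat F)}

theorem vectorRep_consQuat_of_eq_diag {x y : ℍ[F]} (hg : g.1 = diag x y) (r : F) (z : ℍ[F]) :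
    vectorRep g (consQuat r z) = consQuat r (x * z * star y) := by
  obtain ⟨hx, hy⟩ := diag_mem_unitary_iff.1 (hg ▸ g.2)
  apply clifford_injective
  rw [clifford_vectorRep, hg, diag_conj_clifford hx hy]

theorem SignPerm.vectorRep_apply {σ : Equiv.Perm (Fin 5)} {s : Fin 5 → ℤˣ}
    (h : SignPerm g.1 σ s) (v : Fin 5 → F) (i : Fin 5) : vectorRep g v (σ i) = s i • v i := by
  have hsingle : ∀ i, vectorRep g (Pi.single i 1) = s i • (Pi.single (σ i) 1 : Fin 5 → F) :=
    fun i => by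
      apply clifford_injective
      rw [clifford_vectorRep]
      change g.1 * gamma i * Star.star g.1 = _
      rw [h i, smul_mul_assoc, mul_assoc, Unitary.mul_star_self_of_mem g.2, mul_one]
      rcases Int.units_eq_one_or (s i) with hs | hs <;> simp [hs, Units.neg_smul, gamma]
  conv_lhs => rw [pi_eq_sum_univ' v]
  simp only [map_sum, map_smul, hsingle, Finset.sum_apply]
  rw [Finset.sum_eq_single i]
  · rcases Int.units_eq_one_or (s i) with hs | hs <;> simp [hs, Units.neg_smul]
  · intro j _ hj
    rcases Int.units_eq_one_or (s j) with hs | hs <;>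
      simp [hs, Units.neg_smul, σ.injective.ne hj.symm]
  · simp

end Coordinates

section Transitivity

section

variable {R : Type*} [CommRing R]

/-- The diagonal matrices in the unitary group: the stabilizer of `gamma 0` under conjugation. -/
def diagGroup (R : Type*) [CommRing R] : Subgroup (unitary (QMat R)) where
  carrier := {g | ∃ x y, g.1 = diag x y}
  mul_mem' := by
    rintro a b ⟨x, y, ha⟩ ⟨x', y', hb⟩
    exact ⟨_, _, by rw [Submonoid.coe_mul, ha, hb, diag_mul_diag]⟩
  one_mem' := ⟨_, _, diag_one_one.symm⟩
  inv_mem' := by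
    rintro a ⟨x, y, ha⟩
    exact ⟨star x, star y, (congrArg star ha).trans (star_diag x y)⟩

theorem diag_commute_gamma_zero (x y : ℍ[R]) : diag x y * gamma 0 = gamma 0 * diag x y := by
  simp [gamma_zero, diag]

end

variable {F : Type*} [Field F] [NeZero (2 : F)]

theorem eq_diag_of_commute_gamma_zero {X : QMat F} (h : X * gamma 0 = gamma 0 * X) :
    X = diag (X 0 0) (X 1 1) := by
  rw [gamma_zero] at h
  have h01 := congr_fun (congr_fun h 0) 1
  have h10 := congr_fun (congr_fun h 1) 0
  simp only [Matrix.mul_apply, Fin.sum_univ_two] at h01 h10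
  ext1 i j
  fin_cases i <;> fin_cases j
  · rfl
  · exact eq_zero_of_neg_eq_self (F := F) (by simpa using h01)
  · exact eq_zero_of_neg_eq_self (F := F) (by simpa using h10.symm)
  · rfl

theorem vectorRep_single_zero_eq_iff {g : unitary (QMat F)} :
    vectorRep g (Pi.single 0 1) = Pi.single 0 1 ↔ g ∈ diagGroup F := by
  rw [← clifford_injective.eq_iff, clifford_vectorRep]
  change g.1 * gamma 0 * star g.1 = gamma 0 ↔ ∃ x y, g.1 = diag x y
  constructor
  · intro h
    refine ⟨_, _, eq_diag_of_commute_gamma_zero ?_⟩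
    conv_rhs => rw [← h]
    rw [mul_assoc _ (star g.1), Unitary.star_mul_self_of_mem g.2, mul_one]
  · rintro ⟨x, y, h⟩
    rw [h, diag_commute_gamma_zero, ← h, mul_assoc, Unitary.mul_star_self_of_mem g.2, mul_one]

theorem odd_natCard_of_neZero_two [Finite F] : Odd (Nat.card F) := by
  have := Fintype.ofFinite F
  rw [Nat.card_eq_fintype_card, Nat.odd_iff]
  refine FiniteField.odd_card_of_char_ne_two fun h => NeZero.ne (2 : F) ?_
  exact_mod_cast (ringChar.spec F 2).2 (dvd_of_eq h)

theorem exists_sq_add_sq [Finite F] (c : F) : ∃ a b : F, a ^ 2 + b ^ 2 = c := by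
  have := Fintype.ofFinite F
  have hodd : Fintype.card F % 2 = 1 := by
    rw [← Nat.card_eq_fintype_card, ← Nat.odd_iff]
    exact odd_natCard_of_neZero_two
  open Polynomial in
  obtain ⟨a, b, h⟩ := FiniteField.exists_root_sum_quadratic (f := (X ^ 2 : F[X]))
    (g := X ^ 2 - C c) (degree_X_pow 2) (degree_X_pow_sub_C two_pos c) hodd
  refine ⟨a, b, ?_⟩
  simp only [Polynomial.eval_pow, Polynomial.eval_X, Polynomial.eval_sub, Polynomial.eval_C] at h
  linear_combination h

theorem exists_mem_frameGroup_vectorRep_apply (i j : Fin 5) :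
    ∃ g ∈ frameGroup F, ∃ u : ℤˣ, ∀ v, vectorRep g v j = u • v i := by
  obtain ⟨σ, hσ, rfl⟩ : ∃ σ : Equiv.Perm (Fin 5), Equiv.Perm.sign σ = 1 ∧ σ i = j :=
    ⟨finRotate 5 ^ (5 - i.1 + j.1), by revert i j; decide, by revert i j; decide⟩
  obtain ⟨g, hg, s, hs⟩ := exists_mem_frameGroup_signPerm (F := F) hσ
  exact ⟨g, hg, s i, fun v => hs.vectorRep_apply v i⟩

theorem exists_mem_diagGroup_vectorRep_consQuat {z z' : ℍ[F]} (r : F)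
    (h : Quaternion.normSq z = Quaternion.normSq z') (h0 : Quaternion.normSq z ≠ 0) :
    ∃ g ∈ diagGroup F, vectorRep g (consQuat r z) = consQuat r z' := by
  let x : ℍ[F] := (Quaternion.normSq z : F)⁻¹ • (z' * star z)
  have hx : Quaternion.normSq x = 1 := by
    rw [Quaternion.normSq_smul, map_mul, Quaternion.normSq_star, ← h]
    field_simp
  refine ⟨⟨diag x 1, diag_mem_unitary_iff.2 ⟨hx, map_one _⟩⟩, ⟨x, 1, rfl⟩, ?_⟩
  rw [vectorRep_consQuat_of_eq_diag rfl, star_one, mul_one, smul_mul_assoc, mul_assoc,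
    star_mul_eq_normSq_smul_one, mul_smul_comm, smul_smul, inv_mul_cancel₀ h0, one_smul, mul_one]

variable {K : Subgroup (unitary (QMat F))}

theorem exists_mem_vectorRep_eq_single_zero_of_vectorRep {g : unitary (QMat F)} (hg : g ∈ K)
    {v : Fin 5 → F} (h : ∃ g' ∈ K, vectorRep g' (vectorRep g v) = Pi.single 0 1) :
    ∃ g' ∈ K, vectorRep g' v = Pi.single 0 1 := by
  obtain ⟨g', hg', h⟩ := h
  exact ⟨g' * g, mul_mem hg' hg, by rw [map_mul]; exact h⟩

theorem exists_mem_vectorRep_eq_single_zero_of_apply_zero (hK : frameGroup F ≤ K)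
    (hD : diagGroup F ≤ K) {v : Fin 5 → F} (hv : v ⬝ᵥ v = 1) (h0 : v 0 = 0) :
    ∃ g ∈ K, vectorRep g v = Pi.single 0 1 := by
  have hnorm : ∀ {w : Fin 5 → F}, w ⬝ᵥ w = 1 → w 0 = 0 →
      Quaternion.normSq (quatPart w) = 1 := fun {w} hw hw0 => by
    rw [← consQuat_quatPart w, dotProduct_consQuat_self, hw0] at hw
    linear_combination hw
  obtain ⟨h, hh, u, hu⟩ := exists_mem_frameGroup_vectorRep_apply (F := F) 1 0
  set w := vectorRep h (Pi.single 0 1) with hw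
  have hw0 : w 0 = 0 := by simp [w, hu]
  have hww : w ⬝ᵥ w = 1 := by rw [hw, dotProduct_vectorRep]; simp
  obtain ⟨g, hg, hgv⟩ := exists_mem_diagGroup_vectorRep_consQuat 0
    ((hnorm hv h0).trans (hnorm hww hw0).symm) (by simp [hnorm hv h0])
  rw [← h0, consQuat_quatPart, h0, ← hw0, consQuat_quatPart] at hgv
  exact exists_mem_vectorRep_eq_single_zero_of_vectorRep (hD hg)
    ⟨h⁻¹, inv_mem (hK hh), by rw [hgv, hw, vectorRep_inv_apply]⟩

theorem exists_mem_vectorRep_eq_single_zero_of_apply_zero_sq_ne_one [Finite F]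
    (hK : frameGroup F ≤ K) (hD : diagGroup F ≤ K) {v : Fin 5 → F} (hv : v ⬝ᵥ v = 1)
    (h0 : v 0 ^ 2 ≠ 1) : ∃ g ∈ K, vectorRep g v = Pi.single 0 1 := by
  rw [← consQuat_quatPart v, dotProduct_consQuat_self] at hv
  have hn : Quaternion.normSq (quatPart v) ≠ 0 := fun h => h0 (by linear_combination hv - h)
  obtain ⟨a, b, hab⟩ := exists_sq_add_sq (Quaternion.normSq (quatPart v))
  have hz : Quaternion.normSq (quatPart v) = Quaternion.normSq (quat 0 a b 0) := by
    rw [← hab, Quaternion.normSq_def']; simp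
  obtain ⟨g, hg, hgv⟩ := exists_mem_diagGroup_vectorRep_consQuat (v 0) hz hn
  obtain ⟨h, hh, u, hu⟩ := exists_mem_frameGroup_vectorRep_apply (F := F) 4 0
  rw [consQuat_quatPart] at hgv
  refine exists_mem_vectorRep_eq_single_zero_of_vectorRep (hD hg) ?_
  rw [hgv]
  refine exists_mem_vectorRep_eq_single_zero_of_vectorRep (hK hh) ?_
  refine exists_mem_vectorRep_eq_single_zero_of_apply_zero hK hD ?_ ?_
  · rw [dotProduct_vectorRep, dotProduct_consQuat_self, ← hz, hv]
  · simp [hu, consQuat]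

theorem exists_mem_vectorRep_eq_single_zero [Finite F] (hK : frameGroup F ≤ K)
    (hD : diagGroup F ≤ K) {v : Fin 5 → F} (hv : v ⬝ᵥ v = 1) :
    ∃ g ∈ K, vectorRep g v = Pi.single 0 1 := by
  obtain ⟨i, hi⟩ : ∃ i, v i ^ 2 ≠ 1 := by
    by_contra! hall
    simp only [dotProduct, Fin.sum_univ_five, ← pow_two, hall] at hv
    have h2 : (2 : F) * 2 = 0 := by linear_combination hv
    exact mul_ne_zero (NeZero.ne (2 : F)) (NeZero.ne 2) h2
  obtain ⟨g, hg, u, hu⟩ := exists_mem_frameGroup_vectorRep_apply (F := F) i 0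
  refine exists_mem_vectorRep_eq_single_zero_of_vectorRep (hK hg) <|
    exists_mem_vectorRep_eq_single_zero_of_apply_zero_sq_ne_one hK hD
      (by rwa [dotProduct_vectorRep]) ?_
  rw [hu]
  rcases Int.units_eq_one_or u with rfl | rfl <;> simpa [Units.neg_smul] using hi

theorem eq_top_of_frameGroup_le_of_diagGroup_le [Finite F] (hK : frameGroup F ≤ K)
    (hD : diagGroup F ≤ K) : K = ⊤ := by
  refine eq_top_iff.2 fun g _ => ?_
  obtain ⟨h, hh, hhg⟩ := exists_mem_vectorRep_eq_single_zero hK hD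
    (v := vectorRep g (Pi.single 0 1)) (by rw [dotProduct_vectorRep]; simp)
  have hmem : h * g ∈ K := hD <| vectorRep_single_zero_eq_iff.1 (by rw [map_mul]; exact hhg)
  exact (mul_mem_cancel_left hh).1 hmem

end Transitivity

section SymplecticModel

variable {F : Type*} [Field F] [NeZero (2 : F)]

/-- The splitting of the quaternions over a field in which `-1` is a sum of two squares, sending
the units `j` and `k` to `!![a, b; b, -a]` and `!![b, -a; -a, -b]`. -/
def splitEquiv {a b : F} (h : a ^ 2 + b ^ 2 = -1) : ℍ[F] ≃+* Matrix (Fin 2) (Fin 2) F where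
  toFun x := !![x.re + a * x.imJ + b * x.imK, x.imI + b * x.imJ - a * x.imK;
    -x.imI + b * x.imJ - a * x.imK, x.re - a * x.imJ - b * x.imK]
  invFun m := quat ((m 0 0 + m 1 1) / 2) ((m 0 1 - m 1 0) / 2)
    (-(a * ((m 0 0 - m 1 1) / 2) + b * ((m 0 1 + m 1 0) / 2)))
    (-(b * ((m 0 0 - m 1 1) / 2) - a * ((m 0 1 + m 1 0) / 2)))
  left_inv x := by
    have h2 := NeZero.ne (2 : F)
    ext <;> simp <;> field_simp
    · linear_combination (-2 * x.imJ) * h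
    · linear_combination (-2 * x.imK) * h
  right_inv m := by
    have h2 := NeZero.ne (2 : F)
    ext i j
    fin_cases i <;> fin_cases j <;> simp <;> field_simp
    · linear_combination (-m 0 0 + m 1 1) * h
    · linear_combination (-m 0 1 - m 1 0) * h
    · linear_combination (-m 0 1 - m 1 0) * h
    · linear_combination (m 0 0 - m 1 1) * h
  map_mul' x y := by
    rw [Matrix.mul_fin_two]
    ext i j
    fin_cases i <;> fin_cases j <;> simp
    · linear_combination (-x.imJ * y.imJ - x.imK * y.imK) * h
    · linear_combination (x.imJ * y.imK - x.imK * y.imJ) * h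
    · linear_combination (x.imK * y.imJ - x.imJ * y.imK) * h
    · linear_combination (-x.imJ * y.imJ - x.imK * y.imK) * h
  map_add' x y := by
    ext i j
    fin_cases i <;> fin_cases j <;> simp <;> ring

variable {a b : F} (h : a ^ 2 + b ^ 2 = -1)

theorem det_splitEquiv (x : ℍ[F]) : (splitEquiv h x).det = Quaternion.normSq x := by
  rw [Quaternion.normSq_def', Matrix.det_fin_two]
  simp only [splitEquiv, RingEquiv.coe_mk, Equiv.coe_fn_mk, Matrix.of_apply, Matrix.cons_val]
  linear_combination (-x.imJ ^ 2 - x.imK ^ 2) * h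

theorem splitEquiv_star (x : ℍ[F]) : splitEquiv h (star x) =
    !![splitEquiv h x 1 1, -splitEquiv h x 0 1; -splitEquiv h x 1 0, splitEquiv h x 0 0] := by
  ext i j
  fin_cases i <;> fin_cases j <;> simp [splitEquiv] <;> ring

/-- The reindexing that turns the `2 × 2` blocks around: the position inside the block becomes the
outer index. Only with this choice does the standard symplectic form correspond to `star`. -/
def blockEquiv : Fin 2 × Fin 2 ≃ Fin 2 ⊕ Fin 2 where
  toFun x := if x.2 = 0 then Sum.inl x.1 else Sum.inr x.1
  invFun := Sum.elim (fun i => (i, 0)) (fun i => (i, 1))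
  left_inv := by decide
  right_inv := by decide

/-- The identification of quaternionic `2 × 2` matrices with `4 × 4` matrices given by
`splitEquiv`. -/
def matrixSplitEquiv : QMat F ≃+* Matrix (Fin 2 ⊕ Fin 2) (Fin 2 ⊕ Fin 2) F :=
  ((splitEquiv h).mapMatrix.trans (Matrix.compRingEquiv (Fin 2) (Fin 2) F)).trans
    (Matrix.reindexRingEquiv F blockEquiv)

theorem matrixSplitEquiv_eq_fromBlocks (X : QMat F) : matrixSplitEquiv h X = Matrix.fromBlocks
    (Matrix.of fun i j => splitEquiv h (X i j) 0 0) (Matrix.of fun i j => splitEquiv h (X i j) 0 1)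
    (Matrix.of fun i j => splitEquiv h (X i j) 1 0)
    (Matrix.of fun i j => splitEquiv h (X i j) 1 1) := by
  ext i j
  rcases i with i | i <;> rcases j with j | j <;> rfl

theorem matrixSplitEquiv_star (X : QMat F) : matrixSplitEquiv h (star X) =
    -Matrix.J (Fin 2) F * (matrixSplitEquiv h X).transpose * Matrix.J (Fin 2) F := by
  rw [matrixSplitEquiv_eq_fromBlocks, matrixSplitEquiv_eq_fromBlocks, Matrix.J,
    Matrix.fromBlocks_transpose, Matrix.fromBlocks_neg, Matrix.fromBlocks_multiply,
    Matrix.fromBlocks_multiply]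
  congr 1 <;> ext i j <;> simp [Matrix.star_apply, splitEquiv_star]

theorem matrixSplitEquiv_mem_symplecticGroup_iff {X : QMat F} :
    matrixSplitEquiv h X ∈ Matrix.symplecticGroup (Fin 2) F ↔ X ∈ unitary (QMat F) := by
  have hcomm : star X * X = 1 ↔ X * star X = 1 := by
    rw [← (matrixSplitEquiv h).injective.eq_iff, map_mul, map_one, mul_eq_one_comm, ← map_mul,
      ← map_one (matrixSplitEquiv h), (matrixSplitEquiv h).injective.eq_iff]
  rw [Unitary.mem_iff, hcomm, and_self, SymplecticGroup.mem_iff,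
    ← (matrixSplitEquiv h).injective.eq_iff, map_mul, matrixSplitEquiv_star, map_one,
    ← mul_assoc, ← mul_assoc, mul_neg, neg_mul, neg_mul]
  have hJ := Matrix.J_squared (Fin 2) F
  generalize matrixSplitEquiv h X * Matrix.J (Fin 2) F * (matrixSplitEquiv h X).transpose = A
  constructor
  · rintro rfl
    rw [hJ, neg_neg]
  · intro hA
    have hA' := congrArg (· * Matrix.J (Fin 2) F) hA
    simpa [mul_assoc, hJ] using hA'

/-- The exceptional isomorphism between `Sp₄` and the spin group of the sum of five squares. -/
def unitaryEquivSymplecticGroup : unitary (QMat F) ≃* Matrix.symplecticGroup (Fin 2) F where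
  toFun g := ⟨matrixSplitEquiv h g.1, (matrixSplitEquiv_mem_symplecticGroup_iff h).2 g.2⟩
  invFun A := ⟨(matrixSplitEquiv h).symm A.1, (matrixSplitEquiv_mem_symplecticGroup_iff h).1 <| by
    rw [RingEquiv.apply_symm_apply]; exact A.2⟩
  left_inv g := Subtype.ext ((matrixSplitEquiv h).symm_apply_apply g.1)
  right_inv A := Subtype.ext ((matrixSplitEquiv h).apply_symm_apply A.1)
  map_mul' g g' := Subtype.ext (map_mul (matrixSplitEquiv h) g.1 g'.1)

theorem mem_center_unitary_iff {g : unitary (QMat F)} :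
    g ∈ Subgroup.center (unitary (QMat F)) ↔ g.1 = 1 ∨ g.1 = -1 := by
  rw [Subgroup.mem_center_iff]
  constructor
  · intro h
    exact eq_one_or_eq_neg_one_of_commute_gamma g.2 fun i =>
      (congrArg Subtype.val (h ⟨gamma i, gamma_mem_unitary i⟩)).symm
  · rintro (h | h) x <;> apply Subtype.ext <;> simp [h]

theorem exists_surjective_unitary_to_psp4 [Finite F] : ∃ π : unitary (QMat F) →*
    (Matrix.symplecticGroup (Fin 2) F ⧸ Subgroup.center (Matrix.symplecticGroup (Fin 2) F)),
    Function.Surjective π ∧ ∀ g, π g = 1 ↔ g.1 = 1 ∨ g.1 = -1 := by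
  obtain ⟨a, b, h⟩ := exists_sq_add_sq (-1 : F)
  let f := unitaryEquivSymplecticGroup h
  refine ⟨(QuotientGroup.mk' _).comp f.toMonoidHom,
    (QuotientGroup.mk'_surjective _).comp f.surjective, fun g => ?_⟩
  rw [← mem_center_unitary_iff, MonoidHom.comp_apply, QuotientGroup.mk'_apply,
    QuotientGroup.eq_one_iff, Subgroup.mem_center_iff, Subgroup.mem_center_iff]
  exact f.surjective.forall.trans <| forall_congr' fun x => by
    rw [← f.injective.eq_iff, map_mul, map_mul]; rfl

end SymplecticModel

section Cardinalities

variable {F : Type*} [Field F]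

theorem natCard_quaternion : Nat.card ℍ[F] = Nat.card F ^ 4 := by
  rw [Nat.card_congr (Quaternion.equivProd F)]
  simp only [Nat.card_prod]
  ring

instance [Finite F] : Finite ℍ[F] := Finite.of_equiv _ (Quaternion.equivProd F).symm

/-- Multiplication by a quaternion of norm `c` identifies the quaternions of norm `1` with those
of norm `c`. -/
def normSqEquiv {w : ℍ[F]} {c : F} (hw : Quaternion.normSq w = c) (hc : c ≠ 0) :
    {x : ℍ[F] // Quaternion.normSq x = c} ≃ {x : ℍ[F] // Quaternion.normSq x = 1} where
  toFun x := ⟨c⁻¹ • (star w * x.1), by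
    rw [Quaternion.normSq_smul, map_mul, Quaternion.normSq_star, hw, x.2]
    field_simp⟩
  invFun x := ⟨w * x.1, by rw [map_mul, hw, x.2, mul_one]⟩
  left_inv x := Subtype.ext <| by
    simp only [mul_smul_comm, ← mul_assoc, mul_star_eq_normSq_smul_one, hw, smul_mul_assoc,
      one_mul, smul_smul, inv_mul_cancel₀ hc, one_smul]
  right_inv x := Subtype.ext <| by
    simp only [← mul_assoc, star_mul_eq_normSq_smul_one, hw, smul_mul_assoc, one_mul, smul_smul,
      inv_mul_cancel₀ hc, one_smul]

variable [NeZero (2 : F)]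

/-- The group of unit quaternions is isomorphic to `SL₂`. -/
def unitQuaternionEquiv {a b : F} (h : a ^ 2 + b ^ 2 = -1) :
    {x : ℍ[F] // Quaternion.normSq x = 1} ≃
      (Matrix.GeneralLinearGroup.det : GL (Fin 2) F →* Fˣ).ker where
  toFun x := ⟨Matrix.GeneralLinearGroup.mkOfDetNeZero (splitEquiv h x.1) (by
      rw [det_splitEquiv, x.2]; exact one_ne_zero), Units.ext ((det_splitEquiv h x.1).trans x.2)⟩
  invFun g := ⟨(splitEquiv h).symm g.1.1, by
    rw [← det_splitEquiv h, RingEquiv.apply_symm_apply]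
    exact congrArg Units.val g.2⟩
  left_inv x := Subtype.ext ((splitEquiv h).symm_apply_apply x.1)
  right_inv g := Subtype.ext (Units.ext ((splitEquiv h).apply_symm_apply g.1.1))

variable [Finite F]

theorem card_normSq_eq {c : F} (hc : c ≠ 0) : Nat.card {x : ℍ[F] // Quaternion.normSq x = c} =
    Nat.card {x : ℍ[F] // Quaternion.normSq x = 1} := by
  obtain ⟨a, b, h⟩ := exists_sq_add_sq c
  exact Nat.card_congr (normSqEquiv (w := quat a b 0 0) (by simp [Quaternion.normSq_def', h]) hc)

theorem card_normSq_one : Nat.card {x : ℍ[F] // Quaternion.normSq x = 1} =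
    (Nat.card F ^ 2 - 1) * Nat.card F := by
  have := Fintype.ofFinite F
  obtain ⟨a, b, h⟩ := exists_sq_add_sq (-1 : F)
  have hGL := Matrix.card_GL_field (𝔽 := F) 2
  rw [card_eq_card_ker_mul_card _ Matrix.GeneralLinearGroup.det_surjective, Nat.card_units,
    ← Nat.card_congr (unitQuaternionEquiv h), Fin.prod_univ_two, ← Nat.card_eq_fintype_card] at hGL
  have hq : 1 < Nat.card F := Finite.one_lt_card
  simp only [Fin.val_zero, Fin.val_one, pow_zero, pow_one] at hGL
  rw [show Nat.card F ^ 2 - Nat.card F = Nat.card F * (Nat.card F - 1) by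
    rw [Nat.mul_sub, pow_two, mul_one], ← mul_assoc] at hGL
  exact Nat.eq_of_mul_eq_mul_right (by omega) hGL

theorem card_normSq_eq_of_ne_zero {c : F} (hc : c ≠ 0) :
    (Nat.card {x : ℍ[F] // Quaternion.normSq x = c} : ℤ) =
      (Nat.card F ^ 2 - 1) * Nat.card F := by
  have hq : 1 ≤ Nat.card F ^ 2 := Nat.one_le_pow _ _ Nat.card_pos
  rw [card_normSq_eq hc, card_normSq_one]
  push_cast [hq]
  rfl

theorem card_normSq_zero : (Nat.card {x : ℍ[F] // Quaternion.normSq x = 0} : ℤ) =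
    Nat.card F ^ 3 + Nat.card F ^ 2 - Nat.card F := by
  classical
  have := Fintype.ofFinite F
  have hq : 1 ≤ Nat.card F := Nat.card_pos
  have hfib : Nat.card ℍ[F] = ∑ c : F, Nat.card {x : ℍ[F] // Quaternion.normSq x = c} := by
    rw [← Nat.card_sigma]
    exact Nat.card_congr (Equiv.sigmaFiberEquiv (fun x : ℍ[F] => Quaternion.normSq x)).symm
  zify at hfib
  rw [← Finset.add_sum_erase _ _ (Finset.mem_univ (0 : F)), Finset.sum_congr rfl
    (fun c hc => card_normSq_eq_of_ne_zero (Finset.ne_of_mem_erase hc)), Finset.sum_const,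
    Finset.card_erase_of_mem (Finset.mem_univ _), Finset.card_univ, ← Nat.card_eq_fintype_card,
    natCard_quaternion, nsmul_eq_mul] at hfib
  push_cast [hq] at hfib
  linarith

/-- Splitting off the first coordinate of a unit vector. -/
def sphereEquiv : {v : Fin 5 → F // v ⬝ᵥ v = 1} ≃
    Σ r : F, {z : ℍ[F] // Quaternion.normSq z = 1 - r ^ 2} where
  toFun v := ⟨v.1 0, quatPart v.1, eq_sub_of_add_eq' <| by
    rw [← dotProduct_consQuat_self, consQuat_quatPart, v.2]⟩
  invFun z := ⟨consQuat z.1 z.2.1, by rw [dotProduct_consQuat_self, z.2.2]; ring⟩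
  left_inv v := Subtype.ext (consQuat_quatPart v.1)
  right_inv _ := rfl

theorem card_sphere : Nat.card {v : Fin 5 → F // v ⬝ᵥ v = 1} =
    Nat.card F ^ 2 * (Nat.card F ^ 2 + 1) := by
  classical
  have := Fintype.ofFinite F
  have hfiber : ∀ r : F, (Nat.card {z : ℍ[F] // Quaternion.normSq z = 1 - r ^ 2} : ℤ) =
      (Nat.card F ^ 2 - 1) * Nat.card F +
        if r ∈ ({1, -1} : Finset F) then (Nat.card F ^ 2 : ℤ) else 0 := fun r => by
    have hr : r ∈ ({1, -1} : Finset F) ↔ 1 - r ^ 2 = 0 := by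
      rw [Finset.mem_insert, Finset.mem_singleton, sub_eq_zero,
        eq_comm (b := r ^ 2), sq_eq_one_iff]
    split_ifs with h
    · rw [hr.1 h, card_normSq_zero]; ring
    · rw [card_normSq_eq_of_ne_zero (mt hr.2 h), add_zero]
  have hne : (1 : F) ∉ ({-1} : Finset F) := by
    rw [Finset.mem_singleton]
    exact fun h => NeZero.ne (2 : F) (by linear_combination h)
  zify
  rw [Nat.card_congr sphereEquiv, Nat.card_sigma, Nat.cast_sum,
    Finset.sum_congr rfl (fun r _ => hfiber r), Finset.sum_add_distrib,
    Finset.sum_ite_mem, Finset.univ_inter, Finset.sum_const, Finset.sum_const,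
    Finset.card_insert_of_notMem hne, Finset.card_singleton, Finset.card_univ,
    ← Nat.card_eq_fintype_card]
  simp only [nsmul_eq_mul]
  push_cast
  ring

theorem card_diagGroup {R : Type*} [CommRing R] : Nat.card (diagGroup R) =
    Nat.card {x : ℍ[R] // Quaternion.normSq x = 1} ^ 2 := by
  have hg : ∀ g ∈ diagGroup R, g.1 = diag (g.1 0 0) (g.1 1 1) := by
    rintro g ⟨x, y, h⟩
    rw [h]; rfl
  rw [pow_two, ← Nat.card_prod]
  exact Nat.card_congr
    { toFun := fun g => (⟨g.1.1 0 0, (diag_mem_unitary_iff.1 (hg _ g.2 ▸ g.1.2)).1⟩,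
        ⟨g.1.1 1 1, (diag_mem_unitary_iff.1 (hg _ g.2 ▸ g.1.2)).2⟩)
      invFun := fun x => ⟨⟨diag x.1.1 x.2.1, diag_mem_unitary_iff.2 ⟨x.1.2, x.2.2⟩⟩, _, _, rfl⟩
      left_inv := fun g => Subtype.ext (Subtype.ext (hg _ g.2).symm)
      right_inv := fun _ => rfl }

theorem card_unitary : Nat.card (unitary (QMat F)) =
    Nat.card F ^ 4 * (Nat.card F ^ 2 + 1) * (Nat.card F ^ 2 - 1) ^ 2 := by
  let : MulAction (unitary (QMat F)) (Fin 5 → F) := MulAction.compHom _ (vectorRep (F := F))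
  have horbit : MulAction.orbit (unitary (QMat F)) (Pi.single 0 1 : Fin 5 → F) =
      {v | v ⬝ᵥ v = 1} := by
    ext v
    constructor
    · rintro ⟨g, rfl⟩
      exact (dotProduct_vectorRep g _ _).trans (by simp)
    · intro hv
      obtain ⟨g, -, hg⟩ := exists_mem_vectorRep_eq_single_zero (K := ⊤) le_top le_top hv
      exact ⟨g⁻¹, by rw [← hg]; exact vectorRep_inv_apply g v⟩
  have hstab : MulAction.stabilizer (unitary (QMat F)) (Pi.single 0 1 : Fin 5 → F) =
      diagGroup F := by
    ext g
    exact vectorRep_single_zero_eq_iff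
  rw [← Subgroup.card_mul_index (MulAction.stabilizer _ (Pi.single 0 1 : Fin 5 → F)),
    MulAction.index_stabilizer, horbit, hstab, card_diagGroup, card_normSq_one,
    ← Nat.card_coe_set_eq]
  change _ * Nat.card {v : Fin 5 → F // v ⬝ᵥ v = 1} = _
  rw [card_sphere]
  ring

end Cardinalities

section Involutions

theorem star_eq_of_mul_self_eq_one {R : Type*} [Monoid R] [StarMul R] {x : R}
    (hx : x ∈ unitary R) (h : x * x = 1) : star x = x :=
  left_inv_eq_right_inv (Unitary.star_mul_self_of_mem hx) h

theorem star_eq_neg_of_mul_self_eq_neg_one {R : Type*} [Ring R] [StarRing R] {x : R}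
    (hx : x ∈ unitary R) (h : x * x = -1) : star x = -x :=
  left_inv_eq_right_inv (Unitary.star_mul_self_of_mem hx) (by rw [mul_neg, h, neg_neg])

variable {F : Type*} [Field F] [NeZero (2 : F)] {x y : QMat F}

theorem eq_re_smul_one_of_star_eq {z : ℍ[F]} (h : star z = z) : z = z.re • 1 := by
  have hzero : ∀ {a : F}, -a = a → a = 0 := eq_zero_of_neg_eq_self (F := F)
  have hI := hzero (congrArg (fun z : ℍ[F] => z.imI) h)
  have hJ := hzero (congrArg (fun z : ℍ[F] => z.imJ) h)
  have hK := hzero (congrArg (fun z : ℍ[F] => z.imK) h)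
  ext <;> simp [hI, hJ, hK]

theorem reTrace_eq_zero_of_mul_self_eq_one (hx : x ∈ unitary (QMat F)) (h : x * x = 1)
    (hone : x ≠ 1) (hneg : x ≠ -1) : reTrace x = 0 := by
  have hs := star_eq_of_mul_self_eq_one hx h
  obtain ⟨r, hr⟩ : ∃ r : F, x 0 0 = r • 1 :=
    ⟨_, eq_re_smul_one_of_star_eq (congr_fun (congr_fun hs 0) 0)⟩
  obtain ⟨t, ht⟩ : ∃ t : F, x 1 1 = t • 1 :=
    ⟨_, eq_re_smul_one_of_star_eq (congr_fun (congr_fun hs 1) 1)⟩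
  have hs10 : star (x 0 1) = x 1 0 := congr_fun (congr_fun hs 1) 0
  have h00 := congr_fun (congr_fun h 0) 0
  have h01 := congr_fun (congr_fun h 0) 1
  have h11 := congr_fun (congr_fun h 1) 1
  simp only [Matrix.mul_apply, Fin.sum_univ_two, hr, ht, ← hs10, smul_mul_assoc, mul_smul_comm,
    one_mul, mul_one, Matrix.one_apply_eq] at h00 h01 h11
  have hmul : (r + t) • x 0 1 = 0 := by rw [add_smul]; simpa using h01
  have htrace : reTrace x = r + t := by simp [reTrace, hr, ht]
  rw [htrace]
  refine (smul_eq_zero.1 hmul).elim id fun h0 => ?_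
  have hr2 : r * r = 1 := by simpa [h0] using congrArg (fun z : ℍ[F] => z.re) h00
  have ht2 : t * t = 1 := by simpa [h0] using congrArg (fun z : ℍ[F] => z.re) h11
  have hxdiag : x = diag (r • 1) (t • 1) := by
    rw [Matrix.eta_fin_two x, hr, ht, ← hs10, h0, star_zero, diag]
  rcases mul_self_eq_one_iff.1 hr2 with rfl | rfl <;>
    rcases mul_self_eq_one_iff.1 ht2 with rfl | rfl
  · exact absurd (by rw [hxdiag, ← smul_diag, diag_one_one, one_smul]) hone
  · exact add_neg_cancel 1
  · exact neg_add_cancel 1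
  · exact absurd (by rw [hxdiag, ← smul_diag, diag_one_one, neg_one_smul]) hneg

theorem reTrace_eq_zero_of_mul_self_eq_neg_one (hx : x ∈ unitary (QMat F)) (h : x * x = -1) :
    reTrace x = 0 :=
  eq_zero_of_neg_eq_self (F := F) <| by
    rw [← map_neg, ← star_eq_neg_of_mul_self_eq_neg_one hx h, reTrace_star]

theorem eq_or_eq_neg_of_commute_of_mul_self_eq_one (hx : x ∈ unitary (QMat F)) (hxx : x * x = 1)
    (hone : x ≠ 1) (hneg : x ≠ -1) (hy : y ∈ unitary (QMat F)) (hyy : y * y = 1)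
    (hc : x * y = y * x) : y = 1 ∨ y = -1 ∨ y = x ∨ y = -x := by
  by_cases h1 : y = 1
  · exact Or.inl h1
  by_cases h2 : y = -1
  · exact Or.inr (Or.inl h2)
  right; right
  have hdot := clifford_mul_add_swap (cliffordCoord x) (cliffordCoord y)
  rw [clifford_cliffordCoord (star_eq_of_mul_self_eq_one hx hxx)
    (reTrace_eq_zero_of_mul_self_eq_one hx hxx hone hneg),
    clifford_cliffordCoord (star_eq_of_mul_self_eq_one hy hyy)
    (reTrace_eq_zero_of_mul_self_eq_one hy hyy h1 h2), ← hc, ← two_smul F, mul_smul] at hdot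
  have hxy : x * y = (cliffordCoord x ⬝ᵥ cliffordCoord y) • 1 :=
    smul_right_injective _ (NeZero.ne (2 : F)) hdot
  have hyx : y = (cliffordCoord x ⬝ᵥ cliffordCoord y) • x := by
    simpa [← mul_assoc, hxx] using congrArg (x * ·) hxy
  generalize cliffordCoord x ⬝ᵥ cliffordCoord y = c at hyx
  subst hyx
  rcases eq_one_or_eq_neg_one_of_smul_mem_unitary hx hy with rfl | rfl <;> simp

end Involutions

section SquaresToSign

variable {R : Type*} [Ring R] [StarRing R] {K : Subgroup (unitary R)} {x y : unitary R}

/-- Every square of an element of `K` is `1` or `-1`: modulo sign, `K` is an elementary abelian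
`2`-group. -/
def SquaresToSign (K : Subgroup (unitary R)) : Prop :=
  ∀ x ∈ K, x.1 * x.1 = 1 ∨ x.1 * x.1 = -1

theorem SquaresToSign.mul_eq_or_eq_neg (hK : SquaresToSign K) (hx : x ∈ K) (hy : y ∈ K) :
    x.1 * y.1 = y.1 * x.1 ∨ x.1 * y.1 = -(y.1 * x.1) := by
  have hxy : x.1 * y.1 * (x.1 * y.1) = 1 ∨ x.1 * y.1 * (x.1 * y.1) = -1 :=
    hK (x * y) (mul_mem hx hy)
  have key : x.1 * (x.1 * y.1 * (x.1 * y.1)) * y.1 = x.1 * x.1 * (y.1 * x.1) * (y.1 * y.1) := by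
    noncomm_ring
  rcases hK x hx with h1 | h1 <;> rcases hK y hy with h2 | h2 <;> rcases hxy with h3 | h3 <;>
    rw [h1, h2, h3] at key <;>
    simp only [mul_one, one_mul, mul_neg, neg_mul, neg_neg, neg_eq_iff_eq_neg] at key <;>
    simp only [key, true_or, or_true]

theorem SquaresToSign.relIndex_centralizer_le_two (hK : SquaresToSign K) (hx : x ∈ K) :
    (Subgroup.centralizer {x}).relIndex K ≤ 2 := by
  have hmem : ∀ y, y ∈ Subgroup.centralizer {x} ↔ x.1 * y.1 = y.1 * x.1 := fun y => by
    rw [Subgroup.mem_centralizer_singleton_iff, Subtype.ext_iff, eq_comm]; rfl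
  by_cases hle : K ≤ Subgroup.centralizer {x}
  · rw [Subgroup.relIndex_eq_one.2 hle]; exact one_le_two
  obtain ⟨y, hy, hyC⟩ := SetLike.not_le_iff_exists.1 hle
  refine (Subgroup.index_eq_two_iff.2 ⟨⟨y, hy⟩, fun z => ?_⟩).le
  rw [Subgroup.mem_subgroupOf, Subgroup.mem_subgroupOf, Subgroup.coe_mul]
  by_cases hz : z.1 ∈ Subgroup.centralizer {x}
  · exact Or.inr ⟨hz, fun h => hyC ((Subgroup.mul_mem_cancel_left _ hz).1 h)⟩
  refine Or.inl ⟨(hmem _).2 ?_, hz⟩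
  have hxy := (hK.mul_eq_or_eq_neg hx hy).resolve_left ((hmem y).not.1 hyC)
  have hxz := (hK.mul_eq_or_eq_neg hx z.2).resolve_left ((hmem z.1).not.1 hz)
  rw [Submonoid.coe_mul, ← mul_assoc, hxz, neg_mul, mul_assoc, hxy, mul_neg, neg_neg, mul_assoc]

theorem SquaresToSign.exists_commute_notMem (hK : SquaresToSign K) (hx : x ∈ K) (T : List R)
    (hT : 2 * T.length < Nat.card K) : ∃ y ∈ K, x.1 * y.1 = y.1 * x.1 ∧ y.1 ∉ T := by
  classical
  by_contra! hcon
  set C := (Subgroup.centralizer {x}).subgroupOf K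
  let f : C → T.toFinset := fun y => ⟨y.1.1.1, List.mem_toFinset.2 <| hcon y.1 y.1.2 <|
    (congrArg Subtype.val (Subgroup.mem_centralizer_singleton_iff.1 y.2)).symm⟩
  have hf : Function.Injective f := fun y z h =>
    Subtype.ext (Subtype.ext (Subtype.ext (congrArg (fun w : T.toFinset => w.1) h)))
  have hC : Nat.card C ≤ T.length :=
    (Nat.card_le_card_of_injective f hf).trans (by
      rw [Nat.card_eq_fintype_card, Fintype.card_coe]; exact T.toFinset_card_le)
  have hindex := Nat.mul_le_mul hC (hK.relIndex_centralizer_le_two hx)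
  rw [Subgroup.relIndex, Subgroup.card_mul_index] at hindex
  lia

theorem eq_neg_mul_of_mul_eq {R : Type*} [Ring R] {x y z : R} (hx : x * x = -1) (h : x * y = z) :
    y = -(x * z) := by
  rw [← h, ← mul_assoc, hx, neg_one_mul, neg_neg]

theorem mul_self_mul_eq_one {R : Type*} [Ring R] {x y : R} (hx : x * x = -1) (hy : y * y = -1)
    (h : x * y = y * x) : x * y * (x * y) = 1 := by
  rw [Commute.mul_mul_mul_comm h.symm, hx, hy, neg_mul_neg, one_mul]

theorem SquaresToSign.exists_mul_self_eq_one (hK : SquaresToSign K) (hc : 8 < Nat.card K) :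
    ∃ s ∈ K, s.1 ≠ 1 ∧ s.1 ≠ -1 ∧ s.1 * s.1 = 1 := by
  by_contra! hcon
  have hneg : ∀ y ∈ K, y.1 ≠ 1 → y.1 ≠ -1 → y.1 * y.1 = -1 := fun y hy h h' =>
    (hK y hy).resolve_left (hcon y hy h h')
  obtain ⟨x, hx, -, hxT⟩ := hK.exists_commute_notMem (one_mem K) [1, -1] (by simp; lia)
  simp only [List.mem_cons, List.not_mem_nil, or_false, not_or] at hxT
  obtain ⟨y, hy, hxy, hyT⟩ := hK.exists_commute_notMem hx [1, -1, -x.1, x.1] (by simp; lia)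
  simp only [List.mem_cons, List.not_mem_nil, or_false, not_or] at hyT
  have hxx := hneg x hx hxT.1 hxT.2
  have hyy := hneg y hy hyT.1 hyT.2.1
  refine hcon (x * y) (mul_mem hx hy) (fun h => hyT.2.2.1 ?_) (fun h => hyT.2.2.2 ?_)
    (mul_self_mul_eq_one hxx hyy hxy)
  · rw [eq_neg_mul_of_mul_eq hxx h, mul_one]
  · rw [eq_neg_mul_of_mul_eq hxx h, mul_neg_one, neg_neg]

variable {F : Type*} [Field F] [NeZero (2 : F)]

theorem SquaresToSign.exists_anticommuting {K : Subgroup (unitary (QMat F))}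
    (hK : SquaresToSign K) (hc : 16 < Nat.card K) {s : unitary (QMat F)} (hs : s ∈ K)
    (hone : s.1 ≠ 1) (hneg : s.1 ≠ -1) (hss : s.1 * s.1 = 1) :
    ∃ i ∈ K, ∃ j ∈ K, i.1 * i.1 = -1 ∧ j.1 * j.1 = -1 ∧ j.1 * i.1 = -(i.1 * j.1) ∧
      s.1 * i.1 = i.1 * s.1 ∧ s.1 * j.1 = j.1 * s.1 := by
  have hinv : ∀ y : unitary (QMat F), s.1 * y.1 = y.1 * s.1 → y.1 * y.1 = 1 →
      y.1 = 1 ∨ y.1 = -1 ∨ y.1 = s.1 ∨ y.1 = -s.1 := fun y hy h =>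
    eq_or_eq_neg_of_commute_of_mul_self_eq_one s.2 hss hone hneg y.2 h hy
  obtain ⟨i, hi, hsi, hiT⟩ :=
    hK.exists_commute_notMem hs [1, -1, s.1, -s.1] (by simp; lia)
  simp only [List.mem_cons, List.not_mem_nil, or_false] at hiT
  have hii : i.1 * i.1 = -1 := (hK i hi).resolve_left fun h => hiT (hinv i hsi h)
  obtain ⟨j, hj, hsj, hjT⟩ := hK.exists_commute_notMem hs
    [1, -1, s.1, -s.1, i.1, -i.1, i.1 * s.1, -(i.1 * s.1)] (by simpa using hc)
  simp only [List.mem_cons, List.not_mem_nil, or_false] at hjT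
  have hjj : j.1 * j.1 = -1 := (hK j hj).resolve_left fun h => hjT (by
    rcases hinv j hsj h with h | h | h | h <;> simp [h])
  refine ⟨i, hi, j, hj, hii, hjj, ?_, hsi, hsj⟩
  refine (hK.mul_eq_or_eq_neg hj hi).resolve_left fun hij => hjT ?_
  have hsij : s.1 * (i.1 * j.1) = i.1 * j.1 * s.1 := (Commute.mul_right hsi hsj).eq
  rcases hinv (i * j) hsij (mul_self_mul_eq_one hii hjj hij.symm) with h | h | h | h <;>
    rw [eq_neg_mul_of_mul_eq hii h] <;> simp

end SquaresToSign

section Lattice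

variable {R : Type*} [Ring R] [StarRing R] {K : Subgroup (unitary R)} {g : unitary R}

/-- The order (in the sense of lattices in algebras) generated by a group of unitary elements. -/
def matrixLattice (K : Subgroup (unitary R)) : Subring R :=
  Subring.closure (Subtype.val '' (K : Set (unitary R)))

theorem mem_matrixLattice (hg : g ∈ K) : g.1 ∈ matrixLattice K :=
  Subring.subset_closure ⟨g, hg, rfl⟩

theorem mem_matrixLattice_iff {x : R} :
    x ∈ matrixLattice K ↔ x ∈ AddSubgroup.closure (Subtype.val '' (K : Set (unitary R))) := by
  rw [matrixLattice, Subring.mem_closure_iff]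
  have hclosure : (Submonoid.closure (Subtype.val '' (K : Set (unitary R))) : Set R) =
      Subtype.val '' (K : Set (unitary R)) :=
    congrArg SetLike.coe (Submonoid.closure_eq (K.toSubmonoid.map (unitary R).subtype))
  rw [hclosure]

/-- The stabilizer of a subring under conjugation by unitary elements. -/
def conjStabilizer (A : Subring R) : Subgroup (unitary R) where
  carrier := {g | ∀ x, x ∈ A ↔ g.1 * x * star g.1 ∈ A}
  one_mem' := fun x => by simp
  mul_mem' := fun {g h} hg hh x => by
    rw [hh, hg, Submonoid.coe_mul, star_mul]
    simp only [mul_assoc]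
  inv_mem' := fun {g} hg x => by
    have hgg := Unitary.mul_star_self_of_mem g.2
    rw [hg (_ * _ * _), ← Unitary.star_eq_inv, Unitary.coe_star, star_star, ← mul_assoc,
      ← mul_assoc, hgg, one_mul, mul_assoc, hgg, mul_one]

theorem star_mul_conj_mul (g : unitary R) (x : R) :
    star g.1 * (g.1 * x * star g.1) * g.1 = x := by
  have hgg := Unitary.star_mul_self_of_mem g.2
  rw [← mul_assoc, ← mul_assoc, hgg, one_mul, mul_assoc, hgg, mul_one]

theorem mem_conjStabilizer_of_mem {A : Subring R} (h : g.1 ∈ A) (h' : star g.1 ∈ A) :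
    g ∈ conjStabilizer A := fun x => by
  refine ⟨fun hx => mul_mem (mul_mem h hx) h', fun hx => ?_⟩
  rw [← star_mul_conj_mul g x]
  exact mul_mem (mul_mem h' hx) h

theorem conj_mem_matrixLattice (hg : g ∈ Subgroup.normalizer (K : Set (unitary R))) {x : R}
    (hx : x ∈ matrixLattice K) : g.1 * x * star g.1 ∈ matrixLattice K := by
  rw [mem_matrixLattice_iff] at hx
  induction hx using AddSubgroup.closure_induction with
  | mem x hx =>
    obtain ⟨y, hy, rfl⟩ := hx
    exact mem_matrixLattice ((Subgroup.mem_normalizer_iff.1 hg y).1 hy)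
  | zero => simp
  | add x y _ _ hx hy => rw [mul_add, add_mul]; exact add_mem hx hy
  | neg x _ hx => rw [mul_neg, neg_mul]; exact neg_mem hx

theorem normalizer_le_conjStabilizer :
    Subgroup.normalizer (K : Set (unitary R)) ≤ conjStabilizer (matrixLattice K) := fun g hg x => by
  refine ⟨conj_mem_matrixLattice hg, fun hx => ?_⟩
  have h := conj_mem_matrixLattice (inv_mem hg) hx
  rwa [← Unitary.star_eq_inv, Unitary.coe_star, star_star, star_mul_conj_mul] at h

variable {F : Type*} [Field F] [NeZero (2 : F)]

theorem SquaresToSign.exists_reTrace_eq_intCast {K : Subgroup (unitary (QMat F))}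
    (hK : SquaresToSign K) {x : QMat F} (hx : x ∈ matrixLattice K) : ∃ z : ℤ, reTrace x = z := by
  rw [mem_matrixLattice_iff] at hx
  induction hx using AddSubgroup.closure_induction with
  | mem x hx =>
    obtain ⟨g, hg, rfl⟩ := hx
    by_cases hone : g.1 = 1
    · exact ⟨2, by rw [hone, reTrace_one, Int.cast_ofNat]⟩
    by_cases hneg : g.1 = -1
    · exact ⟨-2, by rw [hneg, map_neg, reTrace_one, Int.cast_neg, Int.cast_ofNat]⟩
    refine ⟨0, ?_⟩
    rw [Int.cast_zero]
    exact (hK g hg).elim (reTrace_eq_zero_of_mul_self_eq_one g.2 · hone hneg)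
      (reTrace_eq_zero_of_mul_self_eq_neg_one g.2)
  | zero => exact ⟨0, by rw [map_zero, Int.cast_zero]⟩
  | add x y _ _ hx hy =>
    obtain ⟨a, ha⟩ := hx
    obtain ⟨b, hb⟩ := hy
    exact ⟨a + b, by rw [map_add, ha, hb, Int.cast_add]⟩
  | neg x _ hx =>
    obtain ⟨a, ha⟩ := hx
    exact ⟨-a, by rw [map_neg, ha, Int.cast_neg]⟩

end Lattice

section UnipotentHom

variable {V R : Type*} [AddCommGroup V] [Ring R]

theorem one_add_mul_one_add {ν : V →+ R} (hmul : ∀ v w, ν v * ν w = 0) (v w : V) :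
    (1 + ν v) * (1 + ν w) = 1 + ν (v + w) := by
  rw [add_mul, mul_add, mul_add, hmul, map_add, one_mul, one_mul, mul_one, add_zero, add_assoc,
    add_comm (ν w)]

variable [StarRing R]

/-- The exponential `v ↦ 1 + ν v` of an additive family of skew-adjoint elements with vanishing
products. -/
def unipotentHom (ν : V →+ R) (hmul : ∀ v w, ν v * ν w = 0) (hstar : ∀ v, star (ν v) = -ν v) :
    Multiplicative V →* unitary R where
  toFun v := ⟨1 + ν v.toAdd, by
    rw [Unitary.mem_iff, star_add, star_one, hstar, ← map_neg, one_add_mul_one_add hmul,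
      one_add_mul_one_add hmul, neg_add_cancel, add_neg_cancel, map_zero, add_zero, and_self]⟩
  map_one' := Subtype.ext ((congrArg (1 + ·) (map_zero ν)).trans (add_zero 1))
  map_mul' v w := Subtype.ext (one_add_mul_one_add hmul v.toAdd w.toAdd).symm

theorem unipotentHom_injective {ν : V →+ R} (hmul : ∀ v w, ν v * ν w = 0)
    (hstar : ∀ v, star (ν v) = -ν v) (hν : Function.Injective ν) :
    Function.Injective (unipotentHom ν hmul hstar) := fun _ _ h =>
  Multiplicative.toAdd.injective (hν (add_left_cancel (congrArg Subtype.val h)))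

end UnipotentHom

section QuaternionHom

variable {F A : Type*} [Field F] [Ring A] [Algebra F A]

theorem exists_quaternionHom {i j : A} (hi : i * i = -1) (hj : j * j = -1)
    (hji : j * i = -(i * j)) :
    ∃ φ : ℍ[F] →ₐ[F] A, φ (quat 0 1 0 0) = i ∧ φ (quat 0 0 1 0) = j := by
  let q : QuaternionAlgebra.Basis A (-1 : F) 0 (-1) :=
    { i := i, j := j, k := i * j, i_mul_i := by simp [hi], j_mul_j := by simp [hj], i_mul_j := rfl,
      j_mul_i := by simp [hji] }
  exact ⟨q.liftHom, (q.liftHom_apply _).trans (by simp [QuaternionAlgebra.Basis.lift, q]),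
    (q.liftHom_apply _).trans (by simp [QuaternionAlgebra.Basis.lift, q])⟩

theorem map_quat (φ : ℍ[F] →ₐ[F] A) (a b c d : F) : φ (quat a b c d) =
    a • 1 + b • φ (quat 0 1 0 0) + c • φ (quat 0 0 1 0) +
      d • (φ (quat 0 1 0 0) * φ (quat 0 0 1 0)) := by
  rw [← map_mul, ← map_one φ]
  simp only [← map_smul, ← map_add]
  congr 1
  ext <;> simp

end QuaternionHom

section CommutingInvolution

variable {F : Type*} [Field F]

/-- A copy `φ` of the quaternions in `QMat F`, compatible with the involutions and the traces,
together with a self-adjoint involution `s` of trace zero that commutes with it. The two generate a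
copy of the group algebra of the cyclic group of order two over the quaternions. -/
structure IsCommutingInvolution (φ : ℍ[F] →ₐ[F] QMat F) (s : QMat F) : Prop where
  mul_self : s * s = 1
  star_eq : star s = s
  mul_map (z : ℍ[F]) : s * φ z = φ z * s
  star_map (z : ℍ[F]) : star (φ z) = φ (star z)
  reTrace_map (z : ℍ[F]) : reTrace (φ z) = 2 * z.re
  reTrace_map_mul (z : ℍ[F]) : reTrace (φ z * s) = 0

theorem reTrace_eq_zero_of_commute [NeZero (2 : F)] {s x : QMat F} (hs : s ∈ unitary (QMat F))
    (hss : s * s = 1) (hx : x ∈ unitary (QMat F)) (hxx : x * x = -1) (hsx : s * x = x * s) :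
    reTrace (x * s) = 0 :=
  reTrace_eq_zero_of_mul_self_eq_neg_one (mul_mem hx hs) <| by
    rw [Commute.mul_mul_mul_comm hsx, hxx, hss, mul_one]

theorem isCommutingInvolution_of_mul_self [NeZero (2 : F)] {φ : ℍ[F] →ₐ[F] QMat F} {s : QMat F}
    (hs : s ∈ unitary (QMat F)) (hone : s ≠ 1) (hneg : s ≠ -1) (hss : s * s = 1)
    (hI : φ (quat 0 1 0 0) ∈ unitary (QMat F)) (hJ : φ (quat 0 0 1 0) ∈ unitary (QMat F))
    (hsI : s * φ (quat 0 1 0 0) = φ (quat 0 1 0 0) * s)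
    (hsJ : s * φ (quat 0 0 1 0) = φ (quat 0 0 1 0) * s) : IsCommutingInvolution φ s := by
  have hsq : ∀ z : ℍ[F], z * z = -1 → φ z * φ z = -1 := fun z hz => by
    rw [← map_mul, hz, map_neg, map_one]
  have hII := hsq (quat 0 1 0 0) (by ext <;> simp)
  have hJJ := hsq (quat 0 0 1 0) (by ext <;> simp)
  have hKK := hsq (quat 0 1 0 0 * quat 0 0 1 0) (by ext <;> simp)
  have hJI : φ (quat 0 0 1 0) * φ (quat 0 1 0 0) = -(φ (quat 0 1 0 0) * φ (quat 0 0 1 0)) := by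
    rw [← map_mul, ← map_mul, ← map_neg]
    congr 1
    ext <;> simp
  rw [map_mul] at hKK
  have hK := mul_mem hI hJ
  have hsK := (Commute.mul_right hsI hsJ).eq
  refine ⟨hss, star_eq_of_mul_self_eq_one hs hss, fun z => ?_, fun z => ?_, fun z => ?_,
    fun z => ?_⟩
  all_goals
    obtain ⟨a, b, c, d, rfl⟩ : ∃ a b c d, z = quat a b c d := ⟨_, _, _, _, rfl⟩
  · rw [map_quat φ a]
    simp only [mul_add, add_mul, mul_smul_comm, smul_mul_assoc, hsI, hsJ, hsK, mul_one,
      one_mul]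
  · rw [star_quat, map_quat φ a b, map_quat φ a (-b)]
    simp only [star_add, star_smul_qMat, star_one, star_mul,
      star_eq_neg_of_mul_self_eq_neg_one hI hII, star_eq_neg_of_mul_self_eq_neg_one hJ hJJ, hJI,
      smul_neg, neg_smul, neg_mul_neg]
  · rw [map_quat φ a]
    simp only [map_add, map_smul, reTrace_one, quat_re, mul_zero, add_zero,
      reTrace_eq_zero_of_mul_self_eq_neg_one hI hII, reTrace_eq_zero_of_mul_self_eq_neg_one hJ hJJ,
      reTrace_eq_zero_of_mul_self_eq_neg_one hK hKK, smul_eq_mul, mul_comm]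
  · rw [map_quat φ a]
    simp only [add_mul, smul_mul_assoc, map_add, map_smul, one_mul, smul_zero, add_zero,
      reTrace_eq_zero_of_commute hs hss hI hII hsI, reTrace_eq_zero_of_commute hs hss hJ hJJ hsJ,
      reTrace_eq_zero_of_commute hs hss hK hKK hsK,
      reTrace_eq_zero_of_mul_self_eq_one hs hss hone hneg]

namespace IsCommutingInvolution

variable {φ : ℍ[F] →ₐ[F] QMat F} {s : QMat F} (h : IsCommutingInvolution φ s)

include h

theorem map_mul_mul_map_mul (x y z w : ℍ[F]) :
    (φ x + φ y * s) * (φ z + φ w * s) = φ (x * z + y * w) + φ (x * w + y * z) * s := by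
  have hs := h.mul_map
  have hyz : φ y * s * φ z = φ y * φ z * s := by rw [mul_assoc, hs, mul_assoc]
  have hyw : φ y * s * (φ w * s) = φ y * φ w := by
    rw [mul_assoc, ← mul_assoc s, hs, mul_assoc (φ w), h.mul_self, mul_one]
  simp only [add_mul, mul_add, map_add, map_mul, hyz, hyw, mul_assoc]
  abel

theorem star_map_add (x y : ℍ[F]) : star (φ x + φ y * s) = φ (star x) + φ (star y) * s := by
  rw [star_add, star_mul, h.star_eq, h.star_map, h.star_map, h.mul_map]

theorem reTrace_map_add (x y : ℍ[F]) : reTrace (φ x + φ y * s) = 2 * x.re := by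
  rw [map_add, h.reTrace_map, h.reTrace_map_mul, add_zero]

end IsCommutingInvolution

end CommutingInvolution

section NullQuaternion

variable {F : Type*} [Field F] {a b : F}

theorem null_mul_self (hab : a ^ 2 + b ^ 2 = -1) : quat 0 a b 1 * quat 0 a b 1 = 0 := by
  have hre : 0 * 0 - a * a - b * b - 1 * 1 = 0 := by linear_combination -hab
  rw [quat_mul, ← quat_zero_zero, hre]
  congr 1 <;> ring

theorem smul_null_mul_smul_null (hab : a ^ 2 + b ^ 2 = -1) (t r : F) :
    t • quat 0 a b 1 * r • quat 0 a b 1 = 0 := by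
  rw [smul_mul_smul_comm, null_mul_self hab, smul_zero]

/-- The `F`-plane of nilpotent matrices spanned by the images of the null quaternion
`a i + b j + k` and of its product with `s`. -/
def nullHom (φ : ℍ[F] →ₐ[F] QMat F) (s : QMat F) (a b : F) : F × F →+ QMat F where
  toFun v := φ (v.1 • quat 0 a b 1) + φ (v.2 • quat 0 a b 1) * s
  map_zero' := by simp
  map_add' v w := by
    rw [Prod.fst_add, Prod.snd_add, add_smul, add_smul, map_add, map_add, add_mul]
    abel

variable {φ : ℍ[F] →ₐ[F] QMat F} {s : QMat F} (h : IsCommutingInvolution φ s)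

include h

theorem IsCommutingInvolution.nullHom_mul_nullHom (hab : a ^ 2 + b ^ 2 = -1) (v w : F × F) :
    nullHom φ s a b v * nullHom φ s a b w = 0 := by
  refine (h.map_mul_mul_map_mul _ _ _ _).trans ?_
  simp only [smul_null_mul_smul_null hab, add_zero, map_zero, zero_mul]

theorem IsCommutingInvolution.star_nullHom (v : F × F) :
    star (nullHom φ s a b v) = -nullHom φ s a b v := by
  refine (h.star_map_add _ _).trans ?_
  rw [smul_quat, smul_quat, star_quat, star_quat, ← map_neg]
  simp [nullHom, smul_quat]

theorem IsCommutingInvolution.nullHom_injective [NeZero (2 : F)] :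
    Function.Injective (nullHom φ s a b) := by
  rw [injective_iff_map_eq_zero]
  rintro ⟨t, r⟩ hv
  have htrace : ∀ x y : ℍ[F], 2 * (t • quat 0 a b 1 * x + r • quat 0 a b 1 * y).re = 0 :=
    fun x y => by
      rw [← h.reTrace_map_add, ← h.map_mul_mul_map_mul]
      exact (congrArg (fun X => reTrace (X * _)) hv).trans (by rw [zero_mul, map_zero])
  have ht : 2 * -t = 0 := by simpa [smul_quat, quat_mul] using htrace (quat 0 0 0 1) 0
  have hr : 2 * -r = 0 := by simpa [smul_quat, quat_mul] using htrace 0 (quat 0 0 0 1)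
  simp only [mul_eq_zero, NeZero.ne (2 : F), false_or, neg_eq_zero] at ht hr
  exact Prod.ext ht hr

end NullQuaternion

section ConjStabilizer

variable {F : Type*} [Field F] {φ : ℍ[F] →ₐ[F] QMat F} {s : QMat F} {A : Subring (QMat F)}

theorem IsCommutingInvolution.map_mem_unitary (h : IsCommutingInvolution φ s) {w : ℍ[F]}
    (hw : Quaternion.normSq w = 1) : φ w ∈ unitary (QMat F) := by
  rw [Unitary.mem_iff, h.star_map, ← map_mul, ← map_mul, star_mul_eq_normSq_smul_one,
    mul_star_eq_normSq_smul_one, hw, one_smul, map_one, and_self]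

-- Conjugating `i` by `1 + α (a i + b j + k)` and pairing with `j` gives an integer that is
-- quadratic in `α`, and its odd part is linear.
theorem IsCommutingInvolution.exists_eq_intCast [NeZero (2 : F)] (h : IsCommutingInvolution φ s)
    {a b : F} (hab : a ^ 2 + b ^ 2 = -1) (hI : φ (quat 0 1 0 0) ∈ A) (hJ : φ (quat 0 0 1 0) ∈ A)
    (htrace : ∀ x ∈ A, ∃ z : ℤ, reTrace x = z) (hA : conjStabilizer A = ⊤) (x : F) :
    ∃ z : ℤ, x = z := by
  have key : ∀ α : F, ∃ z : ℤ, -4 * α - 4 * a * b * α ^ 2 = z := fun α => by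
    have hw : Quaternion.normSq (quat 1 (α * a) (α * b) α) = 1 := by
      rw [Quaternion.normSq_def', quat_re, quat_imI, quat_imJ, quat_imK]
      linear_combination α ^ 2 * hab
    have hg : (⟨_, h.map_mem_unitary hw⟩ : unitary (QMat F)) ∈ conjStabilizer A :=
      hA ▸ Subgroup.mem_top _
    obtain ⟨z, hz⟩ := htrace _ (mul_mem ((hg _).1 hI) hJ)
    refine ⟨z, ?_⟩
    rw [← hz, h.star_map, ← map_mul, ← map_mul, ← map_mul, h.reTrace_map, star_quat]
    simp only [quat_mul, quat_re]
    ring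
  obtain ⟨z, hz⟩ := key (-(x / 8))
  obtain ⟨z', hz'⟩ := key (x / 8)
  refine ⟨z - z', ?_⟩
  have h8 : (8 : F) ≠ 0 := by
    rw [show (8 : F) = 2 ^ 3 by norm_num]
    exact pow_ne_zero 3 (NeZero.ne 2)
  rw [Int.cast_sub, ← hz, ← hz']
  field_simp
  ring

theorem IsCommutingInvolution.sq_dvd_card_conjStabilizer [NeZero (2 : F)]
    (h : IsCommutingInvolution φ s) {p : ℕ} [Fact p.Prime] [CharP F p] {a b : ℕ}
    (hab : (a : F) ^ 2 + (b : F) ^ 2 = -1) (hs : s ∈ A) (hI : φ (quat 0 1 0 0) ∈ A)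
    (hJ : φ (quat 0 0 1 0) ∈ A) : p ^ 2 ∣ Nat.card (conjStabilizer A) := by
  let c : ZMod p →+* F := ZMod.castHom (dvd_refl p) F
  let ν : ZMod p × ZMod p →+ QMat F :=
    (nullHom φ s a b).comp (c.toAddMonoidHom.prodMap c.toAddMonoidHom)
  have hmul : ∀ v w, ν v * ν w = 0 := fun v w => h.nullHom_mul_nullHom hab _ _
  have hstar : ∀ v, star (ν v) = -ν v := fun v => h.star_nullHom _
  have hν : Function.Injective ν := h.nullHom_injective.comp (c.injective.prodMap c.injective)
  have hc : ∀ t : ZMod p, φ (c t • quat 0 (a : F) b 1) ∈ A := fun t => by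
    have hnull : φ (quat 0 (a : F) b 1) ∈ A := by
      rw [map_quat, zero_smul, zero_add, one_smul, Nat.cast_smul_eq_nsmul, Nat.cast_smul_eq_nsmul]
      exact add_mem (add_mem (nsmul_mem hI _) (nsmul_mem hJ _)) (mul_mem hI hJ)
    rw [← ZMod.natCast_zmod_val t, map_natCast, Nat.cast_smul_eq_nsmul, map_nsmul]
    exact nsmul_mem hnull _
  have hmem : ∀ v, 1 + ν v ∈ A := fun v =>
    add_mem (one_mem A) (add_mem (hc v.1) (mul_mem (hc v.2) hs))
  have hrange : (unipotentHom ν hmul hstar).range ≤ conjStabilizer A := by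
    rintro _ ⟨v, rfl⟩
    refine mem_conjStabilizer_of_mem (hmem v.toAdd) ?_
    rw [← Unitary.coe_star, Unitary.star_eq_inv, ← map_inv]
    exact hmem (v⁻¹).toAdd
  have hcard : Nat.card (unipotentHom ν hmul hstar).range = p ^ 2 := by
    rw [← Nat.card_congr (MonoidHom.ofInjective (unipotentHom_injective hmul hstar hν)).toEquiv,
      Nat.card_congr Multiplicative.toAdd, Nat.card_prod, Nat.card_zmod, sq]
  exact hcard ▸ Subgroup.card_dvd_of_le hrange

end ConjStabilizer

section PrimeField

theorem card_prime_of_forall_eq_intCast {F : Type*} [Field F] [Finite F]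
    (h : ∀ x : F, ∃ z : ℤ, x = z) : (Nat.card F).Prime := by
  obtain ⟨p, hp⟩ := CharP.exists F
  have : Fact p.Prime := ⟨CharP.char_is_prime F p⟩
  have hb : Function.Bijective (ZMod.castHom (dvd_refl p) F) := by
    refine ⟨(ZMod.castHom (dvd_refl p) F).injective, fun x => ?_⟩
    obtain ⟨z, rfl⟩ := h x
    exact ⟨z, map_intCast _ z⟩
  rw [← Nat.card_congr (Equiv.ofBijective _ hb), Nat.card_zmod]
  exact CharP.char_is_prime F p

theorem not_sq_dvd_of_prime {p : ℕ} (hp : p.Prime) (h2 : p ≠ 2) : ¬ p ^ 2 ∣ 1920 := by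
  intro h
  have hc : Nat.Coprime (p ^ 2) (2 ^ 7) :=
    Nat.Coprime.pow _ _ ((Nat.coprime_primes hp Nat.prime_two).2 h2)
  have h15 : p ^ 2 ∣ 15 := hc.dvd_of_dvd_mul_left (by simpa using h)
  have hp3 : p ≤ 3 := by nlinarith [Nat.le_of_dvd (by norm_num) h15]
  have := hp.two_le
  interval_cases p <;> lia

variable {F : Type*} [Field F] [NeZero (2 : F)] [Finite F]

theorem card_prime_of_isCoatom_of_squaresToSign {K H : Subgroup (unitary (QMat F))}
    (hK : SquaresToSign K) (hc : 16 < Nat.card K) (hH : IsCoatom H) (hHc : Nat.card H = 1920)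
    (hn : H ≤ Subgroup.normalizer (K : Set (unitary (QMat F)))) : (Nat.card F).Prime := by
  obtain ⟨p, hp⟩ := CharP.exists F
  have : Fact p.Prime := ⟨CharP.char_is_prime F p⟩
  have hp2 : p ≠ 2 := by
    rintro rfl
    exact NeZero.ne (2 : F) (by exact_mod_cast CharP.cast_eq_zero F 2)
  obtain ⟨s, hs, hone, hneg, hss⟩ := hK.exists_mul_self_eq_one (by lia)
  obtain ⟨i, hi, j, hj, hii, hjj, hji, hsi, hsj⟩ := hK.exists_anticommuting hc hs hone hneg hss
  obtain ⟨φ, hφi, hφj⟩ := exists_quaternionHom (F := F) hii hjj hji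
  have h : IsCommutingInvolution φ s.1 := isCommutingInvolution_of_mul_self s.2 hone hneg hss
    (hφi ▸ i.2) (hφj ▸ j.2) (hφi ▸ hsi) (hφj ▸ hsj)
  have hI : φ (quat 0 1 0 0) ∈ matrixLattice K := hφi ▸ mem_matrixLattice hi
  have hJ : φ (quat 0 0 1 0) ∈ matrixLattice K := hφj ▸ mem_matrixLattice hj
  obtain ⟨a, b, hab⟩ := CharP.sq_add_sq F p (-1)
  rw [Int.cast_neg, Int.cast_one] at hab
  rcases hH.le_iff.1 (hn.trans normalizer_le_conjStabilizer) with htop | heq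
  · exact card_prime_of_forall_eq_intCast <| h.exists_eq_intCast hab hI hJ
      (fun _ => hK.exists_reTrace_eq_intCast) htop
  · refine absurd ?_ (not_sq_dvd_of_prime (CharP.char_is_prime F p) hp2)
    rw [← hHc, ← heq]
    exact h.sq_dvd_card_conjStabilizer hab (mem_matrixLattice hs) hI hJ

end PrimeField

section OddIndex

theorem odd_iff_mod_eight_of_mul_eq {q m : ℕ} (hq : Odd q)
    (h : 1920 * m = q ^ 4 * (q ^ 2 + 1) * (q ^ 2 - 1) ^ 2) :
    Odd m ↔ q % 8 = 3 ∨ q % 8 = 5 := by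
  obtain ⟨k, hk⟩ : ∃ k, q ^ 2 = 8 * k + 1 :=
    ⟨q ^ 2 / 8, by have := Nat.eight_dvd_sq_sub_one_of_odd hq; have := hq.pow (n := 2).pos; lia⟩
  have hm : 15 * m = q ^ 4 * (4 * k + 1) * k ^ 2 := by
    rw [hk, Nat.add_sub_cancel] at h
    linarith
  have hmk : Odd m ↔ Odd k := by
    have h4k : Odd (4 * k + 1) := ⟨2 * k, by ring⟩
    rw [← (Nat.odd_mul (m := 15)).trans (and_iff_right (by decide)), hm]
    simp only [Nat.odd_mul, hq.pow, h4k, true_and, sq, and_self]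
  have hq16 : q % 16 < 16 := Nat.mod_lt _ (by norm_num)
  have hsq : q ^ 2 % 16 = (q % 16) ^ 2 % 16 := Nat.pow_mod _ _ _
  rw [hmk, Nat.odd_iff]
  rw [Nat.odd_iff] at hq
  generalize hr : q % 16 = r at hq16 hsq
  interval_cases r <;> lia

variable {F : Type*} [Field F] [NeZero (2 : F)] [Finite F]

theorem odd_index_iff {K : Subgroup (unitary (QMat F))} (hK : Nat.card K = 1920) :
    Odd K.index ↔ Nat.card F % 8 = 3 ∨ Nat.card F % 8 = 5 :=
  odd_iff_mod_eight_of_mul_eq odd_natCard_of_neZero_two <| by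
    rw [← card_unitary, ← K.card_mul_index, hK]

end OddIndex

section Quotient

variable {F : Type*} [Field F] {G : Type*} [Group G]
  {π : unitary (QMat F) →* G} (hπ : Function.Surjective π)
  (hker : ∀ g, π g = 1 ↔ g.1 = 1 ∨ g.1 = -1)

variable {H : Subgroup G} {N : Subgroup H}

include hker in
theorem squaresToSign_comap_map (hN : ∀ g ∈ N, g * g = 1) :
    SquaresToSign ((N.map H.subtype).comap π) := by
  rintro x ⟨y, hy, hyx⟩
  refine (hker (x * x)).mp ?_
  rw [map_mul, ← hyx, ← map_mul, hN y hy, map_one]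

theorem comap_le_normalizer_comap_map [N.Normal] :
    H.comap π ≤ Subgroup.normalizer (((N.map H.subtype).comap π : Subgroup _) : Set _) := by
  refine (Subgroup.comap_mono ?_).trans (Subgroup.le_normalizer_comap π)
  have := N.le_normalizer_map H.subtype
  rwa [Subgroup.normalizer_eq_top, ← MonoidHom.range_eq_map, H.range_subtype] at this

theorem natCard_eq_of_quotient_equiv_alternatingGroup (hN : Nat.card N = 16) [N.Normal]
    (hA : Nonempty ((H ⧸ N) ≃* alternatingGroup (Fin 5))) : Nat.card H = 960 := by
  rw [← N.card_mul_index, hN, Subgroup.index, Nat.card_congr hA.some.toEquiv,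
    card_alternatingGroup_five]

variable [NeZero (2 : F)]

include hπ hker in
theorem card_comap_eq_two_mul_card (L : Subgroup G) :
    Nat.card (L.comap π) = 2 * Nat.card L := by
  rw [card_subgroup_eq_two_mul_card_map hker (π.ker_le_comap L),
    Subgroup.map_comap_eq_self_of_surjective hπ]

include hπ hker in
theorem card_prime_and_mod_eight_of_isCoatom [Finite F] (hH : IsCoatom H) (hodd : Odd H.index)
    [N.Normal] (hN : Nat.card N = 16) (hN2 : ∀ g ∈ N, g * g = 1)
    (hA : Nonempty ((H ⧸ N) ≃* alternatingGroup (Fin 5))) :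
    (Nat.card F).Prime ∧ (Nat.card F % 8 = 3 ∨ Nat.card F % 8 = 5) := by
  have hcH : Nat.card (H.comap π) = 1920 := by
    rw [card_comap_eq_two_mul_card hπ hker, natCard_eq_of_quotient_equiv_alternatingGroup hN hA]
  have hcN : 16 < Nat.card ((N.map H.subtype).comap π) := by
    rw [card_comap_eq_two_mul_card hπ hker,
      Subgroup.card_map_of_injective H.subtype_injective, hN]
    norm_num
  refine ⟨card_prime_of_isCoatom_of_squaresToSign (squaresToSign_comap_map hker hN2) hcN
    (Subgroup.isCoatom_comap_of_surjective hπ hH) hcH comap_le_normalizer_comap_map, ?_⟩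
  rwa [← odd_index_iff hcH, H.index_comap_of_surjective hπ]

end Quotient

section Matrices

variable {A : Type*} [Ring A] [StarRing A] {K : Subgroup (unitary A)}

/-- The underlying elements of the ring of a subgroup of its unitary group, in which products and
sums can be mixed freely. -/
def matrices (K : Subgroup (unitary A)) : Submonoid A :=
  K.toSubmonoid.map (unitary A).subtype

theorem coe_mem_matrices {g : unitary A} : g.1 ∈ matrices K ↔ g ∈ K := by
  refine ⟨?_, fun h => ⟨g, h, rfl⟩⟩
  rintro ⟨h, hh, heq⟩
  rwa [← Subtype.ext heq]

theorem matrices_le_unitary : matrices K ≤ unitary A := by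
  rintro _ ⟨g, -, rfl⟩
  exact g.2

theorem star_mem_matrices {X : A} (h : X ∈ matrices K) : star X ∈ matrices K := by
  obtain ⟨g, hg, rfl⟩ := h
  exact ⟨g⁻¹, K.inv_mem hg, rfl⟩

theorem mem_matrices_of_mul_eq_mul {W X Y : A} (hW : W ∈ matrices K) (hX : X ∈ matrices K)
    (h : W * X = Y * W) : Y ∈ matrices K := by
  have hmem := mul_mem (mul_mem hW hX) (star_mem_matrices hW)
  rwa [h, mul_assoc, Unitary.mul_star_self_of_mem (matrices_le_unitary hW), mul_one] at hmem

end Matrices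

section FrameGroupMatrices

variable {R : Type*} [CommRing R] {K : Subgroup (unitary (QMat R))} (hK : frameGroup R ≤ K)

include hK in
theorem SignPerm.mem_matrices {X : QMat R} {σ : Equiv.Perm (Fin 5)} {s : Fin 5 → ℤˣ}
    (h : SignPerm X σ s) (hX : X ∈ unitary (QMat R)) : X ∈ matrices K :=
  ⟨⟨X, hX⟩, hK ⟨σ, s, h⟩, rfl⟩

include hK in
theorem gamma_mem_matrices (i : Fin 5) : gamma i ∈ matrices K :=
  (signPerm_gamma i).mem_matrices hK (gamma_mem_unitary i)

include hK in
theorem neg_mem_matrices {X : QMat R} (h : X ∈ matrices K) : -X ∈ matrices K := by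
  rw [← neg_one_mul]
  refine mul_mem (SignPerm.mem_matrices hK (σ := 1) (s := 1) (fun i => by simp) ?_) h
  rw [Unitary.mem_iff]; simp

theorem gamma_one_mul_diag_mul_gamma_one (x y : ℍ[R]) :
    gamma 1 * diag x y * gamma 1 = diag y x := by
  simp [gamma_one, diag]

theorem diag_add_diag (x y x' y' : ℍ[R]) :
    diag x y + diag x' y' = diag (x + x') (y + y') := by
  simp [diag]

theorem gamma_zero_mul_gamma_one : (gamma 0 * gamma 1 : QMat R) = !![0, 1; -1, 0] := by
  simp [gamma_zero, gamma_one]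

/-- The quaternion units `i`, `j`, `k`, indexed cyclically. -/
def imUnit : Fin 3 → ℍ[R] := ![quat 0 1 0 0, quat 0 0 1 0, quat 0 0 0 1]

theorem imUnit_mul_self (i : Fin 3) : (imUnit i * imUnit i : ℍ[R]) = -1 := by
  fin_cases i <;> ext <;> simp [imUnit]

theorem star_imUnit (i : Fin 3) : star (imUnit i : ℍ[R]) = -imUnit i := by
  fin_cases i <;> ext <;> simp [imUnit]

theorem imUnit_mem_unitary (i : Fin 3) : (imUnit i : ℍ[R]) ∈ unitary ℍ[R] := by
  rw [Unitary.mem_iff, star_imUnit, mul_neg, neg_mul, imUnit_mul_self, neg_neg, and_self]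

theorem gamma_succ_succ (i : Fin 3) :
    (gamma i.succ.succ : QMat R) = !![0, imUnit i; -imUnit i, 0] := by
  ext j k <;> fin_cases i <;> fin_cases j <;> fin_cases k <;> simp [gamma, clifford, imUnit]

theorem gamma_one_mul_gamma_succ_succ (i : Fin 3) :
    (gamma 1 * gamma i.succ.succ : QMat R) = diag (-imUnit i) (imUnit i) := by
  simp [gamma_succ_succ, gamma_one, diag]

theorem gamma_succ_succ_mul_gamma_succ_succ (i : Fin 3) :
    (gamma (i + 1).succ.succ * gamma (i + 2).succ.succ : QMat R) =
      diag (-imUnit i) (-imUnit i) := by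
  have h : (imUnit (i + 1) * imUnit (i + 2) : ℍ[R]) = imUnit i := by
    fin_cases i <;> ext <;> simp [imUnit]
  simp [gamma_succ_succ, diag, h]

include hK in
theorem diag_imUnit_mem_matrices (i : Fin 3) : diag (imUnit i) (imUnit i) ∈ matrices K := by
  have h := star_mem_matrices <|
    mul_mem (gamma_mem_matrices hK (i + 1).succ.succ) (gamma_mem_matrices hK (i + 2).succ.succ)
  rwa [gamma_succ_succ_mul_gamma_succ_succ, star_diag, star_neg, star_imUnit, neg_neg] at h

end FrameGroupMatrices

section HalfProducts

variable {F : Type*} [Field F] [NeZero (2 : F)] {K : Subgroup (unitary (QMat F))}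

theorem inv_two_smul_mem_unitary {X Y : QMat F}
    (hX : X * star X = (2 : F) • 1) (hX' : star X * X = (2 : F) • 1)
    (hY : Y * star Y = (2 : F) • 1) (hY' : star Y * Y = (2 : F) • 1) :
    (2⁻¹ : F) • (X * Y) ∈ unitary (QMat F) := by
  have h4 : (2⁻¹ * 2⁻¹ * 2 * 2 : F) = 1 := by field [NeZero.ne (2 : F)]
  rw [Unitary.mem_iff, star_smul_qMat, star_mul]
  simp only [smul_mul_assoc, mul_smul_comm]
  constructor
  · rw [mul_assoc, ← mul_assoc (star X), hX', smul_mul_assoc, mul_smul_comm, one_mul, hY',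
      smul_smul, smul_smul, smul_smul, h4, one_smul]
  · rw [mul_assoc, ← mul_assoc Y, hY, smul_mul_assoc, mul_smul_comm, one_mul, hX,
      smul_smul, smul_smul, smul_smul, h4, one_smul]

theorem half_one_add_gamma_mul_gamma_mul_mem_matrices (hK : frameGroup F ≤ K) {i j k l : Fin 5}
    (hij : i ≠ j) (hkl : k ≠ l) :
    (2⁻¹ : F) • ((1 + gamma i * gamma j) * (1 + gamma k * gamma l)) ∈ matrices K :=
  (((signPerm_one_add_gamma_mul_gamma hij).mul (signPerm_one_add_gamma_mul_gamma hkl)).smul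
    _).mem_matrices hK <| inv_two_smul_mem_unitary
      (one_add_gamma_mul_gamma_mul_star hij) (star_one_add_gamma_mul_gamma_mul_self hij)
      (one_add_gamma_mul_gamma_mul_star hkl) (star_one_add_gamma_mul_gamma_mul_self hkl)

theorem diag_one_imUnit_mem_matrices (hK : frameGroup F ≤ K) (i : Fin 3) :
    diag 1 (imUnit i) ∈ matrices K := by
  have h := half_one_add_gamma_mul_gamma_mul_mem_matrices hK (i := 1) (j := i.succ.succ)
    (k := (i + 1).succ.succ) (l := (i + 2).succ.succ) (by decide +revert) (by decide +revert)
  have hprod : (1 + diag (-imUnit i) (imUnit i) : QMat F) * (1 + diag (-imUnit i) (-imUnit i)) =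
      (2 : F) • diag (-imUnit i) 1 := by
    rw [← diag_one_one, diag_add_diag, diag_add_diag, diag_mul_diag, smul_diag]
    simp only [add_mul, mul_add, one_mul, mul_one, mul_neg, neg_mul, neg_neg, imUnit_mul_self]
    congr 1 <;> module
  rw [gamma_one_mul_gamma_succ_succ, gamma_succ_succ_mul_gamma_succ_succ, hprod,
    inv_smul_smul₀ (NeZero.ne (2 : F))] at h
  have hconj := star_mem_matrices <|
    mul_mem (mul_mem (gamma_mem_matrices hK 1) h) (gamma_mem_matrices hK 1)
  rwa [gamma_one_mul_diag_mul_gamma_one, star_diag, star_one, star_neg, star_imUnit,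
    neg_neg] at hconj

end HalfProducts

section NullPair

/-- Square-zero elements `β`, `γ` of a ring with `β * γ + γ * β = 1`. They behave like the matrix
units `e₁₂` and `e₂₁`, and split the quaternions when they exist. -/
structure IsNullPair {A : Type*} [Ring A] (β γ : A) : Prop where
  left_mul_self : β * β = 0
  right_mul_self : γ * γ = 0
  add_swap : β * γ + γ * β = 1

namespace IsNullPair

variable {F A : Type*} [Field F] [Ring A] [Algebra F A] {β γ : A}

theorem symm (h : IsNullPair β γ) : IsNullPair γ β :=
  ⟨h.right_mul_self, h.left_mul_self, by rw [add_comm, h.add_swap]⟩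

theorem left_mul_right_mul_left (h : IsNullPair β γ) : β * (γ * β) = β := by
  rw [← mul_assoc, eq_sub_of_add_eq h.add_swap, sub_mul, mul_assoc, h.left_mul_self, mul_zero,
    sub_zero, one_mul]

theorem left_mul_left_mul (h : IsNullPair β γ) (x : A) : β * (β * x) = 0 := by
  rw [← mul_assoc, h.left_mul_self, zero_mul]

/-- In terms of matrices, a matrix of determinant `1` with nonzero lower left entry is a product of
three unipotent triangular ones. -/
theorem eq_unipotent_mul_unipotent_mul_unipotent (h : IsNullPair β γ) {a b c d : F} (hc : c ≠ 0)
    (hdet : a * d - b * c = 1) :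
    a • (β * γ) + b • β + c • γ + d • (γ * β) =
      (1 + ((a - 1) / c) • β) * (1 + c • γ) * (1 + ((d - 1) / c) • β) := by
  obtain ⟨s, rfl⟩ : ∃ s, a = 1 + s * c := ⟨(a - 1) / c, by field [hc]⟩
  obtain ⟨t, rfl⟩ : ∃ t, d = 1 + t * c := ⟨(d - 1) / c, by field [hc]⟩
  obtain rfl : b = s + t + s * t * c := mul_right_cancel₀ hc (by linear_combination -hdet)
  rw [add_sub_cancel_left, add_sub_cancel_left, mul_div_cancel_right₀ _ hc,
    mul_div_cancel_right₀ _ hc]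
  simp only [add_mul, mul_add, one_mul, mul_one, smul_mul_assoc, mul_smul_comm,
    mul_assoc, h.left_mul_right_mul_left, h.left_mul_self, smul_zero, add_zero]
  linear_combination (norm := module) h.add_swap

end IsNullPair

end NullPair

section QuaternionNullPair

variable {F : Type*} [Field F] {β γ : ℍ[F]}

theorem add_star_eq_smul_one (x : ℍ[F]) : x + star x = (2 * x.re) • (1 : ℍ[F]) := by
  rw [Quaternion.self_add_star', ← Quaternion.coe_mul_eq_smul, mul_one]

theorem mul_mul_self_of_normSq_eq_zero {w : ℍ[F]} (hw : Quaternion.normSq w = 0) (z : ℍ[F]) :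
    w * z * w = (2 * (z * w).re) • w := by
  have hre : z * w + star w * star z = (2 * (z * w).re) • (1 : ℍ[F]) := by
    rw [← star_mul, add_star_eq_smul_one]
  have h := congrArg (w * ·) hre
  simpa only [mul_add, ← mul_assoc, mul_star_eq_normSq_smul_one, hw, zero_smul, zero_mul, add_zero,
    mul_smul_comm, mul_one] using h

theorem normSq_eq_zero_of_mul_self_eq_zero (hβ : β * β = 0) : Quaternion.normSq β = 0 := by
  rw [← mul_self_eq_zero, ← map_mul, hβ, map_zero]

theorem star_eq_neg_of_mul_self_eq_zero (hβ : β * β = 0) : star β = -β := by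
  have h : (2 * β.re) • β = 0 := by
    have h := congrArg (β * ·) (add_star_eq_smul_one β)
    simpa only [mul_add, hβ, mul_star_eq_normSq_smul_one, normSq_eq_zero_of_mul_self_eq_zero hβ,
      zero_smul, add_zero, mul_smul_comm, mul_one, eq_comm] using h
  refine eq_neg_of_add_eq_zero_right ?_
  rcases smul_eq_zero.1 h with h | rfl
  · rw [add_star_eq_smul_one, h, zero_smul]
  · rw [star_zero, add_zero]

variable (h : IsNullPair β γ)

include h

theorem IsNullPair.exists_eq (z : ℍ[F]) :
    ∃ a b c d : F, z = a • (β * γ) + b • β + c • γ + d • (γ * β) := by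
  have hnβ := normSq_eq_zero_of_mul_self_eq_zero h.left_mul_self
  have hnγ := normSq_eq_zero_of_mul_self_eq_zero h.right_mul_self
  refine ⟨2 * (z * (β * γ)).re, 2 * (z * γ).re, 2 * (z * β).re, 2 * (z * (γ * β)).re, ?_⟩
  calc z = (β * γ + γ * β) * z * (β * γ + γ * β) := by rw [h.add_swap, one_mul, mul_one]
    _ = β * γ * z * (β * γ) + β * (γ * z * γ) * β + γ * (β * z * β) * γ +
        γ * β * z * (γ * β) := by simp only [add_mul, mul_add, mul_assoc]; abel
    _ = _ := by
      rw [mul_mul_self_of_normSq_eq_zero (w := β * γ) (by simp [hnβ]),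
        mul_mul_self_of_normSq_eq_zero hnγ z, mul_mul_self_of_normSq_eq_zero hnβ z,
        mul_mul_self_of_normSq_eq_zero (w := γ * β) (by simp [hnβ])]
      simp only [mul_smul_comm, smul_mul_assoc, mul_assoc, h.left_mul_right_mul_left,
        h.symm.left_mul_right_mul_left]


theorem IsNullPair.normSq_eq (a b c d : F) :
    Quaternion.normSq (a • (β * γ) + b • β + c • γ + d • (γ * β)) = a * d - b * c := by
  have hβ := star_eq_neg_of_mul_self_eq_zero h.left_mul_self
  have hγ := star_eq_neg_of_mul_self_eq_zero h.right_mul_self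
  have hmul : ∀ x : ℍ[F], Quaternion.normSq x • (β * γ + γ * β) = x * star x := fun x => by
    rw [h.add_swap, mul_star_eq_normSq_smul_one]
  refine smul_left_injective F (show β * γ + γ * β ≠ 0 from h.add_swap ▸ one_ne_zero) ?_
  simp only [hmul, star_add, star_mul, Quaternion.star_smul, hβ, hγ, add_mul, mul_add,
    smul_mul_assoc, mul_smul_comm, mul_neg, neg_mul, neg_neg, mul_assoc, smul_neg,
    h.left_mul_right_mul_left, h.symm.left_mul_right_mul_left, h.left_mul_left_mul,
    h.symm.left_mul_left_mul, h.left_mul_self, h.right_mul_self, mul_zero, smul_zero]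
  module

theorem IsNullPair.mem_of_normSq_eq_one {P : Submonoid ℍ[F]} (hβ : ∀ t : F, 1 + t • β ∈ P)
    (hγ : ∀ t : F, 1 + t • γ ∈ P) {z : ℍ[F]} (hz : Quaternion.normSq z = 1) : z ∈ P := by
  have hmem {a b c d : F} (hc : c ≠ 0) (hdet : a * d - b * c = 1) :
      a • (β * γ) + b • β + c • γ + d • (γ * β) ∈ P := by
    rw [h.eq_unipotent_mul_unipotent_mul_unipotent hc hdet]
    exact mul_mem (mul_mem (hβ _) (hγ _)) (hβ _)
  obtain ⟨a, b, c, d, rfl⟩ := h.exists_eq z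
  rw [h.normSq_eq] at hz
  rcases ne_or_eq c 0 with hc | rfl
  · exact hmem hc hz
  have ha : a ≠ 0 := by rintro rfl; simp at hz
  convert mul_mem (hγ (-1)) (hmem (a := a) (b := b) (d := b + d) ha (by linear_combination hz))
    using 1
  simp only [add_mul, mul_add, one_mul, smul_mul_assoc, mul_smul_comm,
    h.symm.left_mul_right_mul_left, h.symm.left_mul_left_mul, h.right_mul_self, smul_zero]
  module

end QuaternionNullPair

section Unipotent

variable {F : Type*} [Field F]

theorem one_add_pow_of_mul_self_eq_zero {A : Type*} [Ring A] {β : A} (h : β * β = 0) (n : ℕ) :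
    (1 + β) ^ n = 1 + n • β := by
  induction n with
  | zero => rw [pow_zero, zero_nsmul, add_zero]
  | succ n ih =>
    rw [pow_succ, ih, mul_add, mul_one, add_mul, one_mul, smul_mul_assoc, h, smul_zero, add_zero,
      succ_nsmul, add_assoc]

theorem one_add_smul_mem_of_forall_exists_natCast_eq {A : Type*} [Ring A] [Module F A]
    (hF : ∀ t : F, ∃ n : ℕ, (n : F) = t) {P : Submonoid A} {β : A} (h : β * β = 0)
    (hβ : 1 + β ∈ P) (t : F) : 1 + t • β ∈ P := by
  obtain ⟨n, rfl⟩ := hF t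
  rw [Nat.cast_smul_eq_nsmul, ← one_add_pow_of_mul_self_eq_zero h]
  exact pow_mem hβ n

theorem smul_mul_smul_self_eq_zero {A : Type*} [Ring A] [Algebra F A] {β : A} (h : β * β = 0)
    (t : F) : t • β * t • β = 0 := by
  rw [smul_mul_smul_comm, h, smul_zero]

theorem exists_add_imUnit_mul_mul_star_imUnit {β : ℍ[F]} (h0 : β ≠ 0) (hre : β.re = 0) :
    ∃ (i : Fin 3) (b : F), b ≠ 0 ∧
      β + imUnit i * β * star (imUnit i) = (2 * b) • (imUnit i : ℍ[F]) := by
  obtain h | h | h : β.imI ≠ 0 ∨ β.imJ ≠ 0 ∨ β.imK ≠ 0 := by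
    by_contra! h
    exact h0 (Quaternion.ext _ _ hre h.1 h.2.1 h.2.2)
  · refine ⟨0, β.imI, h, ?_⟩
    ext <;> simp [imUnit, hre, two_mul]
  · refine ⟨1, β.imJ, h, ?_⟩
    ext <;> simp [imUnit, hre, two_mul]
  · refine ⟨2, β.imK, h, ?_⟩
    ext <;> simp [imUnit, hre, two_mul]

variable [NeZero (2 : F)]

variable (F) in
theorem four_ne_zero_of_neZero_two : (4 : F) ≠ 0 := by
  rw [show (4 : F) = 2 * 2 by norm_num]
  exact mul_ne_zero (NeZero.ne 2) (NeZero.ne 2)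

theorem isNullPair_of_add_eq_two_smul {A : Type*} [Ring A] [Algebra F A] {B C u : A}
    (hB : B * B = 0) (hC : C * C = 0) (hBC : B + C = (2 : F) • u) (hu : u * u = -1) :
    IsNullPair B ((-4⁻¹ : F) • C) := by
  have hsq : B * C + C * B = (-4 : F) • 1 := by
    have h := congrArg (fun x => x * x) hBC
    simp only [mul_add, add_mul, hB, hC, smul_mul_smul_comm, hu] at h
    linear_combination (norm := module) h
  refine ⟨hB, smul_mul_smul_self_eq_zero hC _, ?_⟩
  rw [mul_smul_comm, smul_mul_assoc, ← smul_add, hsq, smul_smul, neg_mul_neg,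
    inv_mul_cancel₀ (four_ne_zero_of_neZero_two F), one_smul]

theorem exists_isNullPair_smul {β : ℍ[F]} (h0 : β ≠ 0) (hβ : β * β = 0) :
    ∃ (i : Fin 3) (b : F) (γ : ℍ[F]), b ≠ 0 ∧ IsNullPair (b • β) γ ∧
      (imUnit i : ℍ[F]) = (2⁻¹ : F) • (b • β) - (2 : F) • γ := by
  have h2 := NeZero.ne (2 : F)
  have h4 := four_ne_zero_of_neZero_two F
  have hre : β.re = 0 := by
    have h := congrArg QuaternionAlgebra.re (star_eq_neg_of_mul_self_eq_zero hβ)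
    rw [Quaternion.re_star, Quaternion.re_neg] at h
    exact eq_zero_of_neg_eq_self (F := F) h.symm
  obtain ⟨i, b, hb, hi⟩ := exists_add_imUnit_mul_mul_star_imUnit h0 hre
  have hBB := smul_mul_smul_self_eq_zero hβ b⁻¹
  have hCC : imUnit i * (b⁻¹ • β) * star (imUnit i) * (imUnit i * (b⁻¹ • β) * star (imUnit i)) =
      0 := by
    rw [conj_mul_conj (A := ℍ[F]) (imUnit_mem_unitary i), hBB, mul_zero, zero_mul]
  have hBC : b⁻¹ • β + imUnit i * (b⁻¹ • β) * star (imUnit i) = (2 : F) • imUnit i := by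
    rw [mul_smul_comm, smul_mul_assoc, ← smul_add, hi, smul_smul, mul_comm 2,
      inv_mul_cancel_left₀ hb]
  refine ⟨i, b⁻¹, _, inv_ne_zero hb,
    isNullPair_of_add_eq_two_smul hBB hCC hBC (imUnit_mul_self i), ?_⟩
  linear_combination (norm := (match_scalars <;> field)) -(2⁻¹ : F) • hBC

end Unipotent

section UnipotentSubgroups

variable {F : Type*} [Field F]

/-- The embedding `x ↦ diag(x, x)` of the quaternions. -/
def diagHom : ℍ[F] →* QMat F where
  toFun x := diag x x
  map_one' := diag_one_one
  map_mul' x y := (diag_mul_diag x x y y).symm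

/-- The embedding `x ↦ diag(1, x)` of the quaternions. -/
def cornerHom : ℍ[F] →* QMat F where
  toFun x := diag 1 x
  map_one' := diag_one_one
  map_mul' x y := by rw [diag_mul_diag, mul_one]

namespace IsNullPair

variable [NeZero (2 : F)] {A : Type*} [Ring A] [Algebra F A] {β γ : A} (h : IsNullPair β γ)

include h

theorem involution_mul (t : F) :
    ((2⁻¹ : F) • β - (2 : F) • γ) * (1 + t • β) =
      (1 + (-4 * t) • γ) * ((2⁻¹ : F) • β - (2 : F) • γ) := by
  have h2 := NeZero.ne (2 : F)
  simp only [sub_mul, mul_add, add_mul, mul_sub, mul_one, one_mul, smul_mul_smul_comm,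
    h.left_mul_self, h.right_mul_self]
  match_scalars <;> field

/-- In terms of matrices, this conjugates the reflection `½ β - 2 γ` to a multiple of it by a
diagonal matrix, which normalizes the unipotent group of `β`. -/
theorem unipotent_mul_involution :
    (1 + (-4⁻¹ : F) • β) * (1 + (2 : F) • γ) * ((2⁻¹ : F) • β - (2 : F) • γ) =
      ((4⁻¹ : F) • β - (4 : F) • γ) * ((1 + (-4⁻¹ : F) • β) * (1 + (2 : F) • γ)) := by
  have h2 := NeZero.ne (2 : F)
  have h4 := four_ne_zero_of_neZero_two F
  simp only [sub_mul, mul_add, add_mul, mul_sub, mul_one, one_mul, smul_mul_assoc, mul_smul_comm,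
    mul_assoc, h.left_mul_self, h.right_mul_self, h.left_mul_right_mul_left,
    h.symm.left_mul_right_mul_left, h.left_mul_left_mul, mul_zero, smul_zero]
  match_scalars <;> field

theorem involution_mul_involution_mul :
    ((4⁻¹ : F) • β - (4 : F) • γ) * ((2⁻¹ : F) • β - (2 : F) • γ) * (1 + β) =
      (1 + (4⁻¹ : F) • β) * (((4⁻¹ : F) • β - (4 : F) • γ) * ((2⁻¹ : F) • β - (2 : F) • γ)) := by
  have h2 := NeZero.ne (2 : F)
  have h4 := four_ne_zero_of_neZero_two F
  simp only [sub_mul, mul_add, add_mul, mul_sub, mul_one, one_mul, smul_mul_assoc, mul_smul_comm,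
    mul_assoc, h.left_mul_self, h.right_mul_self, h.left_mul_right_mul_left, h.left_mul_left_mul,
    mul_zero, zero_mul, smul_zero]
  match_scalars <;> field

end IsNullPair

variable {K : Subgroup (unitary (QMat F))}

theorem mem_comap_cornerHom_of_mul_eq_mul {w x y : ℍ[F]}
    (hw : w ∈ (matrices K).comap diagHom) (hx : x ∈ (matrices K).comap cornerHom)
    (h : w * x = y * w) : y ∈ (matrices K).comap cornerHom := by
  refine mem_matrices_of_mul_eq_mul (W := diag w w) (X := diag 1 x) hw hx ?_
  change _ = diag 1 y * _
  rw [diag_mul_diag, diag_mul_diag, h, one_mul, mul_one]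

variable [NeZero (2 : F)] [Finite F] (hK : frameGroup F ≤ K)

include hK

theorem eq_top_of_isNullPair_corner {β γ : ℍ[F]}
    (h : IsNullPair β γ) (hβ : ∀ t : F, 1 + t • β ∈ (matrices K).comap cornerHom)
    (hγ : ∀ t : F, 1 + t • γ ∈ (matrices K).comap cornerHom) : K = ⊤ := by
  have hcorner {z : ℍ[F]} (hz : Quaternion.normSq z = 1) : diag 1 z ∈ matrices K :=
    h.mem_of_normSq_eq_one hβ hγ hz
  refine eq_top_of_frameGroup_le_of_diagGroup_le hK ?_
  rintro g ⟨x, y, hg⟩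
  obtain ⟨hx, hy⟩ := diag_mem_unitary_iff.1 (hg ▸ g.2)
  have hgamma := gamma_mem_matrices hK 1
  have hmem := mul_mem (mul_mem (mul_mem hgamma (hcorner hx)) hgamma) (hcorner hy)
  rwa [gamma_one_mul_diag_mul_gamma_one, diag_mul_diag, mul_one, one_mul, ← hg,
    coe_mem_matrices] at hmem

theorem eq_top_of_corner_unipotent (hF : ∀ t : F, ∃ n : ℕ, (n : F) = t) {β : ℍ[F]}
    (h0 : β ≠ 0) (hβ : β * β = 0) (h : diag 1 (1 + β) ∈ matrices K) : K = ⊤ := by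
  have hmem := one_add_smul_mem_of_forall_exists_natCast_eq hF
    (P := (matrices K).comap cornerHom) hβ h
  obtain ⟨i, b, γ, -, hpair, hi⟩ := exists_isNullPair_smul h0 hβ
  have hB (t : F) : 1 + t • b • β ∈ (matrices K).comap cornerHom := by
    rw [smul_smul]
    exact hmem _
  refine eq_top_of_isNullPair_corner hK hpair hB fun t => ?_
  refine mem_comap_cornerHom_of_mul_eq_mul (diag_imUnit_mem_matrices hK i) (hB (-4⁻¹ * t)) ?_
  rw [hi, hpair.involution_mul, ← mul_assoc, neg_mul_neg,
    mul_inv_cancel₀ (four_ne_zero_of_neZero_two F), one_mul]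

/-- Conjugating `diag(1, u)` by the unipotents gives a second element `diag(1, u')`. The commutator
of `diag(1, u' u)` with `diag(1 + β, 1 + β)` is a nontrivial `diag(1, 1 + t β)`. -/
theorem eq_top_of_diag_unipotent (hF : ∀ t : F, ∃ n : ℕ, (n : F) = t) (h3 : (3 : F) ≠ 0)
    {β : ℍ[F]} (h0 : β ≠ 0) (hβ : β * β = 0) (h : diag (1 + β) (1 + β) ∈ matrices K) :
    K = ⊤ := by
  have h4 := four_ne_zero_of_neZero_two F
  have hmem := one_add_smul_mem_of_forall_exists_natCast_eq hF
    (P := (matrices K).comap diagHom) hβ h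
  obtain ⟨i, b, γ, hb, hpair, hi⟩ := exists_isNullPair_smul h0 hβ
  have hB (t : F) : 1 + t • b • β ∈ (matrices K).comap diagHom := by
    rw [smul_smul]
    exact hmem _
  have hγ : 1 + (2 : F) • γ ∈ (matrices K).comap diagHom := by
    have hu : imUnit i * (1 + (-2⁻¹ : F) • b • β) = (1 + (2 : F) • γ) * imUnit i := by
      rw [hi, hpair.involution_mul, show (-4 * -2⁻¹ : F) = 2 by field]
    exact mem_matrices_of_mul_eq_mul (diag_imUnit_mem_matrices hK i) (hB (-2⁻¹))
      (((map_mul diagHom _ _).symm.trans (congrArg diagHom hu)).trans (map_mul diagHom _ _))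
  have hu := diag_one_imUnit_mem_matrices hK i
  set u' : ℍ[F] := (4⁻¹ : F) • b • β - (4 : F) • γ with hu'
  have hmem_u' : u' ∈ (matrices K).comap cornerHom :=
    mem_comap_cornerHom_of_mul_eq_mul (mul_mem (hB (-4⁻¹)) hγ) hu
      (hi ▸ hpair.unipotent_mul_involution)
  have hcomm : diag (1 + b • β) (1 + (4⁻¹ : F) • b • β) ∈ matrices K := by
    refine mem_matrices_of_mul_eq_mul (mul_mem hmem_u' hu) (hB 1) ?_
    change diag 1 u' * diag 1 (imUnit i) * diag _ _ = diag _ _ * (diag 1 u' * diag 1 (imUnit i))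
    rw [diag_mul_diag, diag_mul_diag, diag_mul_diag, one_smul, hi, hu',
      hpair.involution_mul_involution_mul, mul_one, one_mul, mul_one]
  refine eq_top_of_corner_unipotent hK hF (β := (4⁻¹ - 1 : F) • b • β) ?_ ?_ ?_
  · refine smul_ne_zero (fun h => h3 ?_) (smul_ne_zero hb h0)
    field_simp at h
    linear_combination -h
  · exact smul_mul_smul_self_eq_zero hpair.left_mul_self _
  have hmul : diag (1 + b • β) (1 + (4⁻¹ : F) • b • β) *
      diag (1 + (-1 : F) • b • β) (1 + (-1 : F) • b • β) = diag 1 (1 + (4⁻¹ - 1 : F) • b • β) := by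
    rw [diag_mul_diag]
    congr 1 <;> simp only [add_mul, mul_add, one_mul, mul_one, smul_mul_assoc, mul_smul_comm, hβ,
      smul_zero] <;> module
  exact hmul ▸ mul_mem hcomm (hB (-1))

end UnipotentSubgroups

section Counting

variable {G α : Type*} [Group G] [MulAction G α]

theorem sum_card_fixedBy_of_card_eq_two [Fintype G] [Finite α]
    (hfix : ∀ g : G, g ≠ 1 → Nat.card (MulAction.fixedBy α g) = 2) :
    ∑ g : G, (Nat.card (MulAction.fixedBy α g) : ℤ) = Nat.card α + 2 * (Nat.card G - 1) := by
  classical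
  rw [← Finset.add_sum_erase _ _ (Finset.mem_univ 1)]
  congr 1
  · simp [MulAction.fixedBy]
  · rw [Finset.sum_congr rfl (g := fun _ => 2) fun g hg => by
      rw [hfix g (Finset.ne_of_mem_erase hg)]; rfl]
    simp [Finset.card_erase_of_mem, Nat.cast_sub Fintype.card_pos]
    ring

open scoped Classical in
theorem sum_sub_card_orbit [Finite G] [Fintype α]
    (hfix : ∀ g : G, g ≠ 1 → Nat.card (MulAction.fixedBy α g) = 2) :
    ∑ ω : MulAction.orbitRel.Quotient G α, (Nat.card G - Nat.card ω.orbit : ℤ) =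
      2 * (Nat.card G - 1) := by
  have := Fintype.ofFinite G
  have hα : (Nat.card α : ℤ) =
      ∑ ω : MulAction.orbitRel.Quotient G α, (Nat.card ω.orbit : ℤ) := by
    rw [Nat.card_congr (MulAction.selfEquivSigmaOrbits' G α), Nat.card_sigma]
    exact Nat.cast_sum _ _
  have hburnside : ∑ g : G, (Nat.card (MulAction.fixedBy α g) : ℤ) =
      Fintype.card (MulAction.orbitRel.Quotient G α) * Nat.card G := by
    simp only [Nat.card_eq_fintype_card]
    exact_mod_cast MulAction.sum_card_fixedBy_eq_card_orbits_mul_card_group G α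
  rw [Finset.sum_sub_distrib, ← hα, Finset.sum_const, Finset.card_univ, nsmul_eq_mul]
  linarith [sum_card_fixedBy_of_card_eq_two hfix]

theorem two_mul_le_of_dvd_of_ne {s n : ℕ} (hn : 0 < n) (h : s ∣ n) (hne : s ≠ n) : 2 * s ≤ n := by
  obtain ⟨m, rfl⟩ := h
  have hm0 : m ≠ 0 := by rintro rfl; simp at hn
  have hm1 : m ≠ 1 := by rintro rfl; simp at hne
  nlinarith [show 2 ≤ m by omega]

theorem card_eq_two_of_sum_sub_eq {ι : Type*} {T : Finset ι} {s : ι → ℕ} {n m : ℕ}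
    (hdvd : ∀ i ∈ T, s i ∣ n) (hne : ∀ i ∈ T, s i ≠ n) (hm : 3 ≤ m) (hmn : 4 * m ≤ n)
    (h : ∑ i ∈ T, (n - s i : ℤ) = n + m - 2) : T.card = 2 := by
  have hupper : ∀ i ∈ T, (n - s i : ℤ) ≤ n - 1 := fun i hi => by
    have := Nat.pos_of_dvd_of_pos (hdvd i hi) (by omega)
    omega
  have hlower : ∀ i ∈ T, (n : ℤ) ≤ 2 * (n - s i) := fun i hi => by
    have := two_mul_le_of_dvd_of_ne (by omega) (hdvd i hi) (hne i hi)
    omega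
  have hle := T.sum_le_card_nsmul _ _ hupper
  have hge := T.card_nsmul_le_sum _ _ hlower
  rw [← Finset.mul_sum] at hge
  rw [nsmul_eq_mul, h] at hle hge
  apply le_antisymm
  · by_contra! hcard
    have : (3 : ℤ) * n ≤ T.card * n := by gcongr; exact_mod_cast hcard
    omega
  · by_contra! hcard
    have : (T.card : ℤ) * (n - 1) ≤ 1 * (n - 1) := by
      gcongr
      · omega
      · exact_mod_cast Nat.le_of_lt_succ hcard
    omega

-- The only solution is given by the nonregular orbits of the octahedral rotation group:
-- `n = 24` with `s₀ = 24 / 4`, `s₁ = 24 / 2` and `s₂ = 24 / 3`.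
theorem eq_six_of_add_add_eq_add_two_of_le {n s₀ s₁ s₂ : ℕ} (h₀ : 3 ≤ s₀) (d₀ : 4 * s₀ ∣ n)
    (d₁ : s₁ ∣ n) (d₂ : s₂ ∣ n) (n₁ : s₁ ≠ n) (hn : 0 < n)
    (h : s₀ + s₁ + s₂ = n + 2) (hle : s₂ ≤ s₁) : s₀ = 6 := by
  have hn₁ := two_mul_le_of_dvd_of_ne hn d₁ n₁
  obtain ⟨k, hk⟩ := d₀
  obtain ⟨k₁, hk₁⟩ := d₁
  obtain ⟨k₂, hk₂⟩ := d₂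
  have hk0 : k ≠ 0 := by rintro rfl; omega
  have hn4 : 4 * s₀ ≤ n := by nlinarith [Nat.pos_of_ne_zero hk0]
  have hk₁2 : 2 * s₁ = n := by
    by_contra hne
    have : 3 ≤ k₁ := by
      by_contra! hlt
      interval_cases k₁ <;> omega
    nlinarith
  have hk₂3 : 3 * s₂ = n := by
    by_contra hne
    have : 4 ≤ k₂ := by
      by_contra! hlt
      interval_cases k₂ <;> omega
    nlinarith
  have hk1 : 4 * s₀ = n := by
    by_contra hne
    have : 2 ≤ k := by
      by_contra! hlt
      interval_cases k <;> omega
    nlinarith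
  omega

theorem eq_six_of_add_add_eq_add_two {n s₀ s₁ s₂ : ℕ} (h₀ : 3 ≤ s₀) (d₀ : 4 * s₀ ∣ n)
    (d₁ : s₁ ∣ n) (d₂ : s₂ ∣ n) (n₁ : s₁ ≠ n) (n₂ : s₂ ≠ n) (hn : 0 < n)
    (h : s₀ + s₁ + s₂ = n + 2) : s₀ = 6 := by
  rcases le_total s₁ s₂ with hle | hle
  · exact eq_six_of_add_add_eq_add_two_of_le h₀ d₀ d₂ d₁ n₂ hn (by omega) hle
  · exact eq_six_of_add_add_eq_add_two_of_le h₀ d₀ d₁ d₂ n₁ hn h hle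

-- Klein's orbit count: besides the orbit of `x` there are exactly two nonregular orbits.
open scoped Classical in
theorem card_orbit_eq_six [Finite G] [Finite α]
    (hfix : ∀ g : G, g ≠ 1 → Nat.card (MulAction.fixedBy α g) = 2) {x : α}
    (hx : 3 ≤ Nat.card (MulAction.orbit G x)) (hs : 4 ∣ Nat.card (MulAction.stabilizer G x)) :
    Nat.card (MulAction.orbit G x) = 6 := by
  have := Fintype.ofFinite α
  have hsum := sum_sub_card_orbit hfix
  have hdvd : ∀ ω : MulAction.orbitRel.Quotient G α, Nat.card ω.orbit ∣ Nat.card G := by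
    refine fun ω => Quotient.inductionOn' ω fun y => ?_
    exact Dvd.intro_left _ (MulAction.index_stabilizer G y ▸
      Subgroup.card_mul_index (MulAction.stabilizer G y))
  have hG := Subgroup.card_mul_index (MulAction.stabilizer G x)
  rw [MulAction.index_stabilizer] at hG
  set ω₀ : MulAction.orbitRel.Quotient G α := Quotient.mk'' x
  change 3 ≤ Nat.card ω₀.orbit at hx
  change _ * Nat.card ω₀.orbit = _ at hG
  change Nat.card ω₀.orbit = 6
  have hdvd₀ : 4 * Nat.card ω₀.orbit ∣ Nat.card G := hG ▸ mul_dvd_mul_right hs _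
  have hle₀ := Nat.le_of_dvd Nat.card_pos hdvd₀
  rw [← Finset.add_sum_erase _ _ (Finset.mem_univ ω₀), ← Finset.sum_filter_ne_zero] at hsum
  set T := (Finset.univ.erase ω₀).filter fun ω => (Nat.card G - Nat.card ω.orbit : ℤ) ≠ 0
  have hne : ∀ ω ∈ T, Nat.card ω.orbit ≠ Nat.card G := fun ω hω h =>
    (Finset.mem_filter.1 hω).2 (by rw [h, sub_self])
  obtain ⟨ω₁, ω₂, h12, hT'⟩ := Finset.card_eq_two.1 <|
    card_eq_two_of_sum_sub_eq (fun ω _ => hdvd ω) hne hx hle₀ (by linarith)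
  rw [hT', Finset.sum_pair h12] at hsum
  exact eq_six_of_add_add_eq_add_two hx hdvd₀ (hdvd ω₁) (hdvd ω₂) (hne ω₁ (by simp [hT']))
    (hne ω₂ (by simp [hT'])) Nat.card_pos (by omega)

end Counting

section PlaneMatrices

variable {R : Type*} [CommRing R]

/-- The matrix `x (c + d J)`, where `J = gamma 0 * gamma 1` has square `-1` and commutes with the
scalar quaternion `x`. Conjugation by `J` is a half turn in the plane of the first two coordinate
axes. -/
def planeMat (x : ℍ[R]) (c d : R) : QMat R := !![c • x, d • x; -(d • x), c • x]

theorem planeMat_mul_planeMat (x x' : ℍ[R]) (c d c' d' : R) :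
    planeMat x c d * planeMat x' c' d' =
      planeMat (x * x') (c * c' - d * d') (c * d' + d * c') := by
  ext i j : 1
  fin_cases i <;> fin_cases j <;> simp [planeMat, Matrix.mul_apply, Fin.sum_univ_two] <;> module

theorem star_planeMat (x : ℍ[R]) (c d : R) :
    star (planeMat x c d) = planeMat (star x) c (-d) := by
  ext i j <;> fin_cases i <;> fin_cases j <;> simp [planeMat, Matrix.star_apply]

theorem planeMat_smul (t : R) (x : ℍ[R]) (c d : R) :
    planeMat (t • x) c d = planeMat x (t * c) (t * d) := by
  simp only [planeMat, smul_smul, mul_comm]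

theorem planeMat_one_zero (x : ℍ[R]) : planeMat x 1 0 = diag x x := by simp [planeMat, diag]

theorem planeMat_one_one_zero : planeMat (1 : ℍ[R]) 1 0 = 1 := by
  rw [planeMat_one_zero, diag_one_one]

theorem clifford_consQuat_zero {z : ℍ[R]} (hz : star z = -z) :
    clifford (consQuat 0 z) = planeMat z 0 1 := by
  rw [clifford_consQuat, planeMat, hz]
  simp

theorem sq_add_sq_mul_normSq_of_planeMat_mem_unitary {x : ℍ[R]} {c d : R}
    (h : planeMat x c d ∈ unitary (QMat R)) : (c ^ 2 + d ^ 2) * Quaternion.normSq x = 1 := by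
  have hmul := Unitary.mul_star_self_of_mem h
  rw [star_planeMat, planeMat_mul_planeMat, mul_star_eq_normSq_smul_one, planeMat_smul,
    ← planeMat_one_one_zero] at hmul
  have hre := congrArg QuaternionAlgebra.re (congr_fun (congr_fun hmul 0) 0)
  simp only [planeMat, Matrix.of_apply, Matrix.cons_val', Matrix.cons_val_zero,
    Quaternion.re_smul, Quaternion.re_one, smul_eq_mul] at hre
  linear_combination hre

theorem quatPart_consQuat (r : R) (z : ℍ[R]) : quatPart (consQuat r z) = z := rfl

variable {F : Type*} [Field F] [NeZero (2 : F)]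

theorem vectorRep_consQuat_zero_of_eq_planeMat {g : unitary (QMat F)} {x : ℍ[F]} {c d : F}
    (hg : g.1 = planeMat x c d) {z : ℍ[F]} (hz : star z = -z) :
    vectorRep g (consQuat 0 z) = consQuat 0 ((c ^ 2 + d ^ 2) • (x * z * star x)) := by
  have hz' : star ((c ^ 2 + d ^ 2) • (x * z * star x)) = -((c ^ 2 + d ^ 2) • (x * z * star x)) := by
    simp [hz, mul_assoc]
  apply clifford_injective
  rw [clifford_vectorRep, hg, clifford_consQuat_zero hz, clifford_consQuat_zero hz',
    star_planeMat, planeMat_mul_planeMat, planeMat_mul_planeMat, planeMat_smul]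
  congr 1 <;> ring

end PlaneMatrices

section Poles

variable {F : Type*} [Field F] [NeZero (2 : F)] {K : Subgroup (unitary (QMat F))}

/-- The elements of `K` which act on the plane of the first two coordinate axes by a rotation. -/
def lineGroup (K : Subgroup (unitary (QMat F))) : Subgroup (unitary (QMat F)) where
  carrier := {g | g ∈ K ∧ ∃ x c d, g.1 = planeMat x c d}
  one_mem' := ⟨one_mem _, 1, 1, 0, planeMat_one_one_zero.symm⟩
  mul_mem' := by
    rintro g h ⟨hg, x, c, d, hgx⟩ ⟨hh, x', c', d', hhx⟩
    refine ⟨mul_mem hg hh, _, _, _, Eq.trans ?_ (planeMat_mul_planeMat x x' c d c' d')⟩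
    rw [← hgx, ← hhx]
    rfl
  inv_mem' := by
    rintro g ⟨hg, x, c, d, hgx⟩
    exact ⟨inv_mem hg, _, _, _, by rw [← star_planeMat, ← hgx]; rfl⟩

/-- The vectors of length `1` or `2` orthogonal to the first two coordinate axes. If `2` is not a
square, every anisotropic line orthogonal to these axes contains exactly two of them, like the two
points in which the axis of a rotation meets the sphere. -/
abbrev Poles (F : Type*) [Field F] : Type _ :=
  {v : Fin 5 → F // (v 0 = 0 ∧ v 1 = 0) ∧ (v ⬝ᵥ v = 1 ∨ v ⬝ᵥ v = 2)}

omit [NeZero (2 : F)] in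
theorem Poles.ext {v w : Poles F} (h : quatPart v.1 = quatPart w.1) : v = w :=
  Subtype.ext (by
    rw [← consQuat_quatPart v.1, ← consQuat_quatPart w.1, v.2.1.1, w.2.1.1, h])

omit [NeZero (2 : F)] in
theorem star_quatPart {v : Fin 5 → F} (h : v 1 = 0) : star (quatPart v) = -quatPart v := by
  simp [quatPart, h, star_quat, neg_quat]

theorem vectorRep_eq_of_eq_planeMat {g : unitary (QMat F)} {x : ℍ[F]} {c d : F}
    (hg : g.1 = planeMat x c d) {v : Fin 5 → F} (h0 : v 0 = 0) (h1 : v 1 = 0) :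
    vectorRep g v = consQuat 0 ((c ^ 2 + d ^ 2) • (x * quatPart v * star x)) := by
  rw [← vectorRep_consQuat_zero_of_eq_planeMat hg (star_quatPart h1), ← h0, consQuat_quatPart]

theorem vectorRep_apply_eq_zero_of_mem_lineGroup {g : unitary (QMat F)} (hg : g ∈ lineGroup K)
    {v : Fin 5 → F} (h : v 0 = 0 ∧ v 1 = 0) : vectorRep g v 0 = 0 ∧ vectorRep g v 1 = 0 := by
  obtain ⟨-, x, c, d, hgx⟩ := hg
  rw [vectorRep_eq_of_eq_planeMat hgx h.1 h.2]
  refine ⟨rfl, ?_⟩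
  have hre : (quatPart v).re = 0 := h.2
  simp only [consQuat, Matrix.cons_val_one, Matrix.cons_val_zero, Quaternion.re_smul, smul_eq_mul]
  refine mul_eq_zero_of_right _ ?_
  simp [hre]
  ring

instance : MulAction (lineGroup K) (Poles F) where
  smul g v := ⟨vectorRep g.1 v.1, vectorRep_apply_eq_zero_of_mem_lineGroup g.2 v.2.1, by
    rw [dotProduct_vectorRep]
    exact v.2.2⟩
  one_smul v := Subtype.ext (by
    change vectorRep 1 v.1 = v.1
    rw [map_one, Module.End.one_apply])
  mul_smul g h v := Subtype.ext (by
    change vectorRep (g.1 * h.1) v.1 = vectorRep g.1 (vectorRep h.1 v.1)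
    rw [map_mul, Module.End.mul_apply])

theorem Poles.coe_smul (g : lineGroup K) (v : Poles F) : (g • v).1 = vectorRep g.1 v.1 := rfl

theorem Poles.smul_eq_self_iff {g : lineGroup K} {x : ℍ[F]} {c d : F}
    (hg : g.1.1 = planeMat x c d) (v : Poles F) :
    g • v = v ↔ x * quatPart v.1 = quatPart v.1 * x := by
  have hn := sq_add_sq_mul_normSq_of_planeMat_mem_unitary (hg ▸ g.1.2)
  have hgv : quatPart (g • v).1 = (c ^ 2 + d ^ 2) • (x * quatPart v.1 * star x) := by
    rw [Poles.coe_smul, vectorRep_eq_of_eq_planeMat hg v.2.1.1 v.2.1.2, quatPart_consQuat]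
  constructor
  · intro h
    rw [h] at hgv
    conv_rhs => rw [hgv]
    rw [smul_mul_assoc, mul_assoc, star_mul_eq_normSq_smul_one, mul_smul_comm, smul_smul, hn,
      one_smul, mul_one]
  · intro h
    apply Poles.ext
    rw [hgv, h, mul_assoc, mul_star_eq_normSq_smul_one, mul_smul_comm, smul_smul, hn, one_smul,
      mul_one]

theorem mul_eq_mul_iff_exists_eq_smul_im {x z : ℍ[F]} (hx : x.im ≠ 0) (hz : z.re = 0) :
    x * z = z * x ↔ ∃ t : F, z = t • x.im := by
  constructor
  · intro h
    have h2 := NeZero.ne (2 : F)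
    have hI := congrArg QuaternionAlgebra.imI h
    have hJ := congrArg QuaternionAlgebra.imJ h
    have hK := congrArg QuaternionAlgebra.imK h
    simp only [Quaternion.imI_mul, Quaternion.imJ_mul, Quaternion.imK_mul, hz] at hI hJ hK
    replace hI : x.imJ * z.imK = x.imK * z.imJ := mul_left_cancel₀ h2 (by linear_combination hI)
    replace hJ : x.imK * z.imI = x.imI * z.imK := mul_left_cancel₀ h2 (by linear_combination hJ)
    replace hK : x.imI * z.imJ = x.imJ * z.imI := mul_left_cancel₀ h2 (by linear_combination hK)
    obtain hx | hx | hx : x.imI ≠ 0 ∨ x.imJ ≠ 0 ∨ x.imK ≠ 0 := by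
      by_contra! h0
      exact hx (by ext <;> simp [h0])
    · refine ⟨z.imI / x.imI, ?_⟩
      ext <;> simp [hz] <;> field_simp <;> grind
    · refine ⟨z.imJ / x.imJ, ?_⟩
      ext <;> simp [hz] <;> field_simp <;> grind
    · refine ⟨z.imK / x.imK, ?_⟩
      ext <;> simp [hz] <;> field_simp <;> grind
  · rintro ⟨t, rfl⟩
    rw [mul_smul_comm, smul_mul_assoc]
    congr 1
    ext <;> simp <;> ring

theorem exists_sq_mul_eq_one_or_eq_two [Finite F] (h2 : ¬IsSquare (2 : F)) {a : F} (ha : a ≠ 0) :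
    ∃ t : F, t ^ 2 * a = 1 ∨ t ^ 2 * a = 2 := by
  classical
  have := Fintype.ofFinite F
  have h20 := NeZero.ne (2 : F)
  by_cases hs : IsSquare a
  · obtain ⟨r, rfl⟩ := hs
    exact ⟨r⁻¹, Or.inl (by field_simp [left_ne_zero_of_mul ha])⟩
  · obtain ⟨r, hr⟩ : IsSquare (a * 2) := by
      rw [← quadraticChar_one_iff_isSquare (mul_ne_zero ha h20), map_mul,
        quadraticChar_neg_one_iff_not_isSquare.2 hs, quadraticChar_neg_one_iff_not_isSquare.2 h2]
      rfl
    have hr0 : r ≠ 0 := left_ne_zero_of_mul (hr ▸ mul_ne_zero ha h20)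
    refine ⟨2 * r⁻¹, Or.inr ?_⟩
    field_simp
    linear_combination hr

theorem sq_eq_sq_of_sq_mul_eq_one_or_eq_two (h2 : ¬IsSquare (2 : F)) {s t a : F}
    (hs : s ^ 2 * a = 1 ∨ s ^ 2 * a = 2) (ht : t ^ 2 * a = 1 ∨ t ^ 2 * a = 2) :
    s ^ 2 = t ^ 2 := by
  have h20 := NeZero.ne (2 : F)
  have ha : a ≠ 0 := by
    rintro rfl
    rcases hs with h | h <;> simp [h20.symm] at h
  have hs0 : s ≠ 0 := by
    rintro rfl
    rcases hs with h | h <;> simp [h20.symm] at h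
  have ht0 : t ≠ 0 := by
    rintro rfl
    rcases ht with h | h <;> simp [h20.symm] at h
  apply mul_right_cancel₀ ha
  rcases hs with hs | hs <;> rcases ht with ht | ht <;> rw [hs, ht]
  · refine absurd ⟨t / s, ?_⟩ h2
    field_simp
    exact mul_right_cancel₀ ha (by linear_combination 2 * hs - ht)
  · refine absurd ⟨s / t, ?_⟩ h2
    field_simp
    exact mul_right_cancel₀ ha (by linear_combination 2 * ht - hs)

theorem card_sq_mul_eq_one_or_eq_two [Finite F] (h2 : ¬IsSquare (2 : F)) {a : F} (ha : a ≠ 0) :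
    Nat.card {t : F // t ^ 2 * a = 1 ∨ t ^ 2 * a = 2} = 2 := by
  obtain ⟨t, ht⟩ := exists_sq_mul_eq_one_or_eq_two h2 ha
  have hset : {t : F | t ^ 2 * a = 1 ∨ t ^ 2 * a = 2} = {t, -t} := by
    ext s
    constructor
    · exact fun hs => sq_eq_sq_iff_eq_or_eq_neg.1 (sq_eq_sq_of_sq_mul_eq_one_or_eq_two h2 hs ht)
    · rintro (rfl | rfl)
      · exact ht
      · simpa using ht
  change Set.ncard {t : F | t ^ 2 * a = 1 ∨ t ^ 2 * a = 2} = 2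
  rw [hset, Set.ncard_pair]
  intro h
  have ht0 : 2 * t = 0 := by linear_combination h
  obtain rfl : t = 0 := (mul_eq_zero.1 ht0).resolve_left (NeZero.ne (2 : F))
  rcases ht with h | h <;> simp [(NeZero.ne (2 : F)).symm] at h

theorem Poles.card_fixedBy [Finite F] (h2 : ¬IsSquare (2 : F)) {g : lineGroup K} {x : ℍ[F]}
    {c d : F} (hg : g.1.1 = planeMat x c d) (hx : Quaternion.normSq x.im ≠ 0) :
    Nat.card (MulAction.fixedBy (Poles F) g) = 2 := by
  have him : x.im ≠ 0 := by
    intro h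
    simp [h] at hx
  have hdot (v : Poles F) : v.1 ⬝ᵥ v.1 = Quaternion.normSq (quatPart v.1) := by
    rw [← consQuat_quatPart v.1, v.2.1.1, dotProduct_consQuat_self, quatPart_consQuat]
    ring
  let axisPole (t : {t : F // t ^ 2 * Quaternion.normSq x.im = 1 ∨
      t ^ 2 * Quaternion.normSq x.im = 2}) : Poles F :=
    ⟨consQuat 0 (t.1 • x.im), ⟨rfl, by simp [consQuat]⟩, by
      rw [dotProduct_consQuat_self, Quaternion.normSq_smul]
      simpa using t.2⟩
  have hmem (t) : g • axisPole t = axisPole t := by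
    exact (Poles.smul_eq_self_iff hg _).2
      ((mul_eq_mul_iff_exists_eq_smul_im him (axisPole t).2.1.2).2 ⟨t.1, rfl⟩)
  refine (Nat.card_congr (Equiv.ofBijective (fun t => ⟨axisPole t, hmem t⟩) ⟨?_, ?_⟩)).symm.trans
    (card_sq_mul_eq_one_or_eq_two h2 hx)
  · intro s t hst
    have h := congrArg quatPart (congrArg Subtype.val (congrArg Subtype.val hst))
    exact Subtype.ext (smul_left_injective F him h)
  · rintro ⟨v, hv⟩
    obtain ⟨t, ht⟩ := (mul_eq_mul_iff_exists_eq_smul_im him v.2.1.2).1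
      ((Poles.smul_eq_self_iff hg v).1 hv)
    have htv := v.2.2
    rw [hdot, ht, Quaternion.normSq_smul] at htv
    exact ⟨⟨t, htv⟩, Subtype.ext (Poles.ext ht.symm)⟩

end Poles

section PlaneUnipotents

theorem exists_natCast_eq {F : Type*} [Field F] [Finite F] (hp : (Nat.card F).Prime) (t : F) :
    ∃ n : ℕ, (n : F) = t := by
  have := Fintype.ofFinite F
  have := Fact.mk hp
  have hcard : Fintype.card F = Nat.card F := Nat.card_eq_fintype_card.symm
  have : CharP F (Nat.card F) := charP_of_card_eq_prime hcard
  obtain ⟨z, rfl⟩ := (ZMod.castHom_bijective F hcard).2 t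
  exact ⟨z.val, by rw [← map_natCast (ZMod.castHom dvd_rfl F), ZMod.natCast_zmod_val]⟩

variable {F : Type*} [Field F] [NeZero (2 : F)] [Finite F]

theorem planeMat_one_pow_card_sq (hp : (Nat.card F).Prime) (c d : F) :
    planeMat (1 : ℍ[F]) c d ^ Nat.card F ^ 2 = planeMat 1 c d := by
  have := Fintype.ofFinite F
  have := Fact.mk hp
  have : CharP F (Nat.card F) := charP_of_card_eq_prime Nat.card_eq_fintype_card.symm
  have : CharP (QMat F) (Nat.card F) :=
    charP_of_injective_algebraMap (algebraMap F (QMat F)).injective _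
  have hpow (x : F) : x ^ Nat.card F ^ 2 = x := by
    rw [Nat.card_eq_fintype_card]
    exact FiniteField.pow_card_pow 2 x
  have hsplit : planeMat (1 : ℍ[F]) c d = c • 1 + d • planeMat 1 0 1 := by
    rw [← planeMat_one_one_zero]
    ext i j <;> fin_cases i <;> fin_cases j <;> simp [planeMat]
  have hJ : (planeMat (1 : ℍ[F]) 0 1) ^ Nat.card F ^ 2 = planeMat 1 0 1 := by
    have h4 : (planeMat (1 : ℍ[F]) 0 1) ^ 4 = 1 := by
      rw [show 4 = 2 * 2 by norm_num, pow_mul, pow_two (planeMat _ _ _), planeMat_mul_planeMat,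
        pow_two, planeMat_mul_planeMat, ← planeMat_one_one_zero]
      simp
    obtain ⟨k, hk⟩ := odd_natCard_of_neZero_two (F := F)
    rw [hk, show (2 * k + 1) ^ 2 = 4 * (k ^ 2 + k) + 1 by ring, pow_add, pow_mul, h4, one_pow,
      one_mul, pow_one]
  have hcomm : Commute (c • (1 : QMat F)) (d • planeMat 1 0 1) :=
    ((Commute.one_left _).smul_left _).smul_right _
  rw [hsplit, add_pow_char_pow_of_commute (Nat.card F) 2 hcomm, smul_pow, smul_pow, one_pow, hJ,
    hpow, hpow]

variable {K : Subgroup (unitary (QMat F))}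

-- The power by `|F| ^ 2` kills the factor `1 + β` of `x (c + d J) = (1 + β) (c' + d' J)` and fixes
-- the other one.
theorem diag_mem_matrices_of_planeMat_mem (hp : (Nat.card F).Prime) {β : ℍ[F]} (hβ : β * β = 0)
    {c d : F} (h : planeMat (1 + β) c d ∈ matrices K) : diag (1 + β) (1 + β) ∈ matrices K := by
  have hX : planeMat (1 + β) c d = diag (1 + β) (1 + β) * planeMat 1 c d := by
    rw [← planeMat_one_zero, planeMat_mul_planeMat]
    simp
  have hcomm : Commute (diag (1 + β) (1 + β)) (planeMat 1 c d) := by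
    rw [Commute, SemiconjBy, ← planeMat_one_zero, planeMat_mul_planeMat, planeMat_mul_planeMat]
    simp
  have hpow : (diag (1 + β) (1 + β)) ^ Nat.card F ^ 2 = 1 := by
    have := Fintype.ofFinite F
    change diagHom (1 + β) ^ Nat.card F ^ 2 = 1
    rw [← map_pow, one_add_pow_of_mul_self_eq_zero hβ, ← Nat.cast_smul_eq_nsmul F,
      Nat.card_eq_fintype_card, Nat.cast_pow, FiniteField.cast_card_eq_zero]
    simp
  have hplane : planeMat 1 c d ∈ matrices K := by
    have := pow_mem h (Nat.card F ^ 2)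
    rwa [hX, hcomm.mul_pow, hpow, one_mul, planeMat_one_pow_card_sq hp] at this
  have := mul_mem h (star_mem_matrices hplane)
  rwa [hX, mul_assoc, Unitary.mul_star_self_of_mem (matrices_le_unitary hplane),
    mul_one] at this

theorem eq_top_of_planeMat_of_normSq_im_eq_zero (hK : frameGroup F ≤ K)
    (hp : (Nat.card F).Prime) (h3 : (3 : F) ≠ 0) {x : ℍ[F]} {c d : F}
    (h : planeMat x c d ∈ matrices K) (h0 : x.im ≠ 0) (hx : Quaternion.normSq x.im = 0) :
    K = ⊤ := by
  have hn := sq_add_sq_mul_normSq_of_planeMat_mem_unitary (matrices_le_unitary h)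
  have hre : x.re ≠ 0 := by
    intro hre
    have him : x.im = x := by
      ext <;> simp [hre]
    rw [him] at hx
    simp [hx] at hn
  have hxβ : x = x.re • (1 + x.re⁻¹ • x.im) := by
    ext <;> simp [hre]
  have hβ : (x.re⁻¹ • x.im) * (x.re⁻¹ • x.im) = 0 := by
    have him : star x.im = -x.im := by ext <;> simp
    have hmul := mul_star_eq_normSq_smul_one x.im
    rw [him, hx, zero_smul, mul_neg, neg_eq_zero] at hmul
    exact smul_mul_smul_self_eq_zero hmul _
  rw [hxβ, planeMat_smul] at h
  exact eq_top_of_diag_unipotent hK (exists_natCast_eq hp) h3 (smul_ne_zero (inv_ne_zero hre) h0) hβ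
    (diag_mem_matrices_of_planeMat_mem hp hβ h)

end PlaneUnipotents

section RootVectors

theorem dotProduct_self_eq_one_of_clifford_mem_unitary {R : Type*} [CommRing R] {v : Fin 5 → R}
    (h : clifford v ∈ unitary (QMat R)) : v ⬝ᵥ v = 1 := by
  have hmul := Unitary.mul_star_self_of_mem h
  rw [star_clifford, clifford_mul_self] at hmul
  simpa using congrArg QuaternionAlgebra.re (congr_fun (congr_fun hmul 0) 0)

variable {F : Type*} [Field F] [NeZero (2 : F)] {K : Subgroup (unitary (QMat F))}

theorem clifford_vectorRep_mem_matrices {g : unitary (QMat F)} (hg : g ∈ K) {v : Fin 5 → F}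
    (h : clifford v ∈ matrices K) : clifford (vectorRep g v) ∈ matrices K := by
  have hmem := coe_mem_matrices.2 hg
  rw [clifford_vectorRep]
  exact mul_mem (mul_mem hmem h) (star_mem_matrices hmem)

theorem vectorRep_of_eq_clifford {g : unitary (QMat F)} {v : Fin 5 → F} (hg : g.1 = clifford v)
    (w : Fin 5 → F) : vectorRep g w = (2 * (v ⬝ᵥ w)) • v - w := by
  have hv := Unitary.mul_star_self_of_mem (hg ▸ g.2)
  rw [star_clifford] at hv
  apply clifford_injective
  rw [clifford_vectorRep, hg, star_clifford, eq_sub_of_add_eq (clifford_mul_add_swap v w), sub_mul,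
    mul_assoc, hv, map_sub, map_smul, smul_mul_assoc, one_mul, mul_one]

theorem exists_clifford_mem_matrices_perm (hK : frameGroup F ≤ K) {σ : Equiv.Perm (Fin 5)}
    (hσ : Equiv.Perm.sign σ = 1) {v : Fin 5 → F} (h : clifford v ∈ matrices K) :
    ∃ w : Fin 5 → F, clifford w ∈ matrices K ∧ ∃ s : Fin 5 → ℤˣ, ∀ i, w (σ i) = s i • v i := by
  obtain ⟨g, hg, s, hs⟩ := exists_mem_frameGroup_signPerm (F := F) hσ
  exact ⟨vectorRep g v, clifford_vectorRep_mem_matrices (hK hg) h, s, hs.vectorRep_apply v⟩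

theorem exists_sign_eq_one_apply_eq_zero_and_one {i j : Fin 5} (h : i ≠ j) :
    ∃ σ : Equiv.Perm (Fin 5), Equiv.Perm.sign σ = 1 ∧ σ i = 0 ∧ σ j = 1 := by
  obtain ⟨τ, h0, h1⟩ : ∃ τ : Equiv.Perm (Fin 5), τ i = 0 ∧ τ j = 1 := by
    refine ⟨Equiv.swap 1 (Equiv.swap 0 i j) * Equiv.swap 0 i, ?_, ?_⟩
    · rw [Equiv.Perm.mul_apply, Equiv.swap_apply_right]
      refine Equiv.swap_apply_of_ne_of_ne (by decide) fun h' => h ?_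
      exact (Equiv.swap 0 i).injective ((Equiv.swap_apply_right 0 i).trans h')
    · rw [Equiv.Perm.mul_apply, Equiv.swap_apply_right]
  rcases Int.units_eq_one_or (Equiv.Perm.sign τ) with hs | hs
  · exact ⟨τ, hs, h0, h1⟩
  · refine ⟨Equiv.swap 2 3 * τ, ?_, ?_, ?_⟩
    · rw [map_mul, hs, Equiv.Perm.sign_swap (by decide), Int.units_mul_self]
    · rw [Equiv.Perm.mul_apply, h0]
      decide
    · rw [Equiv.Perm.mul_apply, h1]
      decide

theorem exists_eq_units_smul_single {ι R : Type*} [Fintype ι] [DecidableEq ι] [CommRing R]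
    [IsDomain R] {u : ι → R} (h : ∀ i j, i ≠ j → u i * u j = 0) (hu : u ⬝ᵥ u = 1) :
    ∃ (k : ι) (s : ℤˣ), u = s • Pi.single k 1 := by
  obtain ⟨k, hk⟩ : ∃ k, u k ≠ 0 := by
    by_contra! h0
    simp [funext h0] at hu
  have hsingle : u = Pi.single k (u k) := by
    funext i
    obtain rfl | hi := eq_or_ne i k
    · rw [Pi.single_eq_same]
    · rw [(mul_eq_zero.1 (h i k hi)).resolve_right hk, Pi.single_eq_of_ne hi]
  have hsq : u k * u k = 1 := by
    rwa [hsingle, single_dotProduct, Pi.single_eq_same] at hu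
  rcases mul_self_eq_one_iff.1 hsq with h1 | h1
  · exact ⟨k, 1, by rw [one_smul, ← h1, ← hsingle]⟩
  · exact ⟨k, -1, by rw [Units.neg_smul, one_smul, ← Pi.single_neg, ← h1, ← hsingle]⟩

theorem mem_frameGroup_of_vectorRep_single {g : unitary (QMat F)}
    (h : ∀ i, ∃ (k : Fin 5) (s : ℤˣ), vectorRep g (Pi.single i 1) = s • Pi.single k 1) :
    g ∈ frameGroup F := by
  choose k s hs using h
  have hk : Function.Injective k := by
    intro i j hij
    by_contra hne
    have hdot := dotProduct_vectorRep g (Pi.single i 1) (Pi.single j 1)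
    rw [hs, hs, hij, smul_dotProduct, dotProduct_smul, single_dotProduct, single_dotProduct,
      Pi.single_eq_same, Pi.single_eq_of_ne hne, mul_zero, mul_one, smul_eq_zero_iff_eq,
      smul_eq_zero_iff_eq] at hdot
    exact one_ne_zero hdot
  refine ⟨Equiv.ofBijective k (Finite.injective_iff_bijective.1 hk), s, fun i => ?_⟩
  calc g.1 * gamma i = g.1 * gamma i * (star g.1 * g.1) := by
        rw [Unitary.star_mul_self_of_mem g.2, mul_one]
    _ = clifford (vectorRep g (Pi.single i 1)) * g.1 := by
        rw [clifford_vectorRep, ← mul_assoc]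
        rfl
    _ = s i • (gamma (k i) * g.1) := by
        rw [hs, Units.smul_def, map_zsmul, smul_mul_assoc]
        rfl

end RootVectors

section AxisPoles

variable {F : Type*} [Field F]

theorem Poles.ext_coord {v w : Poles F} (i : Fin 3) (h₀ : v.1 i.succ.succ = w.1 i.succ.succ)
    (h₁ : v.1 (i + 1).succ.succ = w.1 (i + 1).succ.succ)
    (h₂ : v.1 (i + 2).succ.succ = w.1 (i + 2).succ.succ) : v = w := by
  refine Subtype.ext (funext fun j => ?_)
  refine Fin.cases (v.2.1.1.trans w.2.1.1.symm) (Fin.cases (v.2.1.2.trans w.2.1.2.symm) ?_) j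
  intro j
  obtain rfl | rfl | rfl : j = i ∨ j = i + 1 ∨ j = i + 2 := by
    clear * -
    decide +revert
  exacts [h₀, h₁, h₂]

/-- The six poles on the last three coordinate axes, indexed by the axis and the sign. -/
def axisPole (a : Fin 3 × ℤˣ) : Poles F :=
  ⟨a.2 • Pi.single a.1.succ.succ 1, ⟨by
    rw [Pi.smul_apply, Pi.single_eq_of_ne (Fin.succ_ne_zero _).symm, smul_zero], by
    rw [Pi.smul_apply, Pi.single_eq_of_ne (i := a.1.succ.succ) (i' := 1)
      ((Fin.succ_injective _).ne (Fin.succ_ne_zero a.1).symm), smul_zero]⟩, Or.inl <| by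
    rw [smul_dotProduct, dotProduct_smul, smul_smul, Int.units_mul_self, one_smul,
      single_dotProduct, Pi.single_eq_same, mul_one]⟩

theorem axisPole_apply (a : Fin 3 × ℤˣ) (i : Fin 3) :
    (axisPole a : Poles F).1 i.succ.succ = if i = a.1 then a.2 • 1 else 0 := by
  simp [axisPole, Pi.single_apply]

variable [NeZero (2 : F)]

theorem units_smul_left_injective {x : F} (hx : x ≠ 0) :
    Function.Injective fun s : ℤˣ => s • x := by
  intro s t hst
  rcases Int.units_eq_one_or s with rfl | rfl <;> rcases Int.units_eq_one_or t with rfl | rfl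
  · rfl
  · exact absurd (eq_zero_of_neg_eq_self (F := F) (by simpa using hst.symm)) hx
  · exact absurd (eq_zero_of_neg_eq_self (F := F) (by simpa using hst)) hx
  · rfl

theorem axisPole_injective : Function.Injective (axisPole : _ → Poles F) := by
  rintro ⟨k, s⟩ ⟨l, t⟩ h
  have hkl := congrArg (fun v => v.1 k.succ.succ) h
  simp only [axisPole_apply, if_true] at hkl
  split_ifs at hkl with hk
  · exact Prod.ext hk (units_smul_left_injective one_ne_zero hkl)
  · exact absurd ((smul_eq_zero_iff_eq s).1 hkl) one_ne_zero

variable {K : Subgroup (unitary (QMat F))}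

omit [NeZero (2 : F)] in
theorem half_one_add_gamma_mul_gamma_mul_eq_planeMat (i : Fin 3) :
    ((2⁻¹ : F) • ((1 + gamma 0 * gamma 1) *
      (1 + gamma (i + 1).succ.succ * gamma (i + 2).succ.succ)) : QMat F) =
      planeMat (1 - imUnit i) 2⁻¹ 2⁻¹ := by
  rw [gamma_succ_succ_mul_gamma_succ_succ, gamma_zero_mul_gamma_one]
  ext j k : 1
  fin_cases j <;> fin_cases k <;> simp [planeMat, diag, sub_eq_add_neg, Matrix.mul_apply]

theorem exists_quarter_turn (hK : frameGroup F ≤ K) (i : Fin 3) :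
    ∃ g : lineGroup K, ∀ v : Poles F,
      (g • v).1 i.succ.succ = v.1 i.succ.succ ∧
      (g • v).1 (i + 1).succ.succ = v.1 (i + 2).succ.succ ∧
      (g • v).1 (i + 2).succ.succ = -v.1 (i + 1).succ.succ := by
  have h01 : (0 : Fin 5) ≠ 1 := by decide
  have hne : (i + 1).succ.succ ≠ (i + 2).succ.succ := by decide +revert
  have hmem := half_one_add_gamma_mul_gamma_mul_mem_matrices hK h01 hne
  have hsign := ((signPerm_one_add_gamma_mul_gamma (R := F) h01).mul
    (signPerm_one_add_gamma_mul_gamma hne)).smul (2⁻¹ : F)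
  let g : unitary (QMat F) := ⟨_, matrices_le_unitary hmem⟩
  refine ⟨⟨g, coe_mem_matrices.1 hmem, _, _, _,
    half_one_add_gamma_mul_gamma_mul_eq_planeMat i⟩, fun v => ?_⟩
  have h := SignPerm.vectorRep_apply (g := g) hsign v.1
  have hperm : ∀ i : Fin 3,
      let σ : Equiv.Perm (Fin 5) := Equiv.swap 0 1 * Equiv.swap (i + 1).succ.succ (i + 2).succ.succ
      σ i.succ.succ = i.succ.succ ∧ σ (i + 1).succ.succ = (i + 2).succ.succ ∧
        σ (i + 2).succ.succ = (i + 1).succ.succ := by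
    decide
  have h₀ := h i.succ.succ
  have h₁ := h (i + 1).succ.succ
  have h₂ := h (i + 2).succ.succ
  rw [(hperm i).1] at h₀
  rw [(hperm i).2.1] at h₁
  rw [(hperm i).2.2] at h₂
  refine ⟨h₀.trans ?_, h₂.trans ?_, h₁.trans ?_⟩ <;> fin_cases i <;>
    simp [Equiv.swap_apply_def]

variable {G α : Type*} [Group G] [MulAction G α]

theorem orbit_range_toPermHom (x : α) :
    MulAction.orbit (MulAction.toPermHom G α).range x = MulAction.orbit G x := by
  ext y
  constructor
  · rintro ⟨⟨_, g, rfl⟩, rfl⟩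
    exact ⟨g, rfl⟩
  · rintro ⟨g, rfl⟩
    exact ⟨⟨_, g, rfl⟩, rfl⟩

theorem eq_of_quarter_turn_invariant {β : Type*} {f : Fin 3 × ℤˣ → β}
    (h : ∀ i s, f (i + 2, s) = f (i + 1, s) ∧ f (i + 1, s) = f (i + 2, -s))
    (a b : Fin 3 × ℤˣ) : f a = f b := by
  have haxis (i : Fin 3) (s : ℤˣ) : f (i, s) = f (0, s) := by
    fin_cases i
    exacts [rfl, (h 2 s).1, (h 1 s).1.symm]
  have hsign (s t : ℤˣ) : f (0, s) = f (0, t) := by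
    rcases eq_or_ne t s with rfl | hne
    · rfl
    · rw [← haxis 1, ← haxis 2 t, Int.units_ne_iff_eq_neg.1 hne]
      exact (h 0 s).2
  obtain ⟨i, s⟩ := a
  obtain ⟨j, t⟩ := b
  rw [haxis, haxis j, hsign]

theorem orbit_axisPole_eq (hK : frameGroup F ≤ K) (a b : Fin 3 × ℤˣ) :
    MulAction.orbit (lineGroup K) (axisPole a : Poles F) =
      MulAction.orbit (lineGroup K) (axisPole b) := by
  refine eq_of_quarter_turn_invariant (f := fun a => MulAction.orbit (lineGroup K) (axisPole a))
    (fun i s => ?_) a b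
  obtain ⟨g, hg⟩ := exists_quarter_turn hK i
  constructor <;> rw [MulAction.orbit_eq_iff, MulAction.mem_orbit_symm] <;> refine ⟨g, ?_⟩ <;>
    obtain ⟨h₀, h₁, h₂⟩ := hg (axisPole (_, s)) <;>
    refine Poles.ext_coord i (h₀.trans ?_) (h₁.trans ?_) (h₂.trans ?_) <;>
    rw [axisPole_apply, axisPole_apply] <;> fin_cases i <;> simp

variable (K) in
/-- The permutation group of the poles induced by `lineGroup K`. -/
abbrev poleGroup : Subgroup (Equiv.Perm (Poles F)) :=
  (MulAction.toPermHom (lineGroup K) (Poles F)).range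

theorem four_dvd_card_stabilizer_axisPole [Finite F] (hK : frameGroup F ≤ K) (s : ℤˣ) :
    4 ∣ Nat.card (MulAction.stabilizer (poleGroup K) (axisPole (0, s) : Poles F)) := by
  obtain ⟨g, hg⟩ := exists_quarter_turn hK 0
  let τ : MulAction.stabilizer (poleGroup K) (axisPole (0, s) : Poles F) :=
    ⟨⟨_, g, rfl⟩, by
      obtain ⟨h₀, h₁, h₂⟩ := hg (axisPole (0, s))
      refine Poles.ext_coord 0 (h₀.trans ?_) (h₁.trans ?_) (h₂.trans ?_) <;>
        simp only [axisPole_apply] <;> simp⟩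
  have hτ (v : Poles F) : τ • v = g • v := rfl
  have hsq (v : Poles F) :
      (g • g • v).1 (0 + 1 : Fin 3).succ.succ = -v.1 (0 + 1 : Fin 3).succ.succ := by
    rw [(hg _).2.1, (hg _).2.2]
  have horder : orderOf τ = 2 ^ (1 + 1) := by
    apply orderOf_eq_prime_pow
    · intro h
      rw [pow_one] at h
      have h1 := hsq (axisPole (1, 1))
      rw [← hτ, ← hτ, smul_smul, ← pow_two, h, one_smul, axisPole_apply] at h1
      exact one_ne_zero (eq_zero_of_neg_eq_self (F := F) (by simpa using h1.symm))
    · apply Subtype.ext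
      apply Subtype.ext
      refine Equiv.ext fun v => ?_
      change g • g • g • g • v = v
      refine Poles.ext_coord 0 ?_ ?_ ?_
      · simp only [(hg _).1]
      · rw [hsq, hsq, neg_neg]
      · rw [(hg _).2.2, (hg _).2.1, (hg _).2.2, (hg _).2.1, neg_neg]
  simpa [horder] using orderOf_dvd_natCard τ

variable [Finite F] (hK : frameGroup F ≤ K) (hp : (Nat.card F).Prime) (h2 : ¬IsSquare (2 : F))
  (h3 : (3 : F) ≠ 0) (htop : K ≠ ⊤)

include hK hp h2 h3 htop

theorem card_fixedBy_poleGroup {σ : poleGroup K} (hσ : σ ≠ 1) :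
    Nat.card (MulAction.fixedBy (Poles F) σ) = 2 := by
  obtain ⟨_, g, rfl⟩ := σ
  obtain ⟨hgK, x, c, d, hx⟩ := g.2
  have h0 : x.im ≠ 0 := by
    intro h0
    refine hσ (Subtype.ext (Equiv.ext fun v => ?_))
    change g • v = v
    rw [Poles.smul_eq_self_iff hx, ← Quaternion.re_add_im x, h0, add_zero]
    exact Quaternion.coe_commutes _ _
  refine Poles.card_fixedBy h2 hx fun hN =>
    htop (eq_top_of_planeMat_of_normSq_im_eq_zero hK hp h3 (c := c) (d := d) ?_ h0 hN)
  exact hx ▸ coe_mem_matrices.2 hgK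

theorem orbit_axisPole_eq_range (a : Fin 3 × ℤˣ) :
    MulAction.orbit (lineGroup K) (axisPole a : Poles F) = Set.range axisPole := by
  have hsub : Set.range axisPole ⊆ MulAction.orbit (lineGroup K) (axisPole a : Poles F) := by
    rintro _ ⟨b, rfl⟩
    exact orbit_axisPole_eq hK b a ▸ MulAction.mem_orbit_self _
  have hcard : (Set.range (axisPole (F := F))).ncard = 6 := by
    rw [← Nat.card_coe_set_eq, Nat.card_range_of_injective axisPole_injective]
    simp
  have hfin := Set.toFinite (MulAction.orbit (lineGroup K) (axisPole a : Poles F))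
  have h6 := card_orbit_eq_six (fun σ => card_fixedBy_poleGroup (σ := σ) hK hp h2 h3 htop)
    (x := axisPole (0, 1)) (by
      rw [orbit_range_toPermHom, orbit_axisPole_eq hK (0, 1) a, Nat.card_coe_set_eq]
      exact le_trans (by rw [hcard]; decide) (Set.ncard_le_ncard hsub hfin))
    (four_dvd_card_stabilizer_axisPole hK 1)
  rw [orbit_range_toPermHom, orbit_axisPole_eq hK (0, 1) a, Nat.card_coe_set_eq] at h6
  exact (Set.eq_of_subset_of_ncard_le hsub (by rw [h6, hcard]) hfin).symm

theorem exists_axisPole_eq_smul (g : lineGroup K) (a : Fin 3 × ℤˣ) :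
    ∃ b, axisPole b = g • (axisPole a : Poles F) :=
  (orbit_axisPole_eq_range hK hp h2 h3 htop a).subset (MulAction.mem_orbit _ g)

end AxisPoles

section RootVectorsWithZeros

variable {F : Type*} [Field F] [Finite F] (hp : (Nat.card F).Prime)

include hp in
theorem eq_zero_or_sq_eq_one (h3 : (3 : F) = 0) (x : F) : x = 0 ∨ x ^ 2 = 1 := by
  obtain ⟨n, rfl⟩ := exists_natCast_eq hp x
  have h : (n : F) = ((n % 3 : ℕ) : F) := by
    conv_lhs => rw [← Nat.mod_add_div n 3]
    push_cast
    rw [h3, zero_mul, add_zero]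
  rw [h]
  have hlt := Nat.mod_lt n (show 3 > 0 by decide)
  interval_cases n % 3
  · left; simp
  · right; simp
  · right; push_cast; linear_combination h3

variable [NeZero (2 : F)]

include hp in
theorem mul_eq_zero_of_three_eq_zero (h3 : (3 : F) = 0) {u : Fin 3 → F} (hu : u ⬝ᵥ u = 1)
    {i j : Fin 3} (h : i ≠ j) : u i * u j = 0 := by
  obtain ⟨k, hk⟩ : ∃ k, u i ^ 2 + u j ^ 2 + u k ^ 2 = 1 := by
    refine ⟨-(i + j), ?_⟩
    rw [← hu, dotProduct, Fin.sum_univ_three]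
    have h1 : (-1 : Fin 3) = 2 := rfl
    have h2 : (-2 : Fin 3) = 1 := rfl
    fin_cases i <;> fin_cases j <;> first | exact absurd rfl h | (simp [h1, h2]; ring)
  by_contra hij
  obtain ⟨hi, hj⟩ := mul_ne_zero_iff.1 hij
  rw [(eq_zero_or_sq_eq_one hp h3 (u i)).resolve_left hi,
    (eq_zero_or_sq_eq_one hp h3 (u j)).resolve_left hj] at hk
  rcases eq_zero_or_sq_eq_one hp h3 (u k) with h0 | h1
  · exact one_ne_zero (show (1 : F) = 0 by linear_combination hk - u k * h0)
  · exact NeZero.ne (2 : F) (by linear_combination hk - h1)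

variable {K : Subgroup (unitary (QMat F))} (hK : frameGroup F ≤ K) (h2 : ¬IsSquare (2 : F))
  (htop : K ≠ ⊤)

include hp hK h2 htop

-- The reflection in a root `v` permutes the six axis poles, and sends the pole on the `i`-th axis
-- to `2 vᵢ v - eᵢ`, which lies on the same axis as `2 vᵢ ^ 2 = 1` is impossible.
theorem mul_eq_zero_of_three_ne_zero (h3 : (3 : F) ≠ 0) {v : Fin 5 → F}
    (hv : clifford v ∈ matrices K) (h0 : v 0 = 0) (h1 : v 1 = 0) {i j : Fin 3} (h : i ≠ j) :
    v i.succ.succ * v j.succ.succ = 0 := by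
  obtain ⟨g, hg, hgv⟩ := hv
  have hgv : g.1 = clifford v := hgv
  have hplane : g.1 = planeMat (quatPart v) 0 1 := by
    rw [hgv, ← clifford_consQuat_zero (star_quatPart h1), ← h0, consQuat_quatPart]
  obtain ⟨⟨k, t⟩, hk⟩ :=
    exists_axisPole_eq_smul hK hp h2 h3 htop ⟨g, hg, _, _, _, hplane⟩ (i, 1)
  have hcoord (m : Fin 3) : (if m = k then t • (1 : F) else 0) =
      2 * v i.succ.succ * v m.succ.succ - if m = i then 1 else 0 := by
    rw [← axisPole_apply (k, t), hk, Poles.coe_smul, vectorRep_of_eq_clifford hgv]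
    simp [axisPole, Pi.single_apply]
  obtain rfl : k = i := by
    by_contra hne
    have hi := hcoord i
    rw [if_neg (Ne.symm hne), if_pos rfl] at hi
    exact h2 ⟨2 * v i.succ.succ, by linear_combination 2 * hi⟩
  have hj := hcoord j
  rw [if_neg h.symm, if_neg h.symm, sub_zero, mul_assoc, eq_comm] at hj
  exact (mul_eq_zero.1 hj).resolve_left (NeZero.ne 2)

theorem mul_eq_zero_of_apply_zero_of_apply_one {v : Fin 5 → F} (hv : clifford v ∈ matrices K)
    (h0 : v 0 = 0) (h1 : v 1 = 0) {i j : Fin 5} (h : i ≠ j) : v i * v j = 0 := by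
  have htail {i j : Fin 3} (h : i ≠ j) : v i.succ.succ * v j.succ.succ = 0 := by
    by_cases h3 : (3 : F) = 0
    · refine mul_eq_zero_of_three_eq_zero hp h3 (u := fun i => v i.succ.succ) ?_ h
      rw [← dotProduct_self_eq_one_of_clifford_mem_unitary (matrices_le_unitary hv)]
      simp [dotProduct, Fin.sum_univ_succ, h0, h1]
    · exact mul_eq_zero_of_three_ne_zero hp hK h2 htop h3 hv h0 h1 h
  induction i using Fin.cases with
  | zero => rw [h0, zero_mul]
  | succ i =>
    induction j using Fin.cases with
    | zero => rw [h0, mul_zero]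
    | succ j =>
      induction i using Fin.cases with
      | zero => exact mul_eq_zero_of_left h1 _
      | succ i =>
        induction j using Fin.cases with
        | zero => exact mul_eq_zero_of_right _ h1
        | succ j => exact htail (fun h' => h (by rw [h']))

theorem mul_eq_zero_of_two_zeros {v : Fin 5 → F} (hv : clifford v ∈ matrices K) {k l : Fin 5}
    (hkl : k ≠ l) (h0 : v k = 0) (h1 : v l = 0) {i j : Fin 5} (hij : i ≠ j) : v i * v j = 0 := by
  obtain ⟨σ, hσ, hk, hl⟩ := exists_sign_eq_one_apply_eq_zero_and_one hkl
  obtain ⟨w, hw, s, hs⟩ := exists_clifford_mem_matrices_perm hK hσ hv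
  have h := mul_eq_zero_of_apply_zero_of_apply_one hp hK h2 htop hw
    (by rw [← hk, hs, h0, smul_zero]) (by rw [← hl, hs, h1, smul_zero]) (σ.injective.ne hij)
  rwa [hs, hs, smul_mul_smul_comm, smul_eq_zero_iff_eq] at h

theorem exists_eq_single_of_two_zeros {v : Fin 5 → F} (hv : clifford v ∈ matrices K)
    {k l : Fin 5} (hkl : k ≠ l) (h0 : v k = 0) (h1 : v l = 0) :
    ∃ (m : Fin 5) (s : ℤˣ), v = s • Pi.single m 1 :=
  exists_eq_units_smul_single
    (fun _ _ hij => mul_eq_zero_of_two_zeros hp hK h2 htop hv hkl h0 h1 hij)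
    (dotProduct_self_eq_one_of_clifford_mem_unitary (matrices_le_unitary hv))

end RootVectorsWithZeros

section RootVectorsHaveAZero

-- The two alternatives are the parities of the order of `a * b`.
theorem exists_pow_mul_eq_or_exists_commute {M : Type*} [Monoid M] {a b : M} (ha : a * a = 1)
    (hb : b * b = 1) (hfin : IsOfFinOrder (a * b)) :
    (∃ m : ℕ, (a * b) ^ m * a = b * (a * b) ^ m) ∨
      ∃ m : ℕ, (a * b) ^ m ≠ 1 ∧ (a * b) ^ m * (a * b) ^ m = 1 ∧ Commute ((a * b) ^ m) a ∧
        Commute ((a * b) ^ m) b := by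
  have hab : a * b * (b * a) = 1 := by rw [mul_assoc, ← mul_assoc b, hb, one_mul, ha]
  have hba : b * a * (a * b) = 1 := by rw [mul_assoc, ← mul_assoc a, ha, one_mul, hb]
  have hinv (m : ℕ) : (b * a) ^ m * (a * b) ^ m = 1 := by
    rw [← (show Commute (b * a) (a * b) from hba.trans hab.symm).mul_pow, hba, one_pow]
  have hconj_a (m : ℕ) : a * (a * b) ^ m = (b * a) ^ m * a :=
    (show SemiconjBy a (a * b) (b * a) by
      rw [SemiconjBy, ← mul_assoc, ha, one_mul, mul_assoc, ha, mul_one]).pow_right m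
  have hconj_b (m : ℕ) : b * (a * b) ^ m = (b * a) ^ m * b :=
    (show SemiconjBy b (a * b) (b * a) from (mul_assoc _ _ _).symm).pow_right m
  have hone := pow_orderOf_eq_one (a * b)
  have hpos := hfin.orderOf_pos
  rcases Nat.even_or_odd' (orderOf (a * b)) with ⟨m, hm | hm⟩
  · right
    have hsq : (a * b) ^ m * (a * b) ^ m = 1 := by rw [← pow_add, ← two_mul, ← hm, hone]
    have hswap : (b * a) ^ m = (a * b) ^ m := left_inv_eq_right_inv (hinv m) hsq
    refine ⟨m, pow_ne_one_of_lt_orderOf (by lia) (by lia), hsq, ?_, ?_⟩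
    · rw [commute_iff_eq, hconj_a, hswap]
    · rw [commute_iff_eq, hconj_b, hswap]
  · left
    have hone' : (a * b) ^ m * (a * b) ^ (m + 1) = 1 := by
      rw [← pow_add, ← add_assoc, ← two_mul, ← hm, hone]
    refine ⟨m, ?_⟩
    rw [hconj_b, left_inv_eq_right_inv (hinv m) hone', pow_succ, mul_assoc, mul_assoc a, hb,
      mul_one]

theorem eq_one_of_apply_zero_of_apply_one : ∀ σ : Equiv.Perm (Fin 5), σ 0 = 0 → σ 1 = 1 →
    Equiv.Perm.sign σ = 1 → σ * σ = 1 → σ = 1 := by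
  decide +kernel

theorem apply_single_of_forall_apply {ι R : Type*} [DecidableEq ι] [CommRing R]
    {f : Module.End R (ι → R)} {s : ι → ℤˣ} (hf : ∀ v i, f v i = s i • v i) (i : ι) :
    f (Pi.single i 1) = s i • Pi.single i 1 := by
  funext k
  rw [hf, Pi.smul_apply]
  obtain rfl | hk := eq_or_ne k i
  · rfl
  · rw [Pi.single_eq_of_ne hk, smul_zero, smul_zero]

variable {F : Type*} [Field F] [NeZero (2 : F)]

theorem apply_single_eq_zero_of_commute {ι : Type*} [DecidableEq ι] {f g : Module.End F (ι → F)}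
    {s : ι → ℤˣ} (hf : ∀ v i, f v i = s i • v i) (h : Commute g f) {i j : ι} (hij : s i ≠ s j) :
    g (Pi.single i 1) j = 0 := by
  by_contra hne
  have hcomm := congr_fun (LinearMap.congr_fun h.eq (Pi.single i 1)) j
  rw [Module.End.mul_apply, Module.End.mul_apply, apply_single_of_forall_apply hf, hf,
    Units.smul_def, map_zsmul] at hcomm
  exact hij (units_smul_left_injective hne hcomm)

theorem eq_smul_of_vectorRep_eq_self {g : unitary (QMat F)} {v x : Fin 5 → F}
    (hg : g.1 = clifford v) (h : vectorRep g x = x) : x = (v ⬝ᵥ x) • v := by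
  rw [vectorRep_of_eq_clifford hg] at h
  refine smul_right_injective _ (NeZero.ne (2 : F)) ?_
  linear_combination (norm := module) -h

section SignPermWithEigenvector

variable {z : unitary (QMat F)} {σ : Equiv.Perm (Fin 5)} {s : Fin 5 → ℤˣ}
  (hz : SignPerm z.1 σ s)

include hz

theorem SignPerm.perm_mul_self (h : vectorRep z * vectorRep z = 1) : σ * σ = 1 := by
  ext1 i
  by_contra hne
  have happ := congr_fun (LinearMap.congr_fun h (Pi.single i 1)) (σ (σ i))
  rw [Module.End.mul_apply, hz.vectorRep_apply, hz.vectorRep_apply, Pi.single_eq_same,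
    Module.End.one_apply, Pi.single_eq_of_ne (show σ (σ i) ≠ i from hne), smul_eq_zero_iff_eq,
    smul_eq_zero_iff_eq] at happ
  exact one_ne_zero happ

variable (h2 : ¬IsSquare (2 : F)) {v : Fin 5 → F} (hv : ∀ i, v i ≠ 0)

include h2 hv

theorem SignPerm.eigenvalue_eq_one (hvv : v ⬝ᵥ v = 1) {c : F} (h : vectorRep z v = c • v) :
    c = 1 := by
  have hsq : c ^ 2 = 1 := by
    have hdot := dotProduct_vectorRep z v v
    rwa [h, smul_dotProduct, dotProduct_smul, hvv, smul_eq_mul, smul_eq_mul, mul_one, ← sq] at hdot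
  have hprod : c ^ 5 * ∏ i, v i = 1 * ∏ i, v i := by
    calc c ^ 5 * ∏ i, v i = ∏ i, vectorRep z v (σ i) := by
          rw [Equiv.prod_comp σ, h]
          simp [Finset.prod_mul_distrib]
      _ = ∏ i, s i • v i := by simp only [hz.vectorRep_apply]
      _ = 1 * ∏ i, v i := by
          rw [Finset.prod_smul, (hz.sign_perm z.2 h2).2, one_smul, one_mul]
  have h5 := mul_right_cancel₀ (Finset.prod_ne_zero_iff.2 fun i _ => hv i) hprod
  linear_combination h5 - (c ^ 3 + c) * hsq

-- The projections of `v` and `![-v 1, v 0, 0, 0, 0]` span the plane of the first two axes, so `z`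
-- is the identity there and cannot swap these axes.
theorem SignPerm.vectorRep_eq_one (hfix : vectorRep z v = v)
    (hperp : vectorRep z ![-v 1, v 0, 0, 0, 0] = ![-v 1, v 0, 0, 0, 0])
    (hzz : vectorRep z * vectorRep z = 1) (h0 : σ 0 = 0 ∨ σ 0 = 1) (h1 : σ 1 = 0 ∨ σ 1 = 1) :
    vectorRep z = 1 := by
  have hv' (i : Fin 5) : v (σ i) = s i • v i := by rw [← hz.vectorRep_apply, hfix]
  rcases h0 with h0 | h0
  · have h1 : σ 1 = 1 := h1.resolve_left fun h => absurd (σ.injective (h.trans h0.symm)) (by decide)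
    obtain rfl := eq_one_of_apply_zero_of_apply_one σ h0 h1 (hz.sign_perm z.2 h2).1
      (hz.perm_mul_self hzz)
    refine LinearMap.ext fun w => funext fun i => ?_
    have hs : s i = 1 := units_smul_left_injective (hv i) ((hv' i).symm.trans (one_smul _ _).symm)
    rw [← Equiv.Perm.one_apply i, hz.vectorRep_apply, hs, one_smul]
    rfl
  · have h1 := hz.vectorRep_apply ![-v 1, v 0, 0, 0, 0] 0
    rw [hperp, h0] at h1
    have h1 : v 0 = s 0 • -v 1 := h1
    have hv1 := hv' 0
    rw [h0] at hv1
    rw [smul_neg, hv1, smul_smul, Int.units_mul_self, one_smul] at h1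
    exact absurd (eq_zero_of_neg_eq_self (F := F) h1.symm) (hv 0)

end SignPermWithEigenvector

theorem vectorRep_mul_ne_of_fixes_two_axes {a b c : unitary (QMat F)} {v : Fin 5 → F}
    (hb : b.1 = clifford v) (hvv : v ⬝ᵥ v = 1) {i j : Fin 5} (hij : i ≠ j)
    (hi : vectorRep a (Pi.single i 1) = Pi.single i 1)
    (hj : vectorRep a (Pi.single j 1) = Pi.single j 1) :
    vectorRep c * vectorRep a ≠ vectorRep b * vectorRep c := by
  intro h
  have hmem {k : Fin 5} (hk : vectorRep a (Pi.single k 1) = Pi.single k 1) :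
      ∃ t : F, vectorRep c (Pi.single k 1) = t • v :=
    ⟨_, eq_smul_of_vectorRep_eq_self hb <| by
      simpa only [Module.End.mul_apply, hk] using (LinearMap.congr_fun h (Pi.single k 1)).symm⟩
  obtain ⟨p, hp⟩ := hmem hi
  obtain ⟨q, hq⟩ := hmem hj
  have hdot (k l : Fin 5) := dotProduct_vectorRep c (Pi.single k 1) (Pi.single l 1)
  have hpp := hdot i i
  have hqq := hdot j j
  have hpq := hdot i j
  rw [hp, smul_dotProduct, dotProduct_smul, hvv, single_dotProduct, Pi.single_eq_same] at hpp
  rw [hq, smul_dotProduct, dotProduct_smul, hvv, single_dotProduct, Pi.single_eq_same] at hqq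
  rw [hp, hq, smul_dotProduct, dotProduct_smul, hvv, single_dotProduct,
    Pi.single_eq_of_ne hij] at hpq
  simp only [smul_eq_mul, mul_one, mul_zero] at hpp hqq hpq
  exact one_ne_zero (show (1 : F) = 0 by linear_combination p * q * hpq - hpp * q * q - hqq)

/-- The signs of the half turn in the plane of the first two axes. -/
def halfTurnSign : Fin 5 → ℤˣ := ![-1, -1, 1, 1, 1]

theorem exists_commute_half_turn_of_clifford [Finite F] {a b : unitary (QMat F)} {v : Fin 5 → F}
    (ha : ∀ w i, vectorRep a w i = halfTurnSign i • w i) (hb : b.1 = clifford v)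
    (hvv : v ⬝ᵥ v = 1) :
    ∃ m : ℕ, vectorRep ((a * b) ^ m) ≠ 1 ∧
      vectorRep ((a * b) ^ m) * vectorRep ((a * b) ^ m) = 1 ∧
      Commute (vectorRep ((a * b) ^ m)) (vectorRep a) ∧
      Commute (vectorRep ((a * b) ^ m)) (vectorRep b) := by
  have haa : vectorRep a * vectorRep a = 1 := LinearMap.ext fun w => funext fun i => by
    rw [Module.End.mul_apply, ha, ha, smul_smul, Int.units_mul_self, one_smul]
    rfl
  have hbb : vectorRep b * vectorRep b = 1 := by
    rw [← map_mul, ← map_one vectorRep]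
    congr 1
    exact Subtype.ext (by simp [hb, clifford_mul_self, hvv])
  have : Finite (QMat F) := inferInstance
  have hfin : IsOfFinOrder (vectorRep a * vectorRep b) := by
    rw [← map_mul]
    exact vectorRep.isOfFinOrder (isOfFinOrder_of_finite (a * b))
  simp only [map_pow, map_mul]
  refine (exists_pow_mul_eq_or_exists_commute haa hbb hfin).resolve_left ?_
  rintro ⟨m, hm⟩
  rw [← map_mul, ← map_pow] at hm
  exact vectorRep_mul_ne_of_fixes_two_axes hb hvv (i := 2) (j := 3) (by decide)
    ((apply_single_of_forall_apply ha 2).trans (one_smul _ _))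
    ((apply_single_of_forall_apply ha 3).trans (one_smul _ _)) hm

variable {K : Subgroup (unitary (QMat F))} (hK : frameGroup F ≤ K)

include hK in
theorem exists_half_turn : ∃ a ∈ K, ∀ w i, vectorRep a w i = halfTurnSign i • w i := by
  obtain ⟨a, ha, hgamma⟩ := mul_mem (gamma_mem_matrices hK 0) (gamma_mem_matrices hK 1)
  have hgamma : a.1 = gamma 0 * gamma 1 := hgamma
  have hs := (signPerm_gamma (R := F) 0).mul (signPerm_gamma 1)
  rw [← hgamma] at hs
  refine ⟨a, ha, fun w i => (hs.vectorRep_apply w i).trans ?_⟩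
  congr 1
  decide +revert

variable [Finite F] (hp : (Nat.card F).Prime) (h2 : ¬IsSquare (2 : F)) (htop : K ≠ ⊤)

include hK hp h2 htop

theorem mem_frameGroup_of_commute_half_turn {a z : unitary (QMat F)} (hz : z ∈ K)
    (ha : ∀ w i, vectorRep a w i = halfTurnSign i • w i)
    (h : Commute (vectorRep z) (vectorRep a)) : z ∈ frameGroup F := by
  refine mem_frameGroup_of_vectorRep_single fun i => ?_
  obtain ⟨k, l, hkl, hk, hl⟩ : ∃ k l : Fin 5, k ≠ l ∧ halfTurnSign i ≠ halfTurnSign k ∧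
      halfTurnSign i ≠ halfTurnSign l := by
    decide +revert
  exact exists_eq_single_of_two_zeros hp hK h2 htop
    (clifford_vectorRep_mem_matrices hz (gamma_mem_matrices hK i)) hkl
    (apply_single_eq_zero_of_commute ha h hk) (apply_single_eq_zero_of_commute ha h hl)

-- The reflection `b` in `v` and the half turn `a` have fixed spaces of different dimensions, so the
-- dihedral group they generate contains a central involution `z`. As `z` commutes with `a`, it lies
-- in the frame group, and if no coordinate of `v` vanishes this leaves only `z = 1`.
theorem exists_apply_eq_zero {v : Fin 5 → F} (hv : clifford v ∈ matrices K) : ∃ i, v i = 0 := by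
  by_contra! hne
  have hvv := dotProduct_self_eq_one_of_clifford_mem_unitary (matrices_le_unitary hv)
  obtain ⟨a, haK, ha⟩ := exists_half_turn hK
  obtain ⟨b, hbK, hbv⟩ := hv
  have hbv : b.1 = clifford v := hbv
  have hb := vectorRep_of_eq_clifford hbv
  obtain ⟨m, hm, hzz, hza, hzb⟩ := exists_commute_half_turn_of_clifford ha hbv hvv
  have hperp : vectorRep ((a * b) ^ m) ![-v 1, v 0, 0, 0, 0] = ![-v 1, v 0, 0, 0, 0] := by
    rw [map_pow, map_mul, Module.End.pow_apply]
    refine Function.iterate_fixed ?_ m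
    have hdot : v ⬝ᵥ ![-v 1, v 0, 0, 0, 0] = 0 := by
      simp [dotProduct, Fin.sum_univ_five, mul_comm]
    funext i
    rw [Module.End.mul_apply, ha, hb, hdot]
    fin_cases i <;> simp [halfTurnSign]
  have hbfix : vectorRep b v = v := by
    rw [hb, hvv]
    module
  have hzv : vectorRep ((a * b) ^ m) v = (v ⬝ᵥ vectorRep ((a * b) ^ m) v) • v :=
    eq_smul_of_vectorRep_eq_self hbv <| by
      rw [← Module.End.mul_apply, ← hzb.eq, Module.End.mul_apply, hbfix]
  obtain ⟨σ, s, hs⟩ := mem_frameGroup_of_commute_half_turn hK hp h2 htop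
    (pow_mem (mul_mem haK hbK) m) ha hza
  rw [hs.eigenvalue_eq_one h2 hne hvv hzv, one_smul] at hzv
  have hσ (i : Fin 5) : halfTurnSign i = halfTurnSign (σ i) := by
    by_contra h
    have h0 := apply_single_eq_zero_of_commute ha hza h
    rw [hs.vectorRep_apply, Pi.single_eq_same, smul_eq_zero_iff_eq] at h0
    exact one_ne_zero h0
  have hmem : ∀ i : Fin 5, halfTurnSign i = -1 → i = 0 ∨ i = 1 := by decide
  exact hm (hs.vectorRep_eq_one h2 hne hzv hperp hzz (hmem _ (hσ 0).symm) (hmem _ (hσ 1).symm))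

end RootVectorsHaveAZero

section RootVectorsAreAxes

variable {F : Type*} [Field F] [NeZero (2 : F)] {K : Subgroup (unitary (QMat F))}
  (hK : frameGroup F ≤ K)

section SignChanges

include hK

theorem clifford_update_neg_mem_matrices {v : Fin 5 → F} (h : clifford v ∈ matrices K)
    (j : Fin 5) : clifford (Function.update v j (-v j)) ∈ matrices K := by
  obtain ⟨g, hg, hgamma⟩ := gamma_mem_matrices hK j
  have hs : SignPerm g.1 1 fun i => if i = j then 1 else -1 := by
    rw [show g.1 = gamma j from hgamma]
    exact signPerm_gamma j
  have hmem := neg_mem_matrices hK (clifford_vectorRep_mem_matrices hg h)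
  rw [← map_neg] at hmem
  convert hmem using 2
  funext i
  rw [Pi.neg_apply, ← Equiv.Perm.one_apply i, hs.vectorRep_apply, Equiv.Perm.one_apply]
  obtain rfl | hi := eq_or_ne i j
  · rw [Function.update_self, if_pos rfl, one_smul]
  · rw [Function.update_of_ne hi, if_neg hi, Units.neg_smul, one_smul, neg_neg]

theorem clifford_mem_matrices_of_sq_eq {v w : Fin 5 → F} (h : clifford v ∈ matrices K)
    (hw : ∀ i, v i ^ 2 = w i ^ 2) : clifford w ∈ matrices K := by
  have hpiecewise (S : Finset (Fin 5)) : clifford (S.piecewise w v) ∈ matrices K := by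
    induction S using Finset.induction_on with
    | empty => rwa [Finset.piecewise_empty]
    | insert j S hj ih =>
      rw [Finset.piecewise_insert]
      have hvj : S.piecewise w v j = v j := Finset.piecewise_eq_of_notMem _ _ _ hj
      rcases sq_eq_sq_iff_eq_or_eq_neg.1 (hw j) with h | h
      · rwa [← h, ← hvj, Function.update_eq_self]
      · have hneg := clifford_update_neg_mem_matrices hK ih j
        rwa [hvj, h, neg_neg] at hneg
  simpa only [Finset.piecewise_univ] using hpiecewise Finset.univ

theorem clifford_mem_matrices_of_perm_sq_eq {σ : Equiv.Perm (Fin 5)}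
    (hσ : Equiv.Perm.sign σ = 1) {v w : Fin 5 → F} (h : clifford v ∈ matrices K)
    (hw : ∀ i, w (σ i) ^ 2 = v i ^ 2) : clifford w ∈ matrices K := by
  obtain ⟨u, hu, s, hs⟩ := exists_clifford_mem_matrices_perm hK hσ h
  refine clifford_mem_matrices_of_sq_eq hK hu fun i => ?_
  obtain ⟨j, rfl⟩ := σ.surjective i
  rw [hw, hs, smul_pow, Int.units_sq, one_smul]

end SignChanges

section HalfVectors

/-- The vector with a zero in position `k` and `1 / 2` elsewhere. Together with the axes, such
vectors are, up to signs, the only candidates for root vectors of a proper overgroup of the frame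
group. -/
def halfVec (F : Type*) [Field F] (k : Fin 5) : Fin 5 → F := fun i => if i = k then 0 else 2⁻¹

theorem clifford_mul_gamma_one {R : Type*} [CommRing R] {v : Fin 5 → R} (h0 : v 0 = 0) :
    clifford v * gamma 1 = diag (quatPart v) (star (quatPart v)) := by
  rw [← consQuat_quatPart v, h0, clifford_consQuat, gamma_one, quatPart_consQuat]
  simp [diag]

theorem quatPart_halfVec_mul_star :
    quatPart (halfVec F 0) * star (quatPart (halfVec F 0)) = 1 := by
  have h4 := four_ne_zero_of_neZero_two F
  have hfour : (4⁻¹ + 4⁻¹ + 4⁻¹ + 4⁻¹ : F) = 1 := by field_simp; norm_num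
  rw [mul_star_eq_normSq_smul_one, Quaternion.normSq_def']
  simp [quatPart, halfVec, inv_pow, show (2 : F) ^ 2 = 4 by norm_num, hfour]

include hK

omit [NeZero (2 : F)] in
theorem diag_quatPart_mem_matrices {v : Fin 5 → F} (h : clifford v ∈ matrices K) (h0 : v 0 = 0) :
    diag (quatPart v) (star (quatPart v)) ∈ matrices K := by
  rw [← clifford_mul_gamma_one h0]
  exact mul_mem h (gamma_mem_matrices hK 1)

theorem diag_star_quatPart_halfVec_mem_matrices :
    diag (star (quatPart (halfVec F 0))) (star (quatPart (halfVec F 0))) ∈ matrices K := by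
  have h := half_one_add_gamma_mul_gamma_mul_mem_matrices hK (i := (1 + 1 : Fin 3).succ.succ)
    (j := (1 + 2 : Fin 3).succ.succ) (k := (0 + 1 : Fin 3).succ.succ)
    (l := (0 + 2 : Fin 3).succ.succ) (by decide) (by decide)
  have hhalf : (2⁻¹ : F) • ((1 + -imUnit 1) * (1 + -imUnit 0)) = star (quatPart (halfVec F 0)) := by
    ext <;> simp [imUnit, quatPart, halfVec]
  rwa [gamma_succ_succ_mul_gamma_succ_succ, gamma_succ_succ_mul_gamma_succ_succ, ← diag_one_one,
    diag_add_diag, diag_add_diag, diag_mul_diag, smul_diag, hhalf] at h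

theorem three_eq_zero_of_clifford_halfVec_mem_matrices [Finite F] (hp : (Nat.card F).Prime)
    (h2 : ¬IsSquare (2 : F)) (htop : K ≠ ⊤) (h : clifford (halfVec F 0) ∈ matrices K) :
    (3 : F) = 0 := by
  have h20 := NeZero.ne (2 : F)
  have h40 := four_ne_zero_of_neZero_two F
  have h1 : clifford (halfVec F 1) ∈ matrices K := by
    obtain ⟨σ, hσ, -, hσ0⟩ := exists_sign_eq_one_apply_eq_zero_and_one
      (show (1 : Fin 5) ≠ 0 by decide)
    refine clifford_mem_matrices_of_perm_sq_eq hK hσ h fun i => ?_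
    have hi : σ i = 1 ↔ i = 0 := by rw [← hσ0, σ.injective.eq_iff]
    simp only [halfVec, hi]
  obtain ⟨g, hg, hgv⟩ := h
  obtain ⟨i, hi⟩ := exists_apply_eq_zero hK hp h2 htop (clifford_vectorRep_mem_matrices hg h1)
  have hdot : halfVec F 0 ⬝ᵥ halfVec F 1 = 3 / 4 := by
    simp [halfVec, dotProduct, Fin.sum_univ_five]
    field_simp
    norm_num
  rw [vectorRep_of_eq_clifford hgv, hdot] at hi
  by_contra h3
  fin_cases i
  · simp [halfVec, h20] at hi
  · simp [halfVec, h20, h40, h3] at hi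
  all_goals
    simp [halfVec] at hi
    field_simp at hi
    exact h20 (by linear_combination hi)

-- In characteristic 3 the unit `y = (1 - i - j - k) / 2` satisfies `y² = y - 1`, hence
-- `(y² - 1)² = 0`.
theorem eq_top_of_clifford_halfVec_mem_matrices [Finite F] (hF : ∀ t : F, ∃ n : ℕ, (n : F) = t)
    (h3 : (3 : F) = 0) (h : clifford (halfVec F 0) ∈ matrices K) : K = ⊤ := by
  have h2 := NeZero.ne (2 : F)
  set y : ℍ[F] := star (quatPart (halfVec F 0)) with hy
  have hmul := mul_mem (diag_quatPart_mem_matrices hK h rfl)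
    (diag_star_quatPart_halfVec_mem_matrices hK)
  rw [diag_mul_diag, quatPart_halfVec_mul_star, ← hy] at hmul
  have hsq : y * y = y - 1 := by
    ext <;> simp [hy, quatPart, halfVec] <;> field_simp <;> norm_num
  have h3' : (3 : ℍ[F]) = 0 := by
    rw [← map_ofNat (algebraMap F ℍ[F]) 3, h3, map_zero]
  refine eq_top_of_corner_unipotent hK hF (β := y * y - 1) (fun hβ => ?_) ?_
    (by rwa [add_sub_cancel])
  · have himI := congrArg QuaternionAlgebra.imI (hsq ▸ hβ)
    simp [hy, quatPart, halfVec, h2] at himI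
  · calc (y * y - 1) * (y * y - 1) = 3 * (1 - y) := by
          rw [hsq]
          simp only [mul_sub, sub_mul, hsq]
          noncomm_ring
      _ = 0 := by rw [h3', zero_mul]

end HalfVectors

section UnitQuaternions

variable {v : Fin 5 → F}

theorem dotProduct_self_of_apply_zero {R : Type*} [CommRing R] {v : Fin 5 → R} (h0 : v 0 = 0)
    (i : Fin 3) : v ⬝ᵥ v = v 1 ^ 2 + v i.succ.succ ^ 2 + v (i + 1).succ.succ ^ 2 +
      v (i + 2).succ.succ ^ 2 := by
  rw [dotProduct, Fin.sum_univ_five, h0]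
  fin_cases i <;> simp <;> ring

theorem consQuat_star_mul_imUnit_mul_apply {R : Type*} [CommRing R] (v : Fin 5 → R) (i : Fin 3) :
    consQuat 0 (star (quatPart v) * imUnit i * quatPart v) i.succ.succ =
      v 1 ^ 2 + v i.succ.succ ^ 2 - v (i + 1).succ.succ ^ 2 - v (i + 2).succ.succ ^ 2 := by
  fin_cases i <;> simp [consQuat, quatPart, imUnit] <;> ring

theorem quatPart_units_smul {R : Type*} [CommRing R] (s : ℤˣ) (v : Fin 5 → R) :
    quatPart (s • v) = s • quatPart v := by
  rcases Int.units_eq_one_or s with rfl | rfl <;> ext <;> simp [quatPart]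

theorem apply_eq_zero_of_imUnit_mul_eq (i : Fin 3) {s : ℤˣ}
    (h : imUnit i * quatPart v = s • (quatPart v * imUnit i)) :
    v 1 = 0 ∨ v (i + 1).succ.succ = 0 := by
  rcases Int.units_eq_one_or s with rfl | rfl
  · refine Or.inr (eq_zero_of_neg_eq_self (F := F) ?_)
    fin_cases i
    · simpa [imUnit, quatPart] using congrArg (·.imK) h.symm
    · simpa [imUnit, quatPart] using congrArg (·.imI) h.symm
    · simpa [imUnit, quatPart] using congrArg (·.imJ) h.symm
  · refine Or.inl (eq_zero_of_neg_eq_self (F := F) ?_)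
    fin_cases i
    · simpa [imUnit, quatPart] using congrArg (·.imI) h.symm
    · simpa [imUnit, quatPart] using congrArg (·.imJ) h.symm
    · simpa [imUnit, quatPart] using congrArg (·.imK) h.symm

theorem re_star_mul_imUnit_mul {R : Type*} [CommRing R] (x : ℍ[R]) (i : Fin 3) :
    (star x * imUnit i * x).re = 0 := by
  fin_cases i <;> simp [imUnit] <;> ring

theorem quatPart_single_succ_succ {R : Type*} [CommRing R] (i : Fin 3) :
    quatPart (Pi.single i.succ.succ (1 : R)) = imUnit i := by
  fin_cases i <;> rfl

include hK

theorem clifford_consQuat_mem_matrices {y : ℍ[F]} (h : diag 1 y ∈ matrices K) :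
    clifford (consQuat 0 y) ∈ matrices K := by
  obtain ⟨g, hg, hgy⟩ := star_mem_matrices h
  have hgy : g.1 = star (diag 1 y) := hgy
  rw [star_diag, star_one] at hgy
  have hmem := clifford_vectorRep_mem_matrices hg (gamma_mem_matrices hK 1)
  have hone : (Pi.single 1 1 : Fin 5 → F) = consQuat 0 1 := by
    funext i
    fin_cases i <;> simp [consQuat]
  rwa [hone, vectorRep_consQuat_of_eq_diag hgy, one_mul, one_mul, star_star] at hmem

variable [Finite F] (hp : (Nat.card F).Prime) (h2 : ¬IsSquare (2 : F)) (htop : K ≠ ⊤)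

include hp h2 htop

-- Conjugating `diag 1 eᵢ` by the element `diag x (star x)` attached to `v` gives a root vector with
-- two zeros, hence an axis, and it is not the `i`-th one as no coordinate of `x` vanishes.
theorem sq_add_sq_eq_inv_two (h : clifford v ∈ matrices K) (h0 : v 0 = 0)
    (hv : ∀ i, i ≠ 0 → v i ≠ 0) (i : Fin 3) : v 1 ^ 2 + v i.succ.succ ^ 2 = 2⁻¹ := by
  have hvv := dotProduct_self_eq_one_of_clifford_mem_unitary (matrices_le_unitary h)
  have hunit : quatPart v * star (quatPart v) = 1 := by
    rw [mul_star_eq_normSq_smul_one, ← zero_add (Quaternion.normSq _), ← zero_pow two_ne_zero, ← h0,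
      ← dotProduct_consQuat_self, consQuat_quatPart, hvv, one_smul]
  have hdiag := diag_quatPart_mem_matrices hK h h0
  have hconj := mul_mem (mul_mem hdiag (diag_one_imUnit_mem_matrices hK i))
    (star_mem_matrices hdiag)
  rw [star_diag, star_star, diag_mul_diag, diag_mul_diag, mul_one, hunit] at hconj
  obtain ⟨m, s, hm⟩ := exists_eq_single_of_two_zeros hp hK h2 htop
    (clifford_consQuat_mem_matrices hK hconj) (show (0 : Fin 5) ≠ 1 by decide) rfl
    (re_star_mul_imUnit_mul _ i)
  have hzero : consQuat 0 (star (quatPart v) * imUnit i * quatPart v) i.succ.succ = 0 := by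
    rw [hm]
    obtain rfl | hi := eq_or_ne i.succ.succ m
    · have hconj_eq : star (quatPart v) * imUnit i * quatPart v = s • imUnit i := by
        rw [← quatPart_single_succ_succ i, ← quatPart_units_smul, ← hm, quatPart_consQuat,
          quatPart_single_succ_succ]
      have hcomm : imUnit i * quatPart v = s • (quatPart v * imUnit i) := by
        rw [← mul_smul_comm, ← hconj_eq, ← mul_assoc, ← mul_assoc, hunit, one_mul]
      rcases apply_eq_zero_of_imUnit_mul_eq i hcomm with h1 | h1
      · exact absurd h1 (hv 1 one_ne_zero)
      · exact absurd h1 (hv _ (Fin.succ_ne_zero _))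
    · rw [Pi.smul_apply, Pi.single_eq_of_ne hi, smul_zero]
  rw [consQuat_star_mul_imUnit_mul_apply] at hzero
  rw [dotProduct_self_of_apply_zero h0 i] at hvv
  have h20 := NeZero.ne (2 : F)
  field_simp
  linear_combination hvv + hzero

theorem clifford_halfVec_mem_matrices (h : clifford v ∈ matrices K) (h0 : v 0 = 0)
    (hv : ∀ i, i ≠ 0 → v i ≠ 0) : clifford (halfVec F 0) ∈ matrices K := by
  have hinv : (2⁻¹ : F) * 2 = 1 := inv_mul_cancel₀ (NeZero.ne _)
  have hvv := dotProduct_self_eq_one_of_clifford_mem_unitary (matrices_le_unitary h)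
  have hsum := sq_add_sq_eq_inv_two hK hp h2 htop h h0 hv
  rw [dotProduct_self_of_apply_zero h0 0, zero_add, zero_add] at hvv
  have hone : v 1 ^ 2 = 2⁻¹ ^ 2 := by
    linear_combination 2⁻¹ * (hsum 0 + hsum 1 + hsum 2 - hvv) + (2⁻¹ - v 1 ^ 2) * hinv
  refine clifford_mem_matrices_of_sq_eq hK h fun i => ?_
  induction i using Fin.cases with
  | zero => rw [h0, halfVec, if_pos rfl]
  | succ i =>
    rw [halfVec, if_neg i.succ_ne_zero]
    induction i using Fin.cases with
    | zero => exact hone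
    | succ i =>
      linear_combination hsum i - hone - 2⁻¹ * hinv

end UnitQuaternions

variable [Finite F] (hp : (Nat.card F).Prime) (h2 : ¬IsSquare (2 : F))

include hK hp h2

theorem exists_eq_single_of_clifford_mem_matrices (htop : K ≠ ⊤) {v : Fin 5 → F}
    (hv : clifford v ∈ matrices K) : ∃ (m : Fin 5) (s : ℤˣ), v = s • Pi.single m 1 := by
  obtain ⟨k, hk⟩ := exists_apply_eq_zero hK hp h2 htop hv
  by_contra hsingle
  have hne (l : Fin 5) (hl : l ≠ k) : v l ≠ 0 := fun h =>
    hsingle (exists_eq_single_of_two_zeros hp hK h2 htop hv hl h hk)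
  obtain ⟨l, hl⟩ := exists_ne k
  obtain ⟨σ, hσ, hσk, -⟩ := exists_sign_eq_one_apply_eq_zero_and_one hl.symm
  obtain ⟨w, hw, s, hs⟩ := exists_clifford_mem_matrices_perm hK hσ hv
  have hw0 : w 0 = 0 := by rw [← hσk, hs, hk, smul_zero]
  have hwne (i : Fin 5) (hi : i ≠ 0) : w i ≠ 0 := by
    obtain ⟨j, rfl⟩ := σ.surjective i
    rw [hs, ne_eq, smul_eq_zero_iff_eq]
    exact hne j fun hj => hi (hj ▸ hσk)
  have hhalf := clifford_halfVec_mem_matrices hK hp h2 htop hw hw0 hwne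
  exact htop <| eq_top_of_clifford_halfVec_mem_matrices hK (exists_natCast_eq hp)
    (three_eq_zero_of_clifford_halfVec_mem_matrices hK hp h2 htop hhalf) hhalf

theorem le_frameGroup_or_eq_top : K ≤ frameGroup F ∨ K = ⊤ :=
  or_iff_not_imp_right.2 fun htop _ hg => mem_frameGroup_of_vectorRep_single fun i =>
    exists_eq_single_of_clifford_mem_matrices hK hp h2 htop
      (clifford_vectorRep_mem_matrices hg (gamma_mem_matrices hK i))

end RootVectorsAreAxes

section Maximality

variable {F : Type*} [Field F] [NeZero (2 : F)] [Finite F]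

theorem frameGroup_ne_top (h2 : ¬IsSquare (2 : F)) : frameGroup F ≠ ⊤ := by
  intro htop
  have hcard := card_frameGroup h2
  rw [htop, Subgroup.card_top, card_unitary] at hcard
  have hq : 3 ≤ Nat.card F := by
    obtain ⟨k, hk⟩ := odd_natCard_of_neZero_two (F := F)
    have := Finite.one_lt_card (α := F)
    lia
  generalize Nat.card F = q at hcard hq
  have hle : 3 ^ 4 * (3 ^ 2 + 1) * (3 ^ 2 - 1) ^ 2 ≤ q ^ 4 * (q ^ 2 + 1) * (q ^ 2 - 1) ^ 2 := by
    gcongr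
  exact absurd (hle.trans_eq hcard) (by norm_num)

theorem isCoatom_map_frameGroup {G : Type*} [Group G] {π : unitary (QMat F) →* G}
    (hπ : Function.Surjective π) (hker : ∀ g, π g = 1 ↔ g.1 = 1 ∨ g.1 = -1)
    (h2 : ¬IsSquare (2 : F)) (hp : (Nat.card F).Prime) : IsCoatom ((frameGroup F).map π) := by
  have hcomap : ((frameGroup F).map π).comap π = frameGroup F := by
    rw [Subgroup.comap_map_eq, sup_eq_left.2 (ker_le_frameGroup hker)]
  refine ⟨fun htop => frameGroup_ne_top h2 ?_, fun L hL => ?_⟩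
  · rw [← hcomap, htop, Subgroup.comap_top]
  · have hmap := Subgroup.map_comap_eq_self_of_surjective hπ L
    rcases le_frameGroup_or_eq_top (Subgroup.map_le_iff_le_comap.1 hL.le) hp h2 with h | h
    · exact absurd (hmap ▸ Subgroup.map_mono h) hL.not_ge
    · rw [← hmap, h, Subgroup.map_top_of_surjective π hπ]

end Maximality

end PSp4

/-- for `q` an odd prime power and `|F| = q`, the group
`PSp₄(F) = Sp(4, F) ⧸ center` has a maximal subgroup `H` of odd index of shape `2⁴.A₅`
(i.e. admitting a normal subgroup `N` of order `16` of exponent dividing `2` with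
`H ⧸ N ≅ A₅`) iff `q` is prime and `q ≡ ±3 (mod 8)`. -/
theorem psp4_maximal_odd_index_2pow4_A5_iff (q : ℕ) (hq_odd : Odd q) (hq_pp : IsPrimePow q)
    (F : Type) [Field F] [Fintype F] (hF : Fintype.card F = q) :
    (∃ H : Subgroup (Matrix.symplecticGroup (Fin 2) F ⧸
        Subgroup.center (Matrix.symplecticGroup (Fin 2) F)),
        IsCoatom H ∧ Odd H.index ∧
          ∃ N : Subgroup H, ∃ _ : N.Normal, Nat.card N = 16 ∧ (∀ g ∈ N, g * g = 1) ∧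
            Nonempty ((H ⧸ N) ≃* alternatingGroup (Fin 5))) ↔
      Nat.Prime q ∧ (q % 8 = 3 ∨ q % 8 = 5) := by
  have hcard : Nat.card F = q := by rw [Nat.card_eq_fintype_card, hF]
  subst hcard
  have : NeZero (2 : F) := ⟨Ring.two_ne_zero fun h => by
    have heven := FiniteField.even_card_iff_char_two.1 h
    rw [← Nat.card_eq_fintype_card] at heven
    exact Nat.not_even_iff_odd.2 hq_odd (Nat.even_iff.2 heven)⟩
  obtain ⟨π, hπ, hker⟩ := PSp4.exists_surjective_unitary_to_psp4 (F := F)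
  constructor
  · rintro ⟨H, hH, hodd, N, _, hN, hN2, hA⟩
    exact PSp4.card_prime_and_mod_eight_of_isCoatom hπ hker hH hodd hN hN2 hA
  · rintro ⟨hp, hmod⟩
    have h2 : ¬IsSquare (2 : F) := by
      rw [FiniteField.isSquare_two_iff, ← Nat.card_eq_fintype_card]
      tauto
    refine ⟨(PSp4.frameGroup F).map π, PSp4.isCoatom_map_frameGroup hπ hker h2 hp, ?_,
      PSp4.exists_normal_card_sixteen_map_frameGroup hker h2⟩
    rw [Subgroup.index_map, sup_eq_left.2 (PSp4.ker_le_frameGroup hker),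
      MonoidHom.range_eq_top.2 hπ, Subgroup.index_top, mul_one]
    exact (PSp4.odd_index_iff (PSp4.card_frameGroup h2)).2 hmod
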